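/- arXiv:1511.09056 — 2 statements merged into one kernel-verified Lean document; each statement's English description precedes it below -/
import Mathlib

section
/- Let f be a multicritical circle map with irrational rotation number and return times q_n. There exists a constant C_3 > 1 depending only on f such that for all n ≥ 0 and all x ∈ S^1, C_3^{−1}|x − f^{−q_n}(x)| ≤ |f^{q_n}(x) − x| ≤ C_3|x − f^{−q_n}(x)|, where |u − v| denotes the length of the arc between u and v not containing any other of the three points x, f^{q_n}(x), f^{−q_n}(x). -/
open Set Filter MeasureTheory

noncomputable section

/-- The Schwarzian derivative `Sf = (f''/f')' - (1/2) (f''/f')^2`. -/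
def schwarzianDeriv (f : ℝ → ℝ) (x : ℝ) : ℝ :=
  deriv (fun y => deriv (deriv f) y / deriv f y) x
    - (1 / 2) * (deriv (deriv f) x / deriv f x) ^ 2

/-- A multicritical circle map, described through its lift `F : ℝ → ℝ` to the real line.
It is an orientation-preserving `C^3` circle homeomorphism with finitely many critical
points `c 0, …, c (N-1)`, each of non-flat power-law type: near `c i` the derivative is
pinched between two multiples of `|x - c i| ^ (s i - 1)` with `s i > 1`, the Schwarzian
derivative is negative on a punctured neighborhood of each critical point, and
`log (F')` has bounded variation (bounded by `v`) off the critical neighborhoods. -/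
structure MCM where
  /-- the lift of the circle map -/
  F : ℝ → ℝ
  smooth : ContDiff ℝ 3 F
  mono : StrictMono F
  deg1 : ∀ x, F (x + 1) = F x + 1
  /-- number of critical points -/
  N : ℕ
  N_pos : 0 < N
  /-- the critical points (one representative in `[0,1)` for each) -/
  c : Fin N → ℝ
  c_mem : ∀ i, c i ∈ Set.Ico (0 : ℝ) 1
  c_inj : Function.Injective c
  isCrit : ∀ i, deriv F (c i) = 0
  critOnly : ∀ x, deriv F x = 0 → ∃ (i : Fin N) (k : ℤ), x = c i + (k : ℝ)
  /-- neighborhoods of the critical points -/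
  W : Fin N → Set ℝ
  W_open : ∀ i, IsOpen (W i)
  c_mem_W : ∀ i, c i ∈ W i
  /-- the criticalities (power-law exponents) -/
  s : Fin N → ℝ
  s_gt_one : ∀ i, 1 < s i
  al : Fin N → ℝ
  be : Fin N → ℝ
  al_pos : ∀ i, 0 < al i
  al_lt_be : ∀ i, al i < be i
  powerLaw : ∀ i, ∀ x ∈ W i, x ≠ c i →
    al i * |x - c i| ^ (s i - 1) < deriv F x ∧
      deriv F x < be i * |x - c i| ^ (s i - 1)
  negSchwarzian : ∀ i, ∀ x ∈ W i, x ≠ c i → schwarzianDeriv F x < 0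
  /-- bound for the variation of `log DF` off the critical neighborhoods -/
  v : ℝ
  v_pos : 0 < v
  logDF_var : eVariationOn (fun x => Real.log (deriv F x))
      (Set.Icc 0 1 \ ⋃ (i) (k : ℤ), (fun y => y + (k : ℝ)) '' W i) ≤ ENNReal.ofReal v

/-- The circle map with lift `F` has rotation number `ρ`. -/
def HasRotationNumber (F : ℝ → ℝ) (ρ : ℝ) : Prop :=
  Tendsto (fun n : ℕ => F^[n] 0 / n) atTop (nhds ρ)

/-- The Gauss map `x ↦ {1/x}`. -/
def gaussMap (x : ℝ) : ℝ := Int.fract x⁻¹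

/-- Partial quotients `a_n` of the continued fraction expansion of `ρ ∈ (0,1)`. -/
def cfDigit (ρ : ℝ) (n : ℕ) : ℕ := (⌊(gaussMap^[n] ρ)⁻¹⌋).toNat

/-- Return times: the denominators `q_n` of the convergents of `ρ`,
`q_0 = 1`, `q_1 = a_0`, `q_{n+1} = a_n q_n + q_{n-1}`. -/
def qDen (ρ : ℝ) : ℕ → ℕ
  | 0 => 1
  | 1 => cfDigit ρ 0
  | n + 2 => cfDigit ρ (n + 1) * qDen ρ (n + 1) + qDen ρ n

/-- Numerators `p_n` of the convergents of `ρ`: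
`p_0 = 0`, `p_1 = 1`, `p_{n+1} = a_n p_n + p_{n-1}`. -/
def pNum (ρ : ℝ) : ℕ → ℕ
  | 0 => 0
  | 1 => 1
  | n + 2 => cfDigit ρ (n + 1) * pNum ρ (n + 1) + pNum ρ n

/-! ### Abstract combinatorics -/

def cr (a b c d : ℝ) : ℝ := (b - a) * (d - c) / ((c - a) * (d - b))

def CRB (F : ℝ → ℝ) {N : ℕ} (cp : Fin N → ℝ) (K L : ℝ) : Prop :=
  ∀ a b c d : ℝ, a < b → b < c → c < d → d ≤ a + 4 →
    cr (F a) (F b) (F c) (F d) ≤ K * cr a b c d ∧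
    ((∀ i, ∀ k : ℤ, cp i + (k : ℝ) ∉ Icc a d) →
      cr (F a) (F b) (F c) (F d) ≤ Real.exp (L * (d - a)) * cr a b c d)

def ROrd (F : ℝ → ℝ) (ρ : ℝ) : Prop :=
  ∀ (m : ℕ) (p : ℤ), ((p : ℝ) < m * ρ → ∀ x, x + p < F^[m] x) ∧
    (m * ρ < p → ∀ x, F^[m] x < x + p)

lemma map_add_int' {F : ℝ → ℝ} (hd : ∀ x, F (x + 1) = F x + 1) (x : ℝ) (k : ℤ) :
    F (x + k) = F x + k := by
  have hn : ∀ (n : ℕ) (x : ℝ), F (x + n) = F x + n := by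
    intro n
    induction n with
    | zero => intro x; simp
    | succ n ih =>
      intro x
      have : x + ((n + 1 : ℕ) : ℝ) = (x + n) + 1 := by push_cast; ring
      rw [this, hd, ih]; push_cast; ring
  obtain ⟨n, rfl | rfl⟩ := k.eq_nat_or_neg
  · simpa using hn n x
  · have := hn n (x + ((-(n : ℤ) : ℤ) : ℝ))
    have e : x + ((-(n : ℤ) : ℤ) : ℝ) + (n : ℝ) = x := by push_cast; ring
    rw [e] at this
    push_cast at this ⊢; linarith

lemma iter_add_int {F : ℝ → ℝ} (hd : ∀ x, F (x + 1) = F x + 1) (m : ℕ) (x : ℝ) (k : ℤ) :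
    F^[m] (x + k) = F^[m] x + k := by
  induction m generalizing x with
  | zero => simp
  | succ m ih => rw [Function.iterate_succ_apply, Function.iterate_succ_apply, map_add_int' hd, ih]

lemma floor_term_nonneg {u v : ℝ} (t : ℝ) (h : u ≤ v) : 0 ≤ ⌊t - u⌋ - ⌊t - v⌋ := by
  have : ⌊t - v⌋ ≤ ⌊t - u⌋ := Int.floor_le_floor (by linarith)
  omega

lemma floor_term_le {u v : ℝ} (t : ℝ) (h : v ≤ u + 1) : ⌊t - u⌋ - ⌊t - v⌋ ≤ 1 := by
  have : ⌊t - u⌋ ≤ ⌊t - v + 1⌋ := Int.floor_le_floor (by linarith)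
  rw [Int.floor_add_one] at this
  omega

lemma floor_term_pos {u v t : ℝ} (h : 0 < ⌊t - u⌋ - ⌊t - v⌋) :
    ∃ k : ℤ, u + k ≤ t ∧ t < v + k := by
  refine ⟨⌊t - u⌋, ?_, ?_⟩
  · have := Int.floor_le (t - u); linarith
  · have h1 : ⌊t - v⌋ < ⌊t - u⌋ := by omega
    have := Int.floor_lt.1 h1; linarith

lemma floor_term_ge {u v t : ℝ} (k : ℤ) (h1 : u ≤ t + k) (h2 : t + k < v) :
    1 ≤ ⌊t - u⌋ - ⌊t - v⌋ := by
  have a : -k ≤ ⌊t - u⌋ := Int.le_floor.2 (by push_cast; linarith)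
  have b : ⌊t - v⌋ < -k := Int.floor_lt.2 (by push_cast; linarith)
  omega

lemma fract_ii (u a b : ℝ) : IntervalIntegrable (fun t : ℝ => Int.fract (t - u)) volume a b := by
  apply (intervalIntegrable_const (c := (1 : ℝ))).mono_fun
  · exact (measurable_fract.comp (measurable_id.sub_const u)).aestronglyMeasurable
  · refine Filter.Eventually.of_forall fun t => ?_
    simp only [Real.norm_eq_abs, abs_one]
    rw [abs_of_nonneg (Int.fract_nonneg _)]
    exact (Int.fract_lt_one _).le

lemma integral_fract_sub (u : ℝ) :
    ∫ t in (0:ℝ)..1, Int.fract (t - u) = ∫ t in (0:ℝ)..1, Int.fract t := by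
  rw [intervalIntegral.integral_comp_sub_right (fun t => Int.fract t) u]
  have hp : Function.Periodic (fun t : ℝ => Int.fract t) 1 := by
    intro t; simp
  have := hp.intervalIntegral_add_eq (0 - u) 0
  rw [show (1 - u : ℝ) = 0 - u + 1 by ring, this]; simp

lemma integral_floor_term (u v : ℝ) :
    IntervalIntegrable (fun t : ℝ => ((⌊t - u⌋ - ⌊t - v⌋ : ℤ) : ℝ)) volume 0 1 ∧
    ∫ t in (0:ℝ)..1, ((⌊t - u⌋ - ⌊t - v⌋ : ℤ) : ℝ) = v - u := by
  have e : (fun t : ℝ => ((⌊t - u⌋ - ⌊t - v⌋ : ℤ) : ℝ)) =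
      fun t => (v - u) + (Int.fract (t - v) - Int.fract (t - u)) := by
    funext t
    have h1 := Int.floor_add_fract (t - u)
    have h2 := Int.floor_add_fract (t - v)
    push_cast; linarith
  rw [e]
  have i1 := fract_ii v 0 1
  have i2 := fract_ii u 0 1
  refine ⟨intervalIntegrable_const.add (i1.sub i2), ?_⟩
  rw [intervalIntegral.integral_add intervalIntegrable_const (i1.sub i2),
    intervalIntegral.integral_sub i1 i2, integral_fract_sub, integral_fract_sub]
  simp

lemma sum_len_le {ι : Type*} (s : Finset ι) (u v : ι → ℝ) (M : ℕ)
    (h : ∀ t : ℝ, ∑ j ∈ s, (⌊t - u j⌋ - ⌊t - v j⌋) ≤ (M : ℤ)) :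
    ∑ j ∈ s, (v j - u j) ≤ M := by
  have e : ∑ j ∈ s, (v j - u j) =
      ∫ t in (0:ℝ)..1, ∑ j ∈ s, ((⌊t - u j⌋ - ⌊t - v j⌋ : ℤ) : ℝ) := by
    rw [intervalIntegral.integral_finsetSum]
    · exact Finset.sum_congr rfl fun j _ => (integral_floor_term _ _).2.symm
    · exact fun j _ => (integral_floor_term _ _).1
  rw [e]
  calc _ ≤ ∫ t in (0:ℝ)..1, (M : ℝ) := by
        apply intervalIntegral.integral_mono_on zero_le_one
        · have := IntervalIntegrable.sum (μ := volume) (a := 0) (b := 1) s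
            (f := fun j (t : ℝ) => ((⌊t - u j⌋ - ⌊t - v j⌋ : ℤ) : ℝ))
            (fun j _ => (integral_floor_term _ _).1)
          have e2 : (fun t : ℝ => ∑ j ∈ s, ((⌊t - u j⌋ - ⌊t - v j⌋ : ℤ) : ℝ)) =
              ∑ j ∈ s, fun t : ℝ => ((⌊t - u j⌋ - ⌊t - v j⌋ : ℤ) : ℝ) := by
            funext t; simp
          rw [e2]; exact this
        · exact intervalIntegrable_const
        · intro t _
          exact_mod_cast h t
    _ = M := by simp

lemma ord_lt {F : ℝ → ℝ} {ρ : ℝ} (hirr : Irrational ρ) (ho : ROrd F ρ) {m n : ℕ} {k : ℤ} {X : ℝ}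
    (h : F^[m] X + k < F^[n] X) : (m : ℝ) * ρ + k < n * ρ := by
  by_contra hc
  push Not at hc
  rcases hc.lt_or_eq with hc | hc
  · rcases le_total m n with hmn | hmn
    · obtain ⟨d, rfl⟩ := Nat.exists_eq_add_of_le hmn
      have := (ho d k).2 (by push_cast at hc; linarith) (F^[m] X)
      rw [← Function.iterate_add_apply, Nat.add_comm d m] at this
      linarith
    · obtain ⟨d, rfl⟩ := Nat.exists_eq_add_of_le hmn
      have := (ho d (-k)).1 (by push_cast at hc ⊢; linarith) (F^[n] X)
      rw [← Function.iterate_add_apply, Nat.add_comm d n] at this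
      push_cast at this
      linarith
  · have e : ρ * ((n : ℤ) - (m : ℤ) : ℤ) = (k : ℤ) := by push_cast; linarith
    rcases eq_or_ne ((n : ℤ) - (m : ℤ)) 0 with h0 | h0
    · rw [h0] at e
      have hk : (k : ℝ) = 0 := by simpa using e.symm
      have : m = n := by omega
      subst this
      rw [hk] at h; linarith
    · exact (hirr.mul_intCast h0).ne_int k e

lemma mult1 {F : ℝ → ℝ} (hF : StrictMono F) (hd : ∀ x, F (x + 1) = F x + 1)
    {ρ : ℝ} (hirr : Irrational ρ) (ho : ROrd F ρ) {q Q : ℕ} {p : ℤ}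
    (hpos : (p : ℝ) < q * ρ) (hlt1 : q * ρ - p < 1)
    (best : ∀ m : ℕ, 0 < m → m < Q → ∀ r : ℤ, q * ρ - p ≤ |m * ρ - r|) (x t : ℝ) :
    ∑ j ∈ Finset.range Q, (⌊t - F^[j] x⌋ - ⌊t - F^[j] (F^[q] x - p)⌋) ≤ 1 := by
  have ej : ∀ j, F^[j] (F^[q] x - p) = F^[q] (F^[j] x) - p := by
    intro j
    have := iter_add_int hd j (F^[q] x) (-p)
    push_cast at this
    rw [sub_eq_add_neg, this, ← Function.iterate_add_apply, ← Function.iterate_add_apply,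
      Nat.add_comm j q, sub_eq_add_neg]
  have key : ∀ j j', j < j' → j' < Q →
      0 < ⌊t - F^[j] x⌋ - ⌊t - F^[j] (F^[q] x - p)⌋ →
      0 < ⌊t - F^[j'] x⌋ - ⌊t - F^[j'] (F^[q] x - p)⌋ → False := by
    intro j j' hj hj' h1 h2
    obtain ⟨k, a1, a2⟩ := floor_term_pos h1
    obtain ⟨k', b1, b2⟩ := floor_term_pos h2
    obtain ⟨m, rfl⟩ := Nat.exists_eq_add_of_lt hj
    rw [ej] at a2 b2
    have e1 : F^[j + m + 1] x = F^[m + 1] (F^[j] x) := by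
      rw [← Function.iterate_add_apply]; congr 1; omega
    rw [e1] at b1 b2
    rw [← Function.iterate_add_apply] at b2
    set X := F^[j] x
    have c1 : F^[0] X + ((k - k' + p : ℤ) : ℝ) < F^[q + (m + 1)] X := by
      simp only [Function.iterate_zero, id]; push_cast; linarith
    have c2 : F^[m + 1] X + ((k' - k + p : ℤ) : ℝ) < F^[q] X := by
      push_cast; linarith
    have d1 := ord_lt hirr ho c1
    have d2 := ord_lt hirr ho c2
    have d3 := best (m + 1) (by omega) (by omega) (k - k')
    push_cast at d1 d2 d3
    have : |((m : ℝ) + 1) * ρ - (k - k')| < q * ρ - p := by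
      rw [abs_lt]; constructor <;> linarith
    linarith
  have hx : ∀ y, y < F^[q] y - p := fun y => by linarith [(ho q p).1 hpos y]
  have hx1 : ∀ y, F^[q] y - p ≤ y + 1 := fun y => by
    have := (ho q (p + 1)).2 (by push_cast; linarith) y
    push_cast at this; linarith
  by_cases hex : ∃ j ∈ Finset.range Q, 0 < ⌊t - F^[j] x⌋ - ⌊t - F^[j] (F^[q] x - p)⌋
  · obtain ⟨j, hj, hpj⟩ := hex
    rw [Finset.sum_eq_single_of_mem j hj]
    · apply floor_term_le
      rw [ej]; exact hx1 _
    · intro i hi hij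
      by_contra hne
      have : 0 < ⌊t - F^[i] x⌋ - ⌊t - F^[i] (F^[q] x - p)⌋ := by
        apply lt_of_le_of_ne _ (Ne.symm hne)
        apply floor_term_nonneg
        rw [ej]; exact (hx _).le
      rw [Finset.mem_range] at hi hj
      rcases lt_or_gt_of_ne hij with h | h
      · exact key i j h hj this hpj
      · exact key j i h hi hpj this
  · push Not at hex
    exact (Finset.sum_nonpos hex).trans zero_le_one

lemma mult2 {F : ℝ → ℝ} (hF : StrictMono F) (hd : ∀ x, F (x + 1) = F x + 1)
    {ρ : ℝ} (hirr : Irrational ρ) (ho : ROrd F ρ) {q Q : ℕ} {p : ℤ}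
    (hpos : (p : ℝ) < q * ρ) (hlt1 : q * ρ - p < 1)
    (best : ∀ m : ℕ, 0 < m → m < Q → ∀ r : ℤ, q * ρ - p ≤ |m * ρ - r|) (x t : ℝ) :
    ∑ j ∈ Finset.range (Q + Q), (⌊t - F^[j] x⌋ - ⌊t - F^[j] (F^[q] x - p)⌋) ≤ 2 := by
  rw [Finset.sum_range_add]
  have h1 := mult1 hF hd hirr ho hpos hlt1 best x t
  have h2 := mult1 hF hd hirr ho hpos hlt1 best (F^[Q] x) t
  have e : ∀ j, F^[Q + j] x = F^[j] (F^[Q] x) := fun j => by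
    rw [← Function.iterate_add_apply, Nat.add_comm]
  have e' : ∀ j, F^[Q + j] (F^[q] x - p) = F^[j] (F^[q] (F^[Q] x) - p) := fun j => by
    rw [Nat.add_comm, Function.iterate_add_apply]
    have := iter_add_int hd Q (F^[q] x) (-p)
    push_cast at this
    rw [sub_eq_add_neg, this, ← Function.iterate_add_apply, ← Function.iterate_add_apply,
      Nat.add_comm Q q, sub_eq_add_neg]
  simp only [e, e']
  linarith

/-- `B` constant -/
def Bc (N : ℕ) (K L : ℝ) : ℝ := K ^ (8 * N) * Real.exp (L * 8)

lemma cr_pos {a b c d : ℝ} (h1 : a < b) (h2 : b < c) (h3 : c < d) : 0 < cr a b c d := by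
  unfold cr
  have : 0 < b - a := by linarith
  have : 0 < d - c := by linarith
  have : 0 < c - a := by linarith
  have : 0 < d - b := by linarith
  positivity

lemma cri {F : ℝ → ℝ} (hF : StrictMono F) (hd : ∀ x, F (x + 1) = F x + 1)
    {ρ : ℝ} (hirr : Irrational ρ) (ho : ROrd F ρ) {q Q : ℕ} {p : ℤ}
    (hpos : (p : ℝ) < q * ρ) (hlt1 : q * ρ - p < 1)
    (best : ∀ m : ℕ, 0 < m → m < Q → ∀ r : ℤ, q * ρ - p ≤ |m * ρ - r|)
    {N : ℕ} {cp : Fin N → ℝ} {K L : ℝ} (hK : 1 ≤ K) (hL : 0 ≤ L) (crb : CRB F cp K L)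
    {a0 a1 a2 a3 : ℝ} (e1 : a1 = F^[q] a0 - p) (e2 : a2 = F^[q] a1 - p)
    (e3 : a3 = F^[q] a2 - p) {k : ℕ} (hk : k ≤ Q + Q) :
    cr (F^[k] a0) (F^[k] a1) (F^[k] a2) (F^[k] a3) ≤ Bc N K L * cr a0 a1 a2 a3 := by
  have hx : ∀ y, y < F^[q] y - p := fun y => by linarith [(ho q p).1 hpos y]
  have hx1 : ∀ y, F^[q] y - p ≤ y + 1 := fun y => by
    have := (ho q (p + 1)).2 (by push_cast; linarith) y
    push_cast at this; linarith
  have ej : ∀ j x, F^[j] (F^[q] x - p) = F^[q] (F^[j] x) - p := by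
    intro j x
    have := iter_add_int hd j (F^[q] x) (-p)
    push_cast at this
    rw [sub_eq_add_neg, this, ← Function.iterate_add_apply, ← Function.iterate_add_apply,
      Nat.add_comm j q, sub_eq_add_neg]
  obtain ⟨a4, e4⟩ : ∃ a4, a4 = F^[q] a3 - p := ⟨_, rfl⟩
  have l1 : a0 < a1 := e1 ▸ hx _
  have l2 : a1 < a2 := e2 ▸ hx _
  have l3 : a2 < a3 := e3 ▸ hx _
  have l4 : a3 < a4 := e4 ▸ hx _
  have hm : ∀ j, StrictMono F^[j] := fun j => hF.iterate j
  have M : ∀ t : ℝ, ∑ j ∈ Finset.range k, (⌊t - F^[j] a0⌋ - ⌊t - F^[j] a4⌋) ≤ ((8 : ℕ) : ℤ) := by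
    intro t
    have m1 := mult2 hF hd hirr ho hpos hlt1 best a0 t
    have m2 := mult2 hF hd hirr ho hpos hlt1 best a1 t
    have m3 := mult2 hF hd hirr ho hpos hlt1 best a2 t
    have m4 := mult2 hF hd hirr ho hpos hlt1 best a3 t
    rw [← e1] at m1
    rw [← e2] at m2
    rw [← e3] at m3
    rw [← e4] at m4
    calc _ ≤ ∑ j ∈ Finset.range (Q + Q), (⌊t - F^[j] a0⌋ - ⌊t - F^[j] a4⌋) := by
          apply Finset.sum_le_sum_of_subset_of_nonneg
          · exact Finset.range_subset_range.2 hk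
          · intro j _ _
            apply floor_term_nonneg
            exact ((hm j) (by linarith)).le
      _ ≤ _ := by
          simp only [Finset.sum_sub_distrib] at m1 m2 m3 m4 ⊢
          push_cast
          linarith
  have S := sum_len_le (Finset.range k) (fun j => F^[j] a0) (fun j => F^[j] a4) 8 M
  set cnt : ℕ → ℕ := fun j => ∑ i : Fin N, (⌊cp i - F^[j] a0⌋ - ⌊cp i - F^[j] a4⌋).toNat with hcnt
  have hcs : ∑ j ∈ Finset.range k, cnt j ≤ 8 * N := by
    rw [hcnt, Finset.sum_comm]
    calc _ ≤ ∑ i : Fin N, 8 := by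
          apply Finset.sum_le_sum
          intro i _
          have := M (cp i)
          zify
          refine le_trans (le_of_eq ?_) this
          apply Finset.sum_congr rfl
          intro j _
          apply Int.toNat_of_nonneg
          apply floor_term_nonneg
          exact ((hm j) (by linarith)).le
      _ = 8 * N := by simp [mul_comm]
  have ind : ∀ n, cr (F^[n] a0) (F^[n] a1) (F^[n] a2) (F^[n] a3) ≤
      (∏ j ∈ Finset.range n, (K ^ (cnt j) * Real.exp (L * (F^[j] a4 - F^[j] a0)))) *
        cr a0 a1 a2 a3 := by
    intro n
    induction n with
    | zero => simp
    | succ n ih =>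
      rw [Finset.prod_range_succ]
      simp only [Function.iterate_succ_apply']
      set b0 := F^[n] a0 with hb0
      set b1 := F^[n] a1 with hb1
      set b2 := F^[n] a2 with hb2
      set b3 := F^[n] a3 with hb3
      have k1 : b0 < b1 := hm n l1
      have k2 : b1 < b2 := hm n l2
      have k3 : b2 < b3 := hm n l3
      have k4 : b3 < F^[n] a4 := hm n l4
      have g1 : b1 ≤ b0 + 1 := by rw [hb1, e1, ej]; exact hx1 _
      have g2 : b2 ≤ b1 + 1 := by rw [hb2, e2, ej]; exact hx1 _
      have g3 : b3 ≤ b2 + 1 := by rw [hb3, e3, ej]; exact hx1 _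
      have hcr := cr_pos k1 k2 k3
      obtain ⟨c1, c2⟩ := crb b0 b1 b2 b3 k1 k2 k3 (by linarith)
      have step : cr (F b0) (F b1) (F b2) (F b3) ≤
          (K ^ (cnt n) * Real.exp (L * (F^[n] a4 - b0))) * cr b0 b1 b2 b3 := by
        by_cases hc : ∀ i, ∀ k : ℤ, cp i + (k : ℝ) ∉ Icc b0 b3
        · refine (c2 hc).trans ?_
          apply mul_le_mul_of_nonneg_right _ hcr.le
          have : Real.exp (L * (b3 - b0)) ≤ Real.exp (L * (F^[n] a4 - b0)) := by
            apply Real.exp_le_exp.2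
            apply mul_le_mul_of_nonneg_left _ hL
            linarith
          have h1 : 1 ≤ K ^ (cnt n) := one_le_pow₀ hK
          nlinarith [Real.exp_pos (L * (F^[n] a4 - b0))]
        · push Not at hc
          obtain ⟨i, r, hr⟩ := hc
          refine c1.trans ?_
          apply mul_le_mul_of_nonneg_right _ hcr.le
          have hle := floor_term_ge r hr.1 (lt_of_le_of_lt hr.2 k4)
          have hc1 : 1 ≤ cnt n := by
            calc 1 ≤ (⌊cp i - F^[n] a0⌋ - ⌊cp i - F^[n] a4⌋).toNat := by rw [← hb0]; omega
              _ ≤ _ := Finset.single_le_sum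
                  (f := fun i : Fin N => (⌊cp i - F^[n] a0⌋ - ⌊cp i - F^[n] a4⌋).toNat)
                  (fun _ _ => Nat.zero_le _) (Finset.mem_univ i)
          have h1 : K ≤ K ^ (cnt n) := by
            calc K = K ^ 1 := (pow_one K).symm
              _ ≤ _ := pow_le_pow_right₀ hK hc1
          have h2 : 1 ≤ Real.exp (L * (F^[n] a4 - b0)) := by
            apply Real.one_le_exp
            apply mul_nonneg hL; linarith
          nlinarith
      calc _ ≤ _ := step
        _ ≤ (K ^ (cnt n) * Real.exp (L * (F^[n] a4 - b0))) * (_ * cr a0 a1 a2 a3) :=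
            mul_le_mul_of_nonneg_left ih (by positivity)
        _ = _ := by ring
  refine (ind k).trans ?_
  apply mul_le_mul_of_nonneg_right _ (cr_pos l1 l2 l3).le
  rw [Finset.prod_mul_distrib, Finset.prod_pow_eq_pow_sum, ← Real.exp_sum, ← Finset.mul_sum]
  unfold Bc
  apply mul_le_mul
  · exact pow_le_pow_right₀ hK hcs
  · apply Real.exp_le_exp.2
    apply mul_le_mul_of_nonneg_left _ hL
    exact_mod_cast S
  · positivity
  · positivity

lemma hit {F : ℝ → ℝ} (hF : StrictMono F) (hd : ∀ x, F (x + 1) = F x + 1)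
    {ρ : ℝ} (ho : ROrd F ρ) {q Q : ℕ} {p P : ℤ} (hQ : 0 < Q)
    (hpos : (p : ℝ) < q * ρ) (hneg : Q * ρ < P) (hsum : (P + p : ℝ) < (Q + q) * ρ) (x w : ℝ) :
    ∃ k, k < Q + q ∧ ∃ r : ℤ, w ≤ F^[k] x + r ∧ F^[k] x + r ≤ F^[q] w - p := by
  have hm : ∀ j, StrictMono F^[j] := fun j => hF.iterate j
  obtain ⟨k, hk, hmax⟩ := Finset.exists_max_image (Finset.range (Q + q))
    (fun k => F^[k] x + (⌊w - F^[k] x⌋ : ℝ)) ⟨0, by simp; omega⟩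
  rw [Finset.mem_range] at hk
  obtain ⟨r, hr⟩ : ∃ r : ℤ, r = ⌊w - F^[k] x⌋ := ⟨_, rfl⟩
  have hyw : F^[k] x + r ≤ w := by
    have := Int.floor_le (w - F^[k] x); rw [hr]; linarith
  have big : ∀ j < Q + q, ∀ s : ℤ, F^[k] x + r < F^[j] x + s → w < F^[j] x + s := by
    intro j hj s hs
    by_contra hc
    push Not at hc
    have h1 : s ≤ ⌊w - F^[j] x⌋ := Int.le_floor.2 (by linarith)
    have h1' : (s : ℝ) ≤ ⌊w - F^[j] x⌋ := by exact_mod_cast h1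
    have h2 := hmax j (Finset.mem_range.2 hj)
    simp only [← hr] at h2
    linarith
  rcases lt_or_ge k Q with hkQ | hkQ
  · refine ⟨k + q, by omega, r - p, ?_⟩
    have e : F^[k + q] x = F^[q] (F^[k] x) := by
      rw [← Function.iterate_add_apply, Nat.add_comm]
    have e2 : F^[q] (F^[k] x + r) = F^[q] (F^[k] x) + r := iter_add_int hd q _ r
    have h1 := (ho q p).1 hpos (F^[k] x)
    constructor
    · apply le_of_lt
      apply big (k + q) (by omega)
      rw [e]; push_cast; linarith
    · have := (hm q).monotone hyw
      rw [e2] at this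
      rw [e]; push_cast; linarith
  · obtain ⟨d, rfl⟩ := Nat.exists_eq_add_of_le hkQ
    refine ⟨d, by omega, r + P, ?_⟩
    have e : F^[Q + d] x = F^[Q] (F^[d] x) := by
      rw [← Function.iterate_add_apply]
    have h1 := (ho Q P).2 hneg (F^[d] x)
    have h2 := (ho (q + Q) (P + p)).1 (by push_cast; linarith) (F^[d] x)
    constructor
    · apply le_of_lt
      apply big d (by omega)
      rw [e]; push_cast; linarith
    · have := (hm q).monotone hyw
      rw [iter_add_int hd, e, ← Function.iterate_add_apply] at this
      push_cast at h2 ⊢; linarith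

lemma cr_ge {a b c d l C : ℝ} (hl : 0 < l) (hC : 0 ≤ C) (h1 : l ≤ b - a) (h2 : l ≤ d - c)
    (h0 : b < c) (h3 : c - b ≤ C * l) : 1 / (1 + C) ^ 2 ≤ cr a b c d := by
  unfold cr
  have p1 : 0 < c - a := by linarith
  have p2 : 0 < d - b := by linarith
  rw [div_le_div_iff₀ (by positivity) (by positivity)]
  have i1 : c - a ≤ (1 + C) * (b - a) := by nlinarith
  have i2 : d - b ≤ (1 + C) * (d - c) := by nlinarith
  calc 1 * ((c - a) * (d - b)) ≤ ((1 + C) * (b - a)) * ((1 + C) * (d - c)) := by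
        rw [one_mul]
        exact mul_le_mul i1 i2 p2.le (by nlinarith)
    _ = _ := by ring

lemma of_cr_ge {a b c d C : ℝ} (h1 : a < b) (h2 : b < c) (h3 : c < d) (hC : 0 < C)
    (h : 1 / C ≤ cr a b c d) : c - b ≤ C * (b - a) ∧ c - b ≤ C * (d - c) := by
  unfold cr at h
  have p1 : 0 < c - a := by linarith
  have p2 : 0 < d - b := by linarith
  rw [div_le_div_iff₀ (by positivity) (by positivity)] at h
  have q1 : 0 < b - a := by linarith
  have q2 : 0 < d - c := by linarith
  have q3 : 0 < c - b := by linarith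
  constructor
  · have : (c - b) * (d - c) ≤ (C * (b - a)) * (d - c) := by nlinarith
    exact le_of_mul_le_mul_right this q2
  · have : (c - b) * (b - a) ≤ (C * (d - c)) * (b - a) := by nlinarith
    exact le_of_mul_le_mul_right this q1

lemma exists_min {g : ℝ → ℝ} (hg : Continuous g) (hp : ∀ x, g (x + 1) = g x) :
    ∃ z, ∀ x, g z ≤ g x := by
  obtain ⟨z, _, hz⟩ := isCompact_Icc.exists_isMinOn (nonempty_Icc.2 (zero_le_one (α := ℝ)))
    hg.continuousOn
  refine ⟨z, fun x => ?_⟩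
  have hper : Function.Periodic g 1 := hp
  have e : g (Int.fract x) = g x := by
    have := hper.sub_zsmul_eq (x := x) ⌊x⌋
    rw [← this]; congr 1; simp
  rw [← e]
  exact hz ⟨Int.fract_nonneg x, (Int.fract_lt_one x).le⟩

lemma surj_of {F : ℝ → ℝ} (hc : Continuous F) (hd : ∀ x, F (x + 1) = F x + 1) :
    Function.Surjective F := by
  intro y
  have e1 := map_add_int' hd 0 ⌈y - F 0⌉
  have e2 := map_add_int' hd 0 ⌊y - F 0⌋
  have h1 := Int.le_ceil (y - F 0)
  have h2 := Int.floor_le (y - F 0)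
  have := intermediate_value_univ (0 + (⌊y - F 0⌋ : ℝ)) (0 + (⌈y - F 0⌉ : ℝ)) hc
  exact this ⟨by linarith, by linarith⟩

/-- the final constant -/
def Cc (N : ℕ) (K L : ℝ) : ℝ := Bc N K L * (1 + 2 * (4 * Bc N K L)) ^ 2

lemma one_le_Bc {N : ℕ} {K L : ℝ} (hK : 1 ≤ K) (hL : 0 ≤ L) : 1 ≤ Bc N K L := by
  unfold Bc
  have h1 : 1 ≤ K ^ (8 * N) := one_le_pow₀ hK
  have h2 : 1 ≤ Real.exp (L * 8) := Real.one_le_exp (by positivity)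
  nlinarith

theorem core {F : ℝ → ℝ} (hF : StrictMono F) (hc : Continuous F) (hd : ∀ x, F (x + 1) = F x + 1)
    {ρ : ℝ} (hirr : Irrational ρ) (ho : ROrd F ρ) {q Q : ℕ} {p P : ℤ} (hQ : 0 < Q) (hqQ : q ≤ Q)
    (hpos : (p : ℝ) < q * ρ) (hlt1 : q * ρ - p < 1)
    (hneg : Q * ρ < P) (hsum : (P + p : ℝ) < (Q + q) * ρ)
    (best : ∀ m : ℕ, 0 < m → m < Q → ∀ r : ℤ, q * ρ - p ≤ |m * ρ - r|)
    {N : ℕ} {cp : Fin N → ℝ} {K L : ℝ} (hK : 1 ≤ K) (hL : 0 ≤ L) (crb : CRB F cp K L)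
    {x y : ℝ} (hxy : F^[q] y - p = x) :
    x - y ≤ Cc N K L * (F^[q] x - p - x) ∧ F^[q] x - p - x ≤ Cc N K L * (x - y) ∧
      0 ≤ x - y ∧ 0 ≤ F^[q] x - p - x := by
  have hm : ∀ j, StrictMono F^[j] := fun j => hF.iterate j
  obtain ⟨h, hh⟩ : ∃ h : ℝ → ℝ, ∀ x, h x = F^[q] x - p := ⟨fun x => F^[q] x - p, fun _ => rfl⟩
  have hx : ∀ y, y < h y := fun y => by rw [hh]; linarith [(ho q p).1 hpos y]
  have hmono : StrictMono h := fun a b hab => by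
    rw [hh, hh]; linarith [hm q hab]
  have hcont : Continuous h := by
    have : h = fun x => F^[q] x - p := funext hh
    rw [this]; exact (hc.iterate q).sub continuous_const
  have hadd : ∀ x (k : ℤ), h (x + k) = h x + k := fun x k => by
    rw [hh, hh, iter_add_int hd]; ring
  have hcomm : ∀ j x, F^[j] (h x) = h (F^[j] x) := by
    intro j x
    have := iter_add_int hd j (F^[q] x) (-p)
    push_cast at this
    rw [hh, hh, sub_eq_add_neg, this, ← Function.iterate_add_apply, ← Function.iterate_add_apply,
      Nat.add_comm j q, sub_eq_add_neg]
  have hsurj : Function.Surjective h := surj_of hcont (fun x => by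
    have := hadd x 1; push_cast at this; exact this)
  set B := Bc N K L with hB
  have hB1 : 1 ≤ B := one_le_Bc hK hL
  obtain ⟨z, hz⟩ := exists_min (g := fun x => h x - x) (hcont.sub continuous_id) (fun x => by
    have := hadd x 1; push_cast at this; rw [this]; ring)
  obtain ⟨l, hl⟩ : ∃ l, l = h z - z := ⟨_, rfl⟩
  rw [← hl] at hz
  have hlpos : 0 < l := by linarith [hx z]
  -- pull back under `h`
  obtain ⟨w1, hw1⟩ := hsurj z
  obtain ⟨w0, hw0⟩ := hsurj w1
  have CRI : ∀ a (k : ℕ), k ≤ Q + Q → cr (F^[k] a) (h (F^[k] a)) (h (h (F^[k] a)))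
      (h (h (h (F^[k] a)))) ≤ B * cr a (h a) (h (h a)) (h (h (h a))) := by
    intro a k hk
    have := cri hF hd hirr ho hpos hlt1 best hK hL crb (hh a) (hh (h a)) (hh (h (h a))) hk
    rwa [hcomm, hcomm, hcomm, hcomm, hcomm, hcomm] at this
  have crshift : ∀ (a b c d s : ℝ), cr (a + s) (b + s) (c + s) (d + s) = cr a b c d := by
    intro a b c d s
    unfold cr; congr 1 <;> ring
  have L1 : z - w1 ≤ 4 * B * l := by
    have h1 := CRI w0 q (by omega)
    have e : F^[q] w0 = w1 + p := by rw [← hw0, hh]; ring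
    rw [e, hadd, hadd, hadd, crshift, hw0, hw1] at h1
    have h2 : 1 / (1 + 1 : ℝ) ^ 2 ≤ cr w1 z (h z) (h (h z)) := by
      apply cr_ge hlpos zero_le_one
      · have := hz w1; rwa [hw1] at this
      · exact hz _
      · exact hx _
      · linarith
    have h3 : 1 / (4 * B) ≤ cr w0 w1 z (h z) := by
      rw [div_le_iff₀ (by positivity)]
      norm_num at h2
      linarith
    have := (of_cr_ge (by rw [← hw0]; exact hx _) (by rw [← hw1]; exact hx _) (hx _)
      (by positivity) h3).2
    rwa [hl]
  have main : ∀ a, h (h a) - h a ≤ Cc N K L * (h a - a) ∧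
      h (h a) - h a ≤ Cc N K L * (h (h (h a)) - h (h a)) := by
    intro a
    apply of_cr_ge (hx _) (hx _) (hx _)
    · unfold Cc; rw [← hB]; positivity
    obtain ⟨k, hk, r, r1, r2⟩ := hit hF hd ho hQ hpos hneg hsum a w0
    rw [← hh, hw0] at r2
    have h1 := CRI a k (by omega)
    rw [← crshift _ _ _ _ (r : ℝ)] at h1
    simp only [← hadd] at h1
    set b := F^[k] a + r
    have h2 : 1 / (1 + 2 * (4 * B)) ^ 2 ≤ cr b (h b) (h (h b)) (h (h (h b))) := by
      apply cr_ge hlpos (by positivity) (hz _) (hz _) (hx _)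
      have s1 : w1 ≤ h b := by rw [← hw0]; exact hmono.monotone r1
      have s2 : h (h b) ≤ h z := by
        apply hmono.monotone
        rw [← hw1]; exact hmono.monotone r2
      nlinarith
    unfold Cc
    rw [← hB, div_le_iff₀ (by positivity)]
    rw [div_le_iff₀ (by positivity)] at h2
    have h5 : 0 < (1 + 2 * (4 * B)) ^ 2 := by positivity
    have h6 := mul_le_mul_of_nonneg_right h1 h5.le
    linarith
  obtain ⟨e, he⟩ := hsurj y
  have hy : h y = x := by rw [hh, hxy]
  rw [← hh]
  have m1 := main e
  have m2 := main y
  rw [he, hy] at m1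
  rw [hy] at m2
  refine ⟨m1.2, m2.1, ?_, ?_⟩
  · linarith [hx y]
  · linarith [hx x]

/-! ### Continued fractions -/

section CF
variable {ρ : ℝ}

lemma gauss_facts (hirr : Irrational ρ) (hmem : ρ ∈ Set.Ioo (0 : ℝ) 1) (n : ℕ) :
    Irrational (gaussMap^[n] ρ) ∧ gaussMap^[n] ρ ∈ Set.Ioo (0 : ℝ) 1 := by
  induction n with
  | zero => exact ⟨hirr, hmem⟩
  | succ n ih =>
    rw [Function.iterate_succ_apply']
    have h1 : Irrational (gaussMap (gaussMap^[n] ρ)) := by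
      unfold gaussMap Int.fract
      exact ih.1.inv.sub_intCast _
    refine ⟨h1, ?_, Int.fract_lt_one _⟩
    exact lt_of_le_of_ne (Int.fract_nonneg _) (fun h => h1.ne_zero h.symm)

lemma cfDigit_eq (hirr : Irrational ρ) (hmem : ρ ∈ Set.Ioo (0 : ℝ) 1) (n : ℕ) :
    (cfDigit ρ n : ℝ) = (gaussMap^[n] ρ)⁻¹ - gaussMap^[n + 1] ρ ∧ 1 ≤ cfDigit ρ n := by
  obtain ⟨_, h0, h1⟩ := gauss_facts hirr hmem n
  have hf : 1 ≤ ⌊(gaussMap^[n] ρ)⁻¹⌋ := Int.le_floor.2 (by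
    push_cast; exact (one_le_inv₀ h0).2 h1.le)
  constructor
  · rw [Function.iterate_succ_apply']
    have : ((cfDigit ρ n : ℕ) : ℤ) = ⌊(gaussMap^[n] ρ)⁻¹⌋ := by
      unfold cfDigit; exact Int.toNat_of_nonneg (by omega)
    have h' : ((cfDigit ρ n : ℕ) : ℝ) = (⌊(gaussMap^[n] ρ)⁻¹⌋ : ℝ) := by exact_mod_cast this
    rw [h']
    unfold gaussMap Int.fract; ring
  · unfold cfDigit; omega

lemma qDen_pos (hirr : Irrational ρ) (hmem : ρ ∈ Set.Ioo (0 : ℝ) 1) (n : ℕ) :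
    0 < qDen ρ n ∧ qDen ρ n ≤ qDen ρ (n + 1) := by
  induction n with
  | zero => exact ⟨Nat.one_pos, (cfDigit_eq hirr hmem 0).2⟩
  | succ n ih =>
    refine ⟨by omega, ?_⟩
    change _ ≤ cfDigit ρ (n + 1) * qDen ρ (n + 1) + qDen ρ n
    have := (cfDigit_eq hirr hmem (n + 1)).2
    nlinarith

lemma theta_rec (hirr : Irrational ρ) (hmem : ρ ∈ Set.Ioo (0 : ℝ) 1) (n : ℕ) :
    (qDen ρ (n + 1) : ℝ) * ρ - pNum ρ (n + 1) =
      - gaussMap^[n + 1] ρ * (qDen ρ n * ρ - pNum ρ n) := by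
  induction n with
  | zero =>
    have h := (cfDigit_eq hirr hmem 0).1
    simp only [Function.iterate_zero, id] at h
    have h0 : ρ ≠ 0 := hmem.1.ne'
    change (cfDigit ρ 0 : ℝ) * ρ - ((1 : ℕ) : ℝ) =
      - gaussMap^[0 + 1] ρ * (((1 : ℕ) : ℝ) * ρ - ((0 : ℕ) : ℝ))
    rw [h]; push_cast; field_simp; ring
  | succ n ih =>
    have h := (cfDigit_eq hirr hmem (n + 1)).1
    have hg : gaussMap^[n + 1] ρ ≠ 0 := (gauss_facts hirr hmem (n + 1)).2.1.ne'
    change ((cfDigit ρ (n + 1) * qDen ρ (n + 1) + qDen ρ n : ℕ) : ℝ) * ρ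
      - ((cfDigit ρ (n + 1) * pNum ρ (n + 1) + pNum ρ n : ℕ) : ℝ) = _
    push_cast
    rw [h]
    set g := gaussMap^[n + 1] ρ
    have e : ((qDen ρ n : ℝ) * ρ - pNum ρ n) =
        - g⁻¹ * ((qDen ρ (n + 1) : ℝ) * ρ - pNum ρ (n + 1)) := by
      rw [ih]; field_simp
    linear_combination e

lemma det_one (n : ℕ) :
    (qDen ρ n : ℤ) * pNum ρ (n + 1) - qDen ρ (n + 1) * pNum ρ n = (-1) ^ n := by
  induction n with
  | zero => simp [qDen, pNum]
  | succ n ih =>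
    change (qDen ρ (n + 1) : ℤ) * ((cfDigit ρ (n + 1) * pNum ρ (n + 1) + pNum ρ n : ℕ) : ℤ)
      - ((cfDigit ρ (n + 1) * qDen ρ (n + 1) + qDen ρ n : ℕ) : ℤ) * pNum ρ (n + 1) = _
    push_cast
    rw [pow_succ]
    linear_combination -ih

lemma theta_facts (hirr : Irrational ρ) (hmem : ρ ∈ Set.Ioo (0 : ℝ) 1) (n : ℕ) :
    (qDen ρ n : ℝ) * ρ - pNum ρ n ≠ 0 ∧ |(qDen ρ n : ℝ) * ρ - pNum ρ n| < 1 := by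
  induction n with
  | zero =>
    change ((1 : ℕ) : ℝ) * ρ - ((0 : ℕ) : ℝ) ≠ 0 ∧ |((1 : ℕ) : ℝ) * ρ - ((0 : ℕ) : ℝ)| < 1
    have := hmem.1
    have := hmem.2
    push_cast
    rw [one_mul, sub_zero, abs_of_pos hmem.1]
    exact ⟨hmem.1.ne', hmem.2⟩
  | succ n ih =>
    rw [theta_rec hirr hmem n]
    obtain ⟨_, h0, h1⟩ := gauss_facts hirr hmem (n + 1)
    refine ⟨mul_ne_zero (neg_ne_zero.2 h0.ne') ih.1, ?_⟩
    rw [abs_mul, abs_neg, abs_of_pos h0]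
    have := abs_nonneg ((qDen ρ n : ℝ) * ρ - pNum ρ n)
    nlinarith [ih.2]

lemma best_approx (hirr : Irrational ρ) (hmem : ρ ∈ Set.Ioo (0 : ℝ) 1) (n m : ℕ) (hm : 0 < m)
    (hmQ : m < qDen ρ (n + 1)) (r : ℤ) :
    |(qDen ρ n : ℝ) * ρ - pNum ρ n| ≤ |m * ρ - r| := by
  have hdet := det_one (ρ := ρ) n
  have hrec := theta_rec hirr hmem n
  obtain ⟨_, g0, g1⟩ := gauss_facts hirr hmem (n + 1)
  have hq := (qDen_pos hirr hmem n).1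
  set g := gaussMap^[n + 1] ρ
  set q := qDen ρ n
  set Q := qDen ρ (n + 1)
  set p := pNum ρ n
  set P := pNum ρ (n + 1)
  set e : ℤ := (-1) ^ n with he
  have hee : e * e = 1 := by rw [he, ← mul_pow]; simp
  -- coordinates
  obtain ⟨u, hu⟩ : ∃ u : ℤ, u = e * (m * P - r * Q) := ⟨_, rfl⟩
  obtain ⟨v, hv⟩ : ∃ v : ℤ, v = e * (q * r - p * m) := ⟨_, rfl⟩
  have c1 : (m : ℤ) = u * q + v * Q := by
    rw [hu, hv]; linear_combination (-m : ℤ) * hee - e * m * hdet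
  have c2 : r = u * p + v * P := by
    rw [hu, hv]; linear_combination (-r : ℤ) * hee - e * r * hdet
  have c1r : (m : ℝ) = u * q + v * Q := by exact_mod_cast c1
  have c2r : (r : ℝ) = u * p + v * P := by exact_mod_cast c2
  have eq : (m : ℝ) * ρ - r = (u - v * g) * (q * ρ - p) := by
    rw [c1r, c2r]; linear_combination (v : ℝ) * hrec
  rw [eq, abs_mul]
  have key : 1 ≤ |(u : ℝ) - v * g| := by
    have hq' : (0 : ℤ) < q := by exact_mod_cast hq
    have hm' : (0 : ℤ) < m := by exact_mod_cast hm
    have hmQ' : (m : ℤ) < Q := by exact_mod_cast hmQ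
    have hu0 : u ≠ 0 := by
      rintro h0
      rw [h0] at c1
      rcases le_or_gt v 0 with h | h <;> nlinarith
    rcases lt_or_gt_of_ne hu0 with h | h
    · have hv0 : 0 ≤ v := by
        by_contra hc; push Not at hc; nlinarith
      have a1 : (u : ℝ) ≤ -1 := by exact_mod_cast (by omega : u ≤ -1)
      have a2 : (0 : ℝ) ≤ v := by exact_mod_cast hv0
      rw [le_abs]; right
      nlinarith
    · have hv0 : v ≤ 0 := by
        by_contra hc; push Not at hc; nlinarith
      have a1 : (1 : ℝ) ≤ u := by exact_mod_cast (by omega : 1 ≤ u)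
      have a2 : (v : ℝ) ≤ 0 := by exact_mod_cast hv0
      rw [le_abs]; left
      nlinarith
  have := abs_nonneg ((q : ℝ) * ρ - p)
  nlinarith
end CF

/-! ### Mirror -/

lemma mirror_iter (F : ℝ → ℝ) (m : ℕ) (x : ℝ) :
    (fun x => - F (-x))^[m] x = - F^[m] (-x) := by
  induction m generalizing x with
  | zero => simp
  | succ m ih => rw [Function.iterate_succ_apply, ih, Function.iterate_succ_apply, neg_neg]

lemma mirror_ord {F : ℝ → ℝ} {ρ : ℝ} (ho : ROrd F ρ) : ROrd (fun x => - F (-x)) (-ρ) := by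
  intro m p
  constructor
  · intro h x
    have := (ho m (-p)).2 (by push_cast; linarith) (-x)
    rw [mirror_iter]; push_cast at this; linarith
  · intro h x
    have := (ho m (-p)).1 (by push_cast; linarith) (-x)
    rw [mirror_iter]; push_cast at this; linarith

lemma cr_neg (a b c d : ℝ) : cr (-d) (-c) (-b) (-a) = cr a b c d := by
  unfold cr; congr 1 <;> ring

lemma mirror_crb {F : ℝ → ℝ} {N : ℕ} {cp : Fin N → ℝ} {K L : ℝ} (h : CRB F cp K L) :
    CRB (fun x => - F (-x)) (fun i => - cp i) K L := by
  intro a b c d h1 h2 h3 h4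
  obtain ⟨g1, g2⟩ := h (-d) (-c) (-b) (-a) (by linarith) (by linarith) (by linarith) (by linarith)
  rw [cr_neg] at g1 g2
  have e : cr (-F (-a)) (-F (-b)) (-F (-c)) (-F (-d)) =
      cr (F (-d)) (F (-c)) (F (-b)) (F (-a)) := by rw [cr_neg]
  simp only [e]
  refine ⟨g1, fun hn => ?_⟩
  have := g2 (fun i k hk => hn i (-k) (by
    push_cast
    exact ⟨by linarith [hk.2], by linarith [hk.1]⟩))
  rwa [show -a - -d = d - a by ring] at this

lemma rord_of {F : ℝ → ℝ} (hF : StrictMono F) (hd : ∀ x, F (x + 1) = F x + 1) {ρ : ℝ}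
    (hrot : HasRotationNumber F ρ) : ROrd F ρ := by
  let G : CircleDeg1Lift := ⟨⟨F, hF.monotone⟩, hd⟩
  have hG : ∀ n x, (G ^ n) x = F^[n] x := fun n x => by rw [CircleDeg1Lift.coe_pow]; rfl
  have ht : CircleDeg1Lift.translationNumber G = ρ := by
    apply CircleDeg1Lift.translationNumber_eq_of_tendsto₀
    exact hrot
  intro m p
  have hp := CircleDeg1Lift.translationNumber_pow G m
  rw [ht] at hp
  constructor
  · intro h x
    rw [← hG]
    exact CircleDeg1Lift.lt_map_of_int_lt_translationNumber _ (by rw [hp]; exact h) x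
  · intro h x
    rw [← hG]
    exact CircleDeg1Lift.map_lt_of_translationNumber_lt_int _ (by rw [hp]; exact h) x

theorem final {F : ℝ → ℝ} (hF : StrictMono F) (hc : Continuous F) (hd : ∀ x, F (x + 1) = F x + 1)
    {ρ : ℝ} (hirr : Irrational ρ) (hmem : ρ ∈ Set.Ioo (0 : ℝ) 1) (hrot : HasRotationNumber F ρ)
    {N : ℕ} {cp : Fin N → ℝ} {K L : ℝ} (hK : 1 ≤ K) (hL : 0 ≤ L) (crb : CRB F cp K L)
    (n : ℕ) (x y : ℝ) (hxy : F^[qDen ρ n] y - (pNum ρ n : ℝ) = x) :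
    |x - y| ≤ Cc N K L * |F^[qDen ρ n] x - (pNum ρ n : ℝ) - x| ∧
      |F^[qDen ρ n] x - (pNum ρ n : ℝ) - x| ≤ Cc N K L * |x - y| := by
  have ho := rord_of hF hd hrot
  have hrec := theta_rec hirr hmem n
  obtain ⟨t0, t1⟩ := theta_facts hirr hmem n
  have best := best_approx hirr hmem n
  obtain ⟨_, g0, g1⟩ := gauss_facts hirr hmem (n + 1)
  have hqQ := (qDen_pos hirr hmem n).2
  have hQ := (qDen_pos hirr hmem (n + 1)).1
  set g := gaussMap^[n + 1] ρ
  set q := qDen ρ n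
  set Q := qDen ρ (n + 1)
  set p := pNum ρ n
  set P := pNum ρ (n + 1)
  rcases lt_or_gt_of_ne t0 with hneg | hpos
  · have hF' : StrictMono (fun x => - F (-x)) := fun a b hab => by
      have := hF (neg_lt_neg hab); simp only; linarith
    have hc' : Continuous (fun x => - F (-x)) := (hc.comp continuous_neg).neg
    have hd' : ∀ x, (fun x => - F (-x)) (x + 1) = (fun x => - F (-x)) x + 1 := fun x => by
      have := hd (-(x + 1))
      rw [show -(x + 1) + 1 = -x by ring] at this
      simp only; linarith
    rw [abs_of_neg hneg] at t1 best
    have := core hF' hc' hd' hirr.neg (mirror_ord ho) (q := q) (Q := Q) (p := -(p : ℤ))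
      (P := -(P : ℤ)) hQ hqQ (by push_cast; linarith) (by push_cast; linarith)
      (by push_cast; nlinarith) (by push_cast; nlinarith)
      (fun m h1 h2 r => by
        have := best m h1 h2 (-r)
        rw [← abs_neg] at this
        push_cast at this ⊢
        rw [show (m : ℝ) * -ρ - r = -(m * ρ - -r) by ring]
        linarith)
      hK hL (mirror_crb crb) (x := -x) (y := -y)
      (by rw [mirror_iter]; push_cast; rw [neg_neg]; linarith)
    rw [mirror_iter, neg_neg] at this
    push_cast at this
    obtain ⟨r1, r2, r3, r4⟩ := this
    rw [abs_of_nonpos (by linarith), abs_of_nonpos (by linarith)]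
    constructor
    · refine le_trans (by linarith) (r1.trans (le_of_eq (by ring)))
    · refine le_trans (by linarith) (r2.trans (le_of_eq (by ring)))
  · rw [abs_of_pos hpos] at t1 best
    have := core hF hc hd hirr ho (q := q) (Q := Q) (p := (p : ℤ))
      (P := (P : ℤ)) hQ hqQ (by push_cast; linarith) (by push_cast; linarith)
      (by push_cast; nlinarith) (by push_cast; nlinarith)
      (fun m h1 h2 r => by push_cast; exact best m h1 h2 r)
      hK hL crb (x := x) (y := y) (by push_cast; linarith)
    push_cast at this
    obtain ⟨r1, r2, r3, r4⟩ := this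
    rw [abs_of_nonneg r3, abs_of_nonneg r4]
    exact ⟨r1, r2⟩

/-! ### Negative Schwarzian -/

lemma schw1 {f : ℝ → ℝ} (hf : ContDiff ℝ 3 f) (hm : StrictMono f) {x y : ℝ} (hyx : y < x)
    (hpos : ∀ t ∈ Icc y x, 0 < deriv f t) (hS : ∀ t ∈ Icc y x, schwarzianDeriv f t < 0) :
    deriv f x * deriv f y * (x - y) ^ 2 ≤ (f x - f y) ^ 2 := by
  have hf1 : ContDiff ℝ 2 (deriv f) := hf.deriv'
  have hf2 : ContDiff ℝ 1 (deriv (deriv f)) := hf1.deriv'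
  set D := deriv f with hD
  set D2 := deriv D with hD2
  have d0 : ∀ t, HasDerivAt f (D t) t := fun t =>
    ((hf.differentiable (by norm_num)) t).hasDerivAt
  have d1 : ∀ t, HasDerivAt D (D2 t) t := fun t =>
    ((hf1.differentiable (by norm_num)) t).hasDerivAt
  have d2 : ∀ t, HasDerivAt D2 (deriv D2 t) t := fun t =>
    ((hf2.differentiable (by norm_num)) t).hasDerivAt
  set Nn : ℝ → ℝ := fun t => D2 t / D t with hN
  set φ : ℝ → ℝ := fun t => Real.exp (-(1 / 2) * Real.log (D t)) with hφ
  have dφ : ∀ t ∈ Icc y x, HasDerivAt φ (-(1 / 2) * Nn t * φ t) t := by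
    intro t ht
    have := (((d1 t).log (hpos t ht).ne').const_mul (-(1 / 2))).exp
    convert this using 1
    simp only [hφ, hN]; ring
  have dN : ∀ t ∈ Icc y x, HasDerivAt Nn (deriv Nn t) t := by
    intro t ht
    exact ((d2 t).div (d1 t) (hpos t ht).ne').differentiableAt.hasDerivAt
  set g : ℝ → ℝ := fun t => (f t - f y) * φ t with hg
  set g1 : ℝ → ℝ := fun t => D t * φ t + (f t - f y) * (-(1 / 2) * Nn t * φ t) with hg1
  have dg : ∀ t ∈ Icc y x, HasDerivAt g (g1 t) t := by
    intro t ht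
    exact ((d0 t).sub_const (f y)).mul (dφ t ht)
  have dg1 : ∀ t ∈ Icc y x,
      HasDerivAt g1 ((f t - f y) * φ t * (-(1 / 2) * schwarzianDeriv f t)) t := by
    intro t ht
    have h1 := ((d1 t).mul (dφ t ht)).add
      (((d0 t).sub_const (f y)).mul (((dN t ht).const_mul (-(1 / 2))).mul (dφ t ht)))
    refine HasDerivAt.congr_deriv (f' := _) h1 ?_
    have e : schwarzianDeriv f t = deriv Nn t - (1 / 2) * (Nn t) ^ 2 := rfl
    have e2 : D2 t = D t * Nn t := by
      simp only [hN]; field_simp [(hpos t ht).ne']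
    simp only [Pi.mul_apply]
    rw [e, e2]; ring
  have hφpos : ∀ t, 0 < φ t := fun t => Real.exp_pos _
  have mono : MonotoneOn g1 (Icc y x) := by
    apply monotoneOn_of_deriv_nonneg (convex_Icc y x)
    · exact fun t ht => (dg1 t ht).continuousAt.continuousWithinAt
    · exact fun t ht => (dg1 t (interior_subset ht)).differentiableAt.differentiableWithinAt
    · intro t ht
      have ht' := interior_subset ht
      rw [(dg1 t ht').deriv]
      have h1 : 0 ≤ f t - f y := sub_nonneg.2 (hm.monotone ht'.1)
      have h2 := hS t ht'
      have h3 := hφpos t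
      have h4 : 0 ≤ -(1 / 2) * schwarzianDeriv f t := by linarith
      positivity
  have key := Convex.mul_sub_le_image_sub_of_le_deriv (convex_Icc y x)
    (fun t ht => (dg t ht).continuousAt.continuousWithinAt)
    (fun t ht => (dg t (interior_subset ht)).differentiableAt.differentiableWithinAt)
    (C := g1 y) (fun t ht => by
      have ht' := interior_subset ht
      rw [(dg t ht').deriv]
      exact mono (left_mem_Icc.2 hyx.le) ht' ht'.1)
    y (left_mem_Icc.2 hyx.le) x (right_mem_Icc.2 hyx.le) hyx.le
  have e1 : g1 y = D y * φ y := by simp [hg1]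
  have e2 : g y = 0 := by simp [hg]
  rw [e1, e2, sub_zero] at key
  have sq : ∀ t ∈ Icc y x, D t * φ t ^ 2 = 1 := by
    intro t ht
    have : φ t ^ 2 = Real.exp (- Real.log (D t)) := by
      simp only [hφ]; rw [← Real.exp_nat_mul]; congr 1; push_cast; ring
    rw [this, Real.exp_neg, Real.exp_log (hpos t ht)]
    exact mul_inv_cancel₀ (hpos t ht).ne'
  have sx := sq x (right_mem_Icc.2 hyx.le)
  have sy := sq y (left_mem_Icc.2 hyx.le)
  have px := hpos x (right_mem_Icc.2 hyx.le)
  have py := hpos y (left_mem_Icc.2 hyx.le)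
  have h0 : 0 ≤ D y * φ y * (x - y) := by
    have := hφpos y
    have : 0 ≤ x - y := by linarith
    positivity
  have key2 := mul_le_mul key key h0 (h0.trans key)
  have key3 := mul_le_mul_of_nonneg_left key2 px.le
  simp only [hg] at key3
  calc D x * D y * (x - y) ^ 2 = D x * (D y * φ y * (x - y) * (D y * φ y * (x - y))) := by
        linear_combination (-(D x * D y * (x - y) ^ 2)) * sy
    _ ≤ _ := key3
    _ = (f x - f y) ^ 2 := by linear_combination ((f x - f y) ^ 2) * sx

lemma schw2 {f : ℝ → ℝ} (hf : ContDiff ℝ 3 f) (hm : StrictMono f) {a b c d : ℝ}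
    (h1 : a < b) (h2 : b < c) (h3 : c < d)
    (hpos : ∀ t ∈ Icc a d, 0 < deriv f t) (hS : ∀ t ∈ Icc a d, schwarzianDeriv f t < 0) :
    cr (f a) (f b) (f c) (f d) ≤ cr a b c d := by
  have d0 : ∀ t, HasDerivAt f (deriv f t) t := fun t =>
    ((hf.differentiable (by norm_num)) t).hasDerivAt
  have A : ∀ t ∈ Icc c d, AntitoneOn (fun x => deriv f t / (f t - f x) - 1 / (t - x)) (Icc a b) := by
    intro t ht
    have hd : ∀ x ∈ Icc a b, HasDerivAt (fun x => deriv f t / (f t - f x) - 1 / (t - x))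
        (deriv f t * deriv f x / (f t - f x) ^ 2 - 1 / (t - x) ^ 2) x := by
      intro x hx
      have hxt : x < t := by linarith [hx.2, ht.1]
      have n1 : f t - f x ≠ 0 := (sub_pos.2 (hm hxt)).ne'
      have n2 : t - x ≠ 0 := (sub_pos.2 hxt).ne'
      have k1 := (hasDerivAt_const x (deriv f t)).div ((d0 x).const_sub (f t)) n1
      have k2 := (hasDerivAt_const x (1 : ℝ)).div ((hasDerivAt_id x).const_sub t) n2
      refine HasDerivAt.congr_deriv (f' := _) (k1.sub k2) ?_
      simp
    apply antitoneOn_of_deriv_nonpos (convex_Icc a b)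
    · exact fun x hx => (hd x hx).continuousAt.continuousWithinAt
    · exact fun x hx => (hd x (interior_subset hx)).differentiableAt.differentiableWithinAt
    · intro x hx
      have hx' := interior_subset hx
      rw [(hd x hx').deriv]
      have hxt : x < t := by linarith [hx'.2, ht.1]
      have sub : Icc x t ⊆ Icc a d := Icc_subset_Icc hx'.1 ht.2
      have := schw1 hf hm hxt (fun s hs => hpos s (sub hs)) (fun s hs => hS s (sub hs))
      have n1 : 0 < f t - f x := sub_pos.2 (hm hxt)
      have n2 : 0 < t - x := sub_pos.2 hxt
      rw [sub_nonpos, div_le_div_iff₀ (by positivity) (by positivity)]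
      linarith
  set k : ℝ → ℝ := fun t => (Real.log (f t - f a) - Real.log (t - a)) -
    (Real.log (f t - f b) - Real.log (t - b)) with hk
  have dk : ∀ t ∈ Icc c d, HasDerivAt k ((deriv f t / (f t - f a) - 1 / (t - a)) -
      (deriv f t / (f t - f b) - 1 / (t - b))) t := by
    intro t ht
    have hbt : b < t := by linarith [ht.1]
    have hat : a < t := by linarith
    have n1 : f t - f a ≠ 0 := (sub_pos.2 (hm hat)).ne'
    have n2 : t - a ≠ 0 := (sub_pos.2 hat).ne'
    have n3 : f t - f b ≠ 0 := (sub_pos.2 (hm hbt)).ne'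
    have n4 : t - b ≠ 0 := (sub_pos.2 hbt).ne'
    exact ((((d0 t).sub_const (f a)).log n1).sub (((hasDerivAt_id t).sub_const a).log n2)).sub
      ((((d0 t).sub_const (f b)).log n3).sub (((hasDerivAt_id t).sub_const b).log n4))
  have mono : MonotoneOn k (Icc c d) := by
    apply monotoneOn_of_deriv_nonneg (convex_Icc c d)
    · exact fun t ht => (dk t ht).continuousAt.continuousWithinAt
    · exact fun t ht => (dk t (interior_subset ht)).differentiableAt.differentiableWithinAt
    · intro t ht
      have ht' := interior_subset ht
      rw [(dk t ht').deriv, sub_nonneg]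
      exact A t ht' (left_mem_Icc.2 h1.le) (right_mem_Icc.2 h1.le) h1.le
  have kk := mono (left_mem_Icc.2 h3.le) (right_mem_Icc.2 h3.le) h3.le
  simp only [hk] at kk
  have f1 := sub_pos.2 (hm h1)
  have f2 := sub_pos.2 (hm h2)
  have f3 := sub_pos.2 (hm h3)
  have x1 := sub_pos.2 h1
  have x2 := sub_pos.2 h2
  have x3 := sub_pos.2 h3
  have p1 : 0 < f c - f a := by linarith
  have p2 : 0 < f d - f b := by linarith
  have p3 : 0 < f d - f a := by linarith
  have r1 : 0 < c - a := by linarith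
  have r2 : 0 < d - b := by linarith
  have r3 : 0 < d - a := by linarith
  have L : Real.log ((f c - f a) * (c - b) * ((f d - f b) * (d - a))) ≤
      Real.log ((f d - f a) * (d - b) * ((f c - f b) * (c - a))) := by
    rw [Real.log_mul (by positivity) (by positivity), Real.log_mul (by positivity) (by positivity),
      Real.log_mul (by positivity) (by positivity), Real.log_mul (by positivity) (by positivity),
      Real.log_mul (by positivity) (by positivity), Real.log_mul (by positivity) (by positivity)]
    linarith
  rw [Real.log_le_log_iff (by positivity) (by positivity)] at L
  unfold cr
  rw [div_le_div_iff₀ (by positivity) (by positivity)]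
  nlinarith

/-! ### Local estimates -/

lemma uniform_of_local (P : ℝ → ℝ → ℝ → Prop)
    (mono : ∀ K K' u v, K ≤ K' → u < v → P K u v → P K' u v)
    (per : ∀ K u v (k : ℤ), P K u v → P K (u + k) (v + k))
    (loc : ∀ x0 : ℝ, ∃ r > 0, ∃ K, ∀ u v, |u - x0| < r → |v - x0| < r → u < v → P K u v) :
    ∃ δ > 0, ∃ K, ∀ u v, u < v → v < u + δ → P K u v := by
  have : ∃ δ > 0, ∃ K, ∀ u ∈ Icc (0 : ℝ) 1, ∀ v, u < v → v < u + δ → P K u v := by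
    refine isCompact_Icc.induction_on
      (p := fun s => ∃ δ > 0, ∃ K, ∀ u ∈ s, ∀ v, u < v → v < u + δ → P K u v) ?_ ?_ ?_ ?_
    · exact ⟨1, one_pos, 0, by simp⟩
    · rintro s t hst ⟨δ, hδ, K, h⟩
      exact ⟨δ, hδ, K, fun u hu => h u (hst hu)⟩
    · rintro s t ⟨δ, hδ, K, h⟩ ⟨δ', hδ', K', h'⟩
      refine ⟨min δ δ', lt_min hδ hδ', max K K', fun u hu v huv hv => ?_⟩
      have m1 := min_le_left δ δ'
      have m2 := min_le_right δ δ'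
      rcases hu with hu | hu
      · exact mono _ _ _ _ (le_max_left _ _) huv (h u hu v huv (by linarith))
      · exact mono _ _ _ _ (le_max_right _ _) huv (h' u hu v huv (by linarith))
    · intro x _
      obtain ⟨r, hr, K, h⟩ := loc x
      refine ⟨Metric.ball x (r / 2), mem_nhdsWithin_of_mem_nhds (Metric.ball_mem_nhds x (by linarith)),
        r / 2, by linarith, K, fun u hu v huv hv => ?_⟩
      rw [Metric.mem_ball, Real.dist_eq, abs_lt] at hu
      apply h u v _ _ huv
      · rw [abs_lt]; constructor <;> linarith
      · rw [abs_lt]; constructor <;> linarith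
  obtain ⟨δ, hδ, K, h⟩ := this
  refine ⟨δ, hδ, K, fun u v huv hv => ?_⟩
  have e : (⌊u⌋ : ℝ) + Int.fract u = u := Int.floor_add_fract u
  have := per K _ _ ⌊u⌋ (h (Int.fract u) ⟨Int.fract_nonneg u, (Int.fract_lt_one u).le⟩
    (v - ⌊u⌋) (by linarith) (by linarith))
  rw [sub_add_cancel, add_comm, e] at this
  exact this

namespace MCM
variable (f : MCM)

lemma hasD (t : ℝ) : HasDerivAt f.F (deriv f.F t) t :=
  ((f.smooth.differentiable (by norm_num)) t).hasDerivAt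

lemma contD : Continuous (deriv f.F) := f.smooth.continuous_deriv (by norm_num)

lemma deriv_per (x : ℝ) (k : ℤ) : deriv f.F (x + k) = deriv f.F x := by
  have h1 : HasDerivAt (fun y => f.F (y + k)) (deriv f.F (x + k)) x :=
    (f.hasD (x + k)).comp_add_const x k
  have h2 : HasDerivAt (fun y => f.F (y + k)) (deriv f.F x) x := by
    have : (fun y => f.F (y + k)) = fun y => f.F y + k := funext fun y => map_add_int' f.deg1 y k
    rw [this]; exact (f.hasD x).add_const _
  exact h1.unique h2

lemma deriv_nonneg' (x : ℝ) : 0 ≤ deriv f.F x := f.mono.monotone.deriv_nonneg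

lemma le_sub {u v m : ℝ} (huv : u ≤ v) (h : ∀ t ∈ Icc u v, m ≤ deriv f.F t) :
    m * (v - u) ≤ f.F v - f.F u :=
  Convex.mul_sub_le_image_sub_of_le_deriv (convex_Icc u v)
    (fun t _ => (f.hasD t).continuousAt.continuousWithinAt)
    (fun t _ => (f.hasD t).differentiableAt.differentiableWithinAt)
    (fun t ht => h t (interior_subset ht)) u (left_mem_Icc.2 huv) v (right_mem_Icc.2 huv) huv

lemma mvt {u v : ℝ} (huv : u < v) : ∃ t ∈ Icc u v, f.F v - f.F u = deriv f.F t * (v - u) := by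
  obtain ⟨t, ht, h⟩ := exists_deriv_eq_slope f.F huv f.smooth.continuous.continuousOn
    (fun t _ => (f.hasD t).differentiableAt.differentiableWithinAt)
  refine ⟨t, Ioo_subset_Icc_self ht, ?_⟩
  rw [h]; field_simp [(sub_pos.2 huv).ne']

/-- the basic estimate -/
def G (K u v : ℝ) : Prop := ∀ t ∈ Icc u v, deriv f.F t * (v - u) ≤ K * (f.F v - f.F u)

lemma G_per (K u v : ℝ) (k : ℤ) (h : f.G K u v) : f.G K (u + k) (v + k) := by
  intro t ht
  have := h (t - k) ⟨by linarith [ht.1], by linarith [ht.2]⟩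
  have e := f.deriv_per (t - k) k
  rw [sub_add_cancel] at e
  rw [map_add_int' f.deg1, map_add_int' f.deg1, e]
  calc _ = deriv f.F (t - k) * (v - u) := by ring
    _ ≤ _ := this
    _ = _ := by ring

lemma exists_ball (i : Fin f.N) : ∃ r > 0, ∀ x, |x - f.c i| < r → x ∈ f.W i := by
  obtain ⟨r, hr, h⟩ := Metric.isOpen_iff.1 (f.W_open i) _ (f.c_mem_W i)
  exact ⟨r, hr, fun x hx => h (by rwa [Metric.mem_ball, Real.dist_eq])⟩

lemma G_crit (i : Fin f.N) :
    ∃ r > 0, ∃ K, ∀ u v, |u - f.c i| < r → |v - f.c i| < r → u < v → f.G K u v := by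
  obtain ⟨r, hr, hW⟩ := f.exists_ball i
  have hs : 0 < f.s i - 1 := by linarith [f.s_gt_one i]
  have ha := f.al_pos i
  have hb : 0 < f.be i := ha.trans (f.al_lt_be i)
  set σ := f.s i - 1
  set c := f.c i with hc
  have lo : ∀ x, |x - c| < r → f.al i * |x - c| ^ σ ≤ deriv f.F x := by
    intro x hx
    rcases eq_or_ne x c with h | h
    · rw [h, sub_self, abs_zero, Real.zero_rpow hs.ne', mul_zero]; exact f.deriv_nonneg' _
    · exact (f.powerLaw i x (hW x hx) h).1.le
  have up : ∀ x, |x - c| < r → deriv f.F x ≤ f.be i * |x - c| ^ σ := by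
    intro x hx
    rcases eq_or_ne x c with h | h
    · rw [h, sub_self, abs_zero, Real.zero_rpow hs.ne', mul_zero, hc, f.isCrit i]
    · exact (f.powerLaw i x (hW x hx) h).2.le
  refine ⟨r, hr, f.be i * 2 ^ σ * 4 / f.al i, fun u v hu hv huv t ht => ?_⟩
  set M := max |u - c| |v - c| with hM
  have hMr : M < r := max_lt hu hv
  have M1 : |u - c| ≤ M := le_max_left _ _
  have M2 : |v - c| ≤ M := le_max_right _ _
  have M0 : 0 ≤ M := (abs_nonneg _).trans M1
  rw [abs_le] at M1 M2
  have htM : |t - c| ≤ M := by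
    rw [abs_le]; constructor <;> linarith [ht.1, ht.2]
  have hup : deriv f.F t ≤ f.be i * M ^ σ :=
    (up t (htM.trans_lt hMr)).trans (by gcongr)
  have low : f.al i * (M / 2) ^ σ * ((v - u) / 4) ≤ f.F v - f.F u := by
    rcases le_total |u - c| |v - c| with h | h
    · have eM : M = |v - c| := max_eq_right h
      rcases le_total 0 (v - c) with h0 | h0
      · rw [abs_of_nonneg h0] at eM
        have := f.le_sub (u := (u + 3 * v) / 4) (v := v) (m := f.al i * (M / 2) ^ σ)
          (by linarith) (fun s hs' => by
            have s1 : M / 2 ≤ |s - c| := le_trans (by linarith [hs'.1]) (le_abs_self _)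
            refine le_trans ?_ (lo s ?_)
            · gcongr
            · refine lt_of_le_of_lt ?_ hMr
              rw [abs_le]; constructor <;> linarith [hs'.1, hs'.2])
        have mm := f.mono.monotone (show u ≤ (u + 3 * v) / 4 by linarith)
        calc _ = f.al i * (M / 2) ^ σ * (v - (u + 3 * v) / 4) := by ring
          _ ≤ _ := this
          _ ≤ _ := by linarith
      · exfalso
        rw [abs_of_nonpos h0, abs_of_nonpos (by linarith)] at h
        linarith
    · have eM : M = |u - c| := max_eq_left h
      rcases le_total 0 (u - c) with h0 | h0
      · exfalso
        rw [abs_of_nonneg h0, abs_of_nonneg (by linarith)] at h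
        linarith
      · rw [abs_of_nonpos h0] at eM
        have := f.le_sub (u := u) (v := (3 * u + v) / 4) (m := f.al i * (M / 2) ^ σ)
          (by linarith) (fun s hs' => by
            have s1 : M / 2 ≤ |s - c| := le_trans (by linarith [hs'.2]) (neg_le_abs _)
            refine le_trans ?_ (lo s ?_)
            · gcongr
            · refine lt_of_le_of_lt ?_ hMr
              rw [abs_le]; constructor <;> linarith [hs'.1, hs'.2])
        have mm := f.mono.monotone (show (3 * u + v) / 4 ≤ v by linarith)
        calc _ = f.al i * (M / 2) ^ σ * ((3 * u + v) / 4 - u) := by ring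
          _ ≤ _ := this
          _ ≤ _ := by linarith
  have e2 : (M / 2) ^ σ = M ^ σ / 2 ^ σ := Real.div_rpow M0 (by norm_num) σ
  rw [e2] at low
  have two : (0 : ℝ) < 2 ^ σ := by positivity
  calc deriv f.F t * (v - u) ≤ f.be i * M ^ σ * (v - u) :=
        mul_le_mul_of_nonneg_right hup (by linarith)
    _ = f.be i * 2 ^ σ * 4 / f.al i * (f.al i * (M ^ σ / 2 ^ σ) * ((v - u) / 4)) := by
        field_simp
    _ ≤ _ := mul_le_mul_of_nonneg_left low (by positivity)

lemma G_loc (x0 : ℝ) :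
    ∃ r > 0, ∃ K, ∀ u v, |u - x0| < r → |v - x0| < r → u < v → f.G K u v := by
  by_cases h0 : deriv f.F x0 = 0
  · obtain ⟨i, k, rfl⟩ := f.critOnly x0 h0
    obtain ⟨r, hr, K, h⟩ := f.G_crit i
    refine ⟨r, hr, K, fun u v hu hv huv => ?_⟩
    have := f.G_per K _ _ k (h (u - k) (v - k) (by rwa [sub_sub, add_comm (k : ℝ)])
      (by rwa [sub_sub, add_comm (k : ℝ)]) (by linarith))
    simpa using this
  · have hp : 0 < deriv f.F x0 := lt_of_le_of_ne (f.deriv_nonneg' _) (Ne.symm h0)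
    obtain ⟨r, hr, h⟩ := Metric.continuous_iff.1 f.contD x0 (deriv f.F x0 / 2) (by linarith)
    refine ⟨r, hr, 3, fun u v hu hv huv t ht => ?_⟩
    have near : ∀ s ∈ Icc u v, |deriv f.F s - deriv f.F x0| < deriv f.F x0 / 2 := by
      intro s hs
      have := h s (by
        rw [Real.dist_eq, abs_lt]
        rw [abs_lt] at hu hv
        constructor <;> linarith [hs.1, hs.2, hu.1, hv.2])
      rwa [Real.dist_eq] at this
    have low := f.le_sub (m := deriv f.F x0 / 2) huv.le (fun s hs => by
      have := near s hs; rw [abs_lt] at this; linarith [this.1])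
    have := near t ht
    rw [abs_lt] at this
    nlinarith [this.2]

lemma G_unif : ∃ K, 1 ≤ K ∧ ∀ u v, u < v → v ≤ u + 4 → f.G K u v := by
  obtain ⟨δ, hδ, K, h⟩ := uniform_of_local f.G (fun K K' u v hK huv h t ht =>
    (h t ht).trans (mul_le_mul_of_nonneg_right hK (sub_nonneg.2 (f.mono huv).le)))
    f.G_per f.G_loc
  obtain ⟨z, hz⟩ := exists_min (g := fun x => f.F (x + δ) - f.F x)
    ((f.smooth.continuous.comp (continuous_id.add continuous_const)).sub f.smooth.continuous)
    (fun x => by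
      have : x + 1 + δ = x + δ + 1 := by ring
      rw [this, f.deg1, f.deg1]; ring)
  obtain ⟨m, hm⟩ := exists_min (g := fun x => - deriv f.F x) f.contD.neg (fun x => by
    have := f.deriv_per x 1
    push_cast at this; rw [this])
  have hη : 0 < f.F (z + δ) - f.F z := sub_pos.2 (f.mono (by linarith))
  set η := f.F (z + δ) - f.F z
  set A := deriv f.F m
  have hA : 0 ≤ A := f.deriv_nonneg' m
  refine ⟨max 1 (max K (A * 4 / η)), le_max_left _ _, fun u v huv hv t ht => ?_⟩
  have hFF : 0 < f.F v - f.F u := sub_pos.2 (f.mono huv)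
  rcases lt_or_ge v (u + δ) with hd | hd
  · exact (h u v huv hd t ht).trans (mul_le_mul_of_nonneg_right
      ((le_max_left _ _).trans (le_max_right _ _)) hFF.le)
  · have h1 : η ≤ f.F v - f.F u := by
      have := hz u
      have := f.mono.monotone hd
      linarith
    have h2 : deriv f.F t ≤ A := by have := hm t; linarith
    calc deriv f.F t * (v - u) ≤ A * 4 :=
          mul_le_mul h2 (by linarith) (by linarith) hA
      _ = A * 4 / η * η := by field_simp
      _ ≤ A * 4 / η * (f.F v - f.F u) := mul_le_mul_of_nonneg_left h1 (by positivity)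
      _ ≤ _ := mul_le_mul_of_nonneg_right
        ((le_max_right _ _).trans (le_max_right _ _)) hFF.le

lemma exists_max_Icc {u v : ℝ} (h : u ≤ v) :
    ∃ t ∈ Icc u v, ∀ s ∈ Icc u v, deriv f.F s ≤ deriv f.F t := by
  obtain ⟨t, ht, hm⟩ := isCompact_Icc.exists_isMaxOn (nonempty_Icc.2 h) f.contD.continuousOn
  exact ⟨t, ht, fun s hs => hm hs⟩

lemma cr_K : ∃ K, 1 ≤ K ∧ ∀ a b c d : ℝ, a < b → b < c → c < d → d ≤ a + 4 →
    cr (f.F a) (f.F b) (f.F c) (f.F d) ≤ K * cr a b c d := by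
  obtain ⟨K, hK, h⟩ := f.G_unif
  refine ⟨K * K, by nlinarith, fun a b c d h1 h2 h3 h4 => ?_⟩
  obtain ⟨t, ht, e1⟩ := f.mvt h1
  obtain ⟨s, hs, e2⟩ := f.mvt h3
  have g1 := h a c (by linarith) (by linarith) t ⟨ht.1, by linarith [ht.2]⟩
  have g2 := h b d (by linarith) (by linarith) s ⟨by linarith [hs.1], hs.2⟩
  have p1 : 0 < f.F c - f.F a := sub_pos.2 (f.mono (by linarith))
  have p2 : 0 < f.F d - f.F b := sub_pos.2 (f.mono (by linarith))
  have r1 : 0 < c - a := by linarith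
  have r2 : 0 < d - b := by linarith
  unfold cr
  rw [e1, e2, ← mul_div_assoc, div_le_div_iff₀ (by positivity) (by positivity)]
  have := mul_le_mul g1 g2 (mul_nonneg (f.deriv_nonneg' s) r2.le) (by positivity)
  have q : 0 ≤ (b - a) * (d - c) := mul_nonneg (by linarith) (by linarith)
  have := mul_le_mul_of_nonneg_left this q
  calc _ = (b - a) * (d - c) * (deriv f.F t * (c - a) * (deriv f.F s * (d - b))) := by ring
    _ ≤ _ := this
    _ = _ := by ring

/-- estimate away from critical points -/
def H (L u v : ℝ) : Prop := (∀ i, ∀ k : ℤ, f.c i + (k : ℝ) ∉ Icc u v) →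
  ∀ b c, u < b → b < c → c < v →
    cr (f.F u) (f.F b) (f.F c) (f.F v) ≤ Real.exp (L * (v - u)) * cr u b c v

lemma cr_add (a b c d s : ℝ) : cr (a + s) (b + s) (c + s) (d + s) = cr a b c d := by
  unfold cr; congr 1 <;> ring

lemma H_per (L u v : ℝ) (k : ℤ) (h : f.H L u v) : f.H L (u + k) (v + k) := by
  intro hn b c h1 h2 h3
  have := h (fun i j hj => hn i (j + k) (by
    push_cast
    exact ⟨by linarith [hj.1], by linarith [hj.2]⟩)) (b - k) (c - k) (by linarith) (by linarith)
    (by linarith)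
  have e : ∀ x : ℝ, f.F x = f.F (x - k) + k := fun x => by
    rw [← map_add_int' f.deg1, sub_add_cancel]
  rw [map_add_int' f.deg1, map_add_int' f.deg1, e b, e c, cr_add,
    show v + k - (u + k) = v - u by ring]
  rwa [← cr_add u _ _ v (k : ℝ), sub_add_cancel, sub_add_cancel] at this

lemma H_loc (x0 : ℝ) :
    ∃ r > 0, ∃ L, ∀ u v, |u - x0| < r → |v - x0| < r → u < v → f.H L u v := by
  by_cases h0 : deriv f.F x0 = 0
  · obtain ⟨i, k, rfl⟩ := f.critOnly x0 h0
    obtain ⟨r, hr, hW⟩ := f.exists_ball i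
    refine ⟨r, hr, 0, fun u v hu hv huv => ?_⟩
    have base : f.H 0 (u - k) (v - k) := by
      intro hn b c h1 h2 h3
      rw [zero_mul, Real.exp_zero, one_mul]
      have hw : ∀ t ∈ Icc (u - k) (v - k), t ∈ f.W i := by
        intro t ht
        apply hW
        rw [abs_lt] at hu hv ⊢
        constructor <;> linarith [ht.1, ht.2, hu.1, hv.2]
      have hne : ∀ t ∈ Icc (u - k) (v - k), t ≠ f.c i := by
        rintro t ht rfl
        exact hn i 0 (by simpa using ht)
      apply schw2 f.smooth f.mono h1 h2 h3
      · intro t ht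
        have := (f.powerLaw i t (hw t ht) (hne t ht)).1
        refine lt_of_le_of_lt ?_ this
        have := f.al_pos i
        positivity
      · intro t ht
        exact f.negSchwarzian i t (hw t ht) (hne t ht)
    have := f.H_per 0 _ _ k base
    simpa using this
  · have hp : 0 < deriv f.F x0 := lt_of_le_of_ne (f.deriv_nonneg' _) (Ne.symm h0)
    have hcd : ContDiffAt ℝ 1 (fun t => Real.log (deriv f.F t)) x0 := by
      have h2 : ContDiff ℝ 2 (deriv f.F) := f.smooth.deriv'
      exact ((h2.of_le (by norm_num)).contDiffAt).log h0
    obtain ⟨L, s, hs, hL⟩ := hcd.exists_lipschitzOnWith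
    have hs2 : s ∩ {t | 0 < deriv f.F t} ∈ nhds x0 :=
      inter_mem hs (f.contD.continuousAt.eventually (lt_mem_nhds hp))
    obtain ⟨r, hr, hball⟩ := Metric.mem_nhds_iff.1 hs2
    refine ⟨r, hr, 2 * L, fun u v hu hv huv _ b c h1 h2 h3 => ?_⟩
    have hin : ∀ t ∈ Icc u v, t ∈ s ∧ 0 < deriv f.F t := by
      intro t ht
      apply hball
      rw [Metric.mem_ball, Real.dist_eq]
      rw [abs_lt] at hu hv ⊢
      constructor <;> linarith [ht.1, ht.2, hu.1, hv.2]
    have comp : ∀ t ∈ Icc u v, ∀ t' ∈ Icc u v,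
        deriv f.F t ≤ Real.exp (L * (v - u)) * deriv f.F t' := by
      intro t ht t' ht'
      have := hL.dist_le_mul t (hin t ht).1 t' (hin t' ht').1
      rw [Real.dist_eq, Real.dist_eq] at this
      have d1 : |t - t'| ≤ v - u := by
        rw [abs_le]; constructor <;> linarith [ht.1, ht.2, ht'.1, ht'.2]
      have d2 : Real.log (deriv f.F t) ≤ L * (v - u) + Real.log (deriv f.F t') := by
        have a1 := (le_abs_self _).trans this
        have a2 : (L : ℝ) * |t - t'| ≤ L * (v - u) := mul_le_mul_of_nonneg_left d1 L.2
        linarith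
      have := Real.exp_le_exp.2 d2
      rwa [Real.exp_add, Real.exp_log (hin t ht).2, Real.exp_log (hin t' ht').2] at this
    obtain ⟨t1, ht1, e1⟩ := f.mvt h1
    obtain ⟨t2, ht2, e2⟩ := f.mvt h3
    obtain ⟨t3, ht3, e3⟩ := f.mvt (h1.trans h2)
    obtain ⟨t4, ht4, e4⟩ := f.mvt (h2.trans h3)
    have i1 : t1 ∈ Icc u v := ⟨ht1.1, by linarith [ht1.2]⟩
    have i2 : t2 ∈ Icc u v := ⟨by linarith [ht2.1], ht2.2⟩
    have i3 : t3 ∈ Icc u v := ⟨ht3.1, by linarith [ht3.2]⟩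
    have i4 : t4 ∈ Icc u v := ⟨by linarith [ht4.1], ht4.2⟩
    have k1 := comp t1 i1 t3 i3
    have k2 := comp t2 i2 t4 i4
    have p3 := (hin t3 i3).2
    have p4 := (hin t4 i4).2
    have p2 := (hin t2 i2).2
    have kk := mul_le_mul k1 k2 p2.le (by positivity)
    have r1 : 0 < c - u := by linarith
    have r2 : 0 < v - b := by linarith
    unfold cr
    rw [e1, e2, e3, e4, ← mul_div_assoc, div_le_div_iff₀ (by positivity) (by positivity)]
    have ee : Real.exp (2 * L * (v - u)) = Real.exp (L * (v - u)) * Real.exp (L * (v - u)) := by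
      rw [← Real.exp_add]; congr 1; ring
    rw [ee]
    have q : 0 ≤ (b - u) * (v - c) * ((c - u) * (v - b)) := by
      have : 0 ≤ b - u := by linarith
      have : 0 ≤ v - c := by linarith
      positivity
    have := mul_le_mul_of_nonneg_left kk q
    calc _ = (b - u) * (v - c) * ((c - u) * (v - b)) * (deriv f.F t1 * deriv f.F t2) := by ring
      _ ≤ _ := this
      _ = _ := by ring

lemma crb : ∃ K L, 1 ≤ K ∧ 0 ≤ L ∧ CRB f.F f.c K L := by
  obtain ⟨K, hK, hcr⟩ := f.cr_K
  obtain ⟨δ, hδ, L, h⟩ := uniform_of_local f.H (fun L L' u v hL huv h hn b c h1 h2 h3 =>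
    (h hn b c h1 h2 h3).trans (mul_le_mul_of_nonneg_right
      (Real.exp_le_exp.2 (mul_le_mul_of_nonneg_right hL (by linarith)))
      (cr_pos h1 h2 h3).le)) f.H_per f.H_loc
  refine ⟨K, max 0 (max L (Real.log K / δ)), hK, le_max_left _ _, ?_⟩
  intro a b c d h1 h2 h3 h4
  refine ⟨hcr a b c d h1 h2 h3 h4, fun hn => ?_⟩
  have hcp := (cr_pos h1 h2 h3).le
  rcases lt_or_ge d (a + δ) with hd | hd
  · refine (h a d (by linarith) hd hn b c h1 h2 h3).trans (mul_le_mul_of_nonneg_right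
      (Real.exp_le_exp.2 (mul_le_mul_of_nonneg_right ?_ (by linarith))) hcp)
    exact (le_max_left _ _).trans (le_max_right _ _)
  · refine (hcr a b c d h1 h2 h3 h4).trans (mul_le_mul_of_nonneg_right ?_ hcp)
    calc K = Real.exp (Real.log K) := (Real.exp_log (by linarith)).symm
      _ ≤ _ := by
        apply Real.exp_le_exp.2
        have l0 : 0 ≤ Real.log K := Real.log_nonneg hK
        calc Real.log K = Real.log K / δ * δ := by field_simp
          _ ≤ Real.log K / δ * (d - a) := mul_le_mul_of_nonneg_left (by linarith) (by positivity)
          _ ≤ _ := mul_le_mul_of_nonneg_right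
            ((le_max_right _ _).trans (le_max_right _ _)) (by linarith)

end MCM

/-- **dynamically symmetric intervals are comparable.** There is `C₃ > 1`
depending only on `f` such that for all `n` and all `x`, the intervals with endpoints
`x, f^{q_n}(x)` and `x, f^{-q_n}(x)` have comparable lengths. On lifts: if
`F^[q_n] y - p_n = x` (i.e. `y` is the lift of `f^{-q_n}(x)` adjacent to `x`), then
`|f^{q_n}(x) - x| ≍ |x - y|`. -/
theorem symmetric_intervals_comparable
    (f : MCM) (ρ : ℝ) (hirr : Irrational ρ) (hmem : ρ ∈ Set.Ioo (0 : ℝ) 1)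
    (hrot : HasRotationNumber f.F ρ) :
    ∃ C₃ : ℝ, 1 < C₃ ∧ ∀ (n : ℕ) (x y : ℝ),
      f.F^[qDen ρ n] y - (pNum ρ n : ℝ) = x →
      C₃⁻¹ * |x - y| ≤ |f.F^[qDen ρ n] x - (pNum ρ n : ℝ) - x| ∧
        |f.F^[qDen ρ n] x - (pNum ρ n : ℝ) - x| ≤ C₃ * |x - y| := by
  obtain ⟨K, L, hK, hL, hcrb⟩ := f.crb
  have key := final f.mono f.smooth.continuous f.deg1 hirr hmem hrot hK hL hcrb
  have hB := one_le_Bc (N := f.N) hK hL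
  have hC : 1 < Cc f.N K L := by
    unfold Cc
    nlinarith [sq_nonneg (Bc f.N K L)]
  refine ⟨Cc f.N K L, hC, fun n x y hxy => ?_⟩
  obtain ⟨h1, h2⟩ := key n x y hxy
  refine ⟨?_, h2⟩
  rw [inv_mul_le_iff₀ (by linarith)]
  exact h1
end
end

section
/- Let f be a multicritical circle map with irrational rotation number, with a chosen critical point c_0, return times q_n, and intervals I_n = I_n(c_0), I_n^j = f^j(I_n(c_0)). There exists a constant C_4 > 1 depending only on f such that for all n ≥ 1 and for any two intervals I, J taken from the six intervals I_n, I_{n+1}, I_n^{q_n}, I_n^{q_{n+1}}, I_{n+1}^{q_n}, I_n^{q_{n+1}−q_n}, one has C_4^{−1} ≤ |I|/|J| ≤ C_4. -/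
open Set Filter MeasureTheory

noncomputable section

/-- The lift of the atom `I_ℓ^j(x) = f^j(I_ℓ(x))`, where `I_ℓ(x)` is the interval with
endpoints `x` and `f^{q_ℓ}(x)`; the lift of `f^{q_ℓ}(x)` adjacent to `x` is
`F^[q_ℓ] x - p_ℓ`. -/
def atomSet (F : ℝ → ℝ) (ρ x : ℝ) (ℓ j : ℕ) : Set ℝ :=
  Set.uIcc (F^[j] x) (F^[j + qDen ρ ℓ] x - (pNum ρ ℓ : ℝ))

/-- The length of the atom `I_ℓ^j(x)`. -/
def atomLen (F : ℝ → ℝ) (ρ x : ℝ) (ℓ j : ℕ) : ℝ :=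
  |F^[j + qDen ρ ℓ] x - (pNum ρ ℓ : ℝ) - F^[j] x|

/-- The two endpoints (as lifts) of the atom `I_ℓ^j(x)`. -/
def atomEnds (F : ℝ → ℝ) (ρ x : ℝ) (ℓ j : ℕ) : Set ℝ :=
  {F^[j] x, F^[j + qDen ρ ℓ] x - (pNum ρ ℓ : ℝ)}

/-- `(ℓ, j)` indexes an atom of the `n`-th dynamical partition
`P_n(x) = {I_n^i(x) : i < q_{n+1}} ∪ {I_{n+1}^j(x) : j < q_n}`. -/
def IsAtomIdx (ρ : ℝ) (n ℓ j : ℕ) : Prop :=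
  (ℓ = n ∧ j < qDen ρ (n + 1)) ∨ (ℓ = n + 1 ∧ j < qDen ρ n)

/-- Two distinct atoms are adjacent when they share an endpoint on the circle,
i.e. when some endpoints of their lifts differ by an integer. -/
def AdjacentAtoms (F : ℝ → ℝ) (ρ x : ℝ) (ℓ₁ j₁ ℓ₂ j₂ : ℕ) : Prop :=
  (ℓ₁, j₁) ≠ (ℓ₂, j₂) ∧
    ∃ u ∈ atomEnds F ρ x ℓ₁ j₁, ∃ w ∈ atomEnds F ρ x ℓ₂ j₂, ∃ k : ℤ, w = u + (k : ℝ)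


namespace Six

/-- cross-ratio of four points -/
def XR (a b c d : ℝ) : ℝ := (b - a) * (d - c) / ((c - a) * (d - b))

/-- the dynamical data used in the abstract part of the argument -/
structure Dyn (F Φ : ℝ → ℝ) (V ρ : ℝ) : Prop where
  mono : StrictMono F
  cont : Continuous F
  deg1 : ∀ x, F (x + 1) = F x + 1
  Pmono : Monotone Φ
  Pper : ∀ x, Φ (x + 1) = Φ x + V
  cr : ∀ a b c d, a < b → b < c → c < d →
    XR (F a) (F b) (F c) (F d) ≤ Real.exp (Φ d - Φ a) * XR a b c d
  irr : Irrational ρ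
  ordpos : ∀ (n : ℕ) (k : ℤ), 0 < n * ρ - k → ∀ x, x < F^[n] x - k
  ordneg : ∀ (n : ℕ) (k : ℤ), n * ρ - k < 0 → ∀ x, F^[n] x - k < x

/-- reflection -/
def refl (F : ℝ → ℝ) (x : ℝ) : ℝ := - F (- x)

lemma refl_iter (F : ℝ → ℝ) (n : ℕ) (x : ℝ) : (refl F)^[n] x = - F^[n] (-x) := by
  induction n generalizing x with
  | zero => simp
  | succ n ih => rw [Function.iterate_succ_apply, ih, Function.iterate_succ_apply]; simp [refl]

lemma XR_neg (a b c d : ℝ) : XR (-d) (-c) (-b) (-a) = XR a b c d := by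
  unfold XR
  congr 1 <;> ring

lemma XR_add (a b c d t : ℝ) : XR (a + t) (b + t) (c + t) (d + t) = XR a b c d := by
  unfold XR
  congr 1 <;> ring

lemma XR_pos {a b c d : ℝ} (h1 : a < b) (h2 : b < c) (h3 : c < d) : 0 < XR a b c d := by
  unfold XR
  apply div_pos <;> apply mul_pos <;> linarith

lemma Dyn.refl {F Φ : ℝ → ℝ} {V ρ : ℝ} (D : Dyn F Φ V ρ) :
    Dyn (refl F) (refl Φ) V (-ρ) where
  mono := fun x y h => by
    unfold Six.refl; have := D.mono (neg_lt_neg h); linarith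
  cont := by unfold Six.refl; have := D.cont; fun_prop
  deg1 := fun x => by
    unfold Six.refl; have := D.deg1 (-(x+1)); rw [show -(x+1)+1 = -x by ring] at this; linarith
  Pmono := fun x y h => by
    unfold Six.refl; have := D.Pmono (neg_le_neg h); linarith
  Pper := fun x => by
    unfold Six.refl; have := D.Pper (-(x+1)); rw [show -(x+1)+1 = -x by ring] at this; linarith
  cr := fun a b c d h1 h2 h3 => by
    unfold Six.refl
    rw [XR_neg]
    have := D.cr (-d) (-c) (-b) (-a) (by linarith) (by linarith) (by linarith)
    rw [XR_neg] at this
    convert this using 3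
    ring
  irr := D.irr.neg
  ordpos := fun n k h x => by
    rw [refl_iter]
    have := D.ordneg n (-k) (by push_cast; linarith) (-x)
    push_cast at this
    linarith
  ordneg := fun n k h x => by
    rw [refl_iter]
    have := D.ordpos n (-k) (by push_cast; linarith) (-x)
    push_cast at this
    linarith

section
variable {F Φ : ℝ → ℝ} {V ρ : ℝ}

lemma Dyn.add_int (D : Dyn F Φ V ρ) (x : ℝ) (k : ℤ) : F (x + k) = F x + k := by
  induction k using Int.induction_on with
  | zero => simp
  | succ i ih =>
    push_cast at ih ⊢
    rw [← add_assoc, D.deg1, ih]; ring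
  | pred i ih =>
    push_cast at ih ⊢
    have := D.deg1 (x + (-(i:ℝ) - 1))
    rw [show x + (-(i:ℝ) - 1) + 1 = x + -(i:ℝ) by ring, ih] at this
    linarith

lemma Dyn.P_add_int (D : Dyn F Φ V ρ) (x : ℝ) (k : ℤ) : Φ (x + k) = Φ x + k * V := by
  induction k using Int.induction_on with
  | zero => simp
  | succ i ih =>
    push_cast at ih ⊢
    rw [← add_assoc, D.Pper, ih]; ring
  | pred i ih =>
    push_cast at ih ⊢
    have := D.Pper (x + (-(i:ℝ) - 1))
    rw [show x + (-(i:ℝ) - 1) + 1 = x + -(i:ℝ) by ring, ih] at this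
    linarith

lemma Dyn.V_nonneg (D : Dyn F Φ V ρ) : 0 ≤ V := by
  have h1 := D.Pper 0
  have h2 := D.Pmono (show (0:ℝ) ≤ 0 + 1 by norm_num)
  linarith

lemma Dyn.iter_mono (D : Dyn F Φ V ρ) (n : ℕ) : StrictMono F^[n] := D.mono.iterate n

lemma Dyn.iter_add_int (D : Dyn F Φ V ρ) (n : ℕ) (x : ℝ) (k : ℤ) :
    F^[n] (x + k) = F^[n] x + k := by
  induction n generalizing x with
  | zero => simp
  | succ n ih => rw [Function.iterate_succ_apply, Function.iterate_succ_apply, D.add_int, ih]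

/-- the word `F^q - p` -/
def wd (F : ℝ → ℝ) (q : ℕ) (p : ℤ) (x : ℝ) : ℝ := F^[q] x - p

lemma Dyn.iter_sub_int (D : Dyn F Φ V ρ) (n : ℕ) (x : ℝ) (k : ℤ) :
    F^[n] (x - k) = F^[n] x - k := by
  have := D.iter_add_int n x (-k)
  push_cast at this
  rw [sub_eq_add_neg, this, sub_eq_add_neg]

lemma Dyn.wd_iter (D : Dyn F Φ V ρ) (q : ℕ) (p : ℤ) (j : ℕ) (x : ℝ) :
    F^[j] (wd F q p x) = wd F q p (F^[j] x) := by
  unfold wd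
  rw [D.iter_sub_int, ← Function.iterate_add_apply, ← Function.iterate_add_apply, add_comm]

lemma Dyn.wd_add_int (D : Dyn F Φ V ρ) (q : ℕ) (p : ℤ) (x : ℝ) (k : ℤ) :
    wd F q p (x + k) = wd F q p x + k := by
  unfold wd
  rw [D.iter_add_int]; ring

lemma Dyn.wd_comm (D : Dyn F Φ V ρ) (q : ℕ) (p : ℤ) (q' : ℕ) (p' : ℤ) (x : ℝ) :
    wd F q p (wd F q' p' x) = wd F q' p' (wd F q p x) := by
  have h1 : ∀ y, wd F q p y = F^[q] y - p := fun y => rfl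
  rw [h1, h1, D.wd_iter]
  have := D.wd_add_int q' p' (F^[q] x) (-p)
  push_cast at this
  rw [sub_eq_add_neg, sub_eq_add_neg, this]

lemma Dyn.wd_mono (D : Dyn F Φ V ρ) (q : ℕ) (p : ℤ) : StrictMono (wd F q p) := by
  intro x y h
  unfold wd
  have := D.iter_mono q h
  linarith

lemma Dyn.wd_cont (D : Dyn F Φ V ρ) (q : ℕ) (p : ℤ) : Continuous (wd F q p) := by
  unfold wd
  have := D.cont.iterate q
  fun_prop

lemma Dyn.lt_of_lt (D : Dyn F Φ V ρ) (i i' : ℕ) (k k' : ℤ) (h : i * ρ - k < i' * ρ - k')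
    (x : ℝ) : F^[i] x - k < F^[i'] x - k' := by
  rcases le_total i i' with hi | hi
  · obtain ⟨j, rfl⟩ := Nat.exists_eq_add_of_le hi
    have := D.ordpos j (k' - k) (by push_cast at h ⊢; linarith) (F^[i] x)
    rw [← Function.iterate_add_apply, add_comm j i] at this
    push_cast at this
    linarith
  · obtain ⟨j, rfl⟩ := Nat.exists_eq_add_of_le hi
    have := D.ordneg j (k - k') (by push_cast at h ⊢; linarith) (F^[i'] x)
    rw [← Function.iterate_add_apply, add_comm j i'] at this
    push_cast at this
    linarith

lemma Dyn.lt_iff (D : Dyn F Φ V ρ) (i i' : ℕ) (k k' : ℤ) (x : ℝ) :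
    F^[i] x - k < F^[i'] x - k' ↔ i * ρ - k < i' * ρ - k' := by
  constructor
  · intro h
    by_contra hn
    rcases lt_or_eq_of_le (not_lt.1 hn) with h1 | h1
    · exact absurd (D.lt_of_lt _ _ _ _ h1 x) (by linarith)
    · have h2 : ((i : ℤ) - i' : ℤ) * ρ = (k - k' : ℤ) := by push_cast; linarith
      by_cases h3 : (i : ℤ) - i' = 0
      · have h4 : i = i' := by omega
        subst h4
        have h5 : (k : ℝ) = k' := by linarith
        rw [h5] at h
        exact lt_irrefl _ h
      · exact (D.irr.intCast_mul h3).ne_int _ h2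
  · intro h
    exact D.lt_of_lt _ _ _ _ h x

lemma Dyn.wd_surj (D : Dyn F Φ V ρ) (q : ℕ) (p : ℤ) (y : ℝ) : ∃ x, wd F q p x = y := by
  have hc := D.wd_cont q p
  have h0 := D.wd_add_int q p 0
  simp only [zero_add] at h0
  have hlo : wd F q p ((⌊y - wd F q p 0⌋ : ℤ) : ℝ) ≤ y := by
    rw [h0]; have := Int.floor_le (y - wd F q p 0); linarith
  have hhi : y ≤ wd F q p ((⌈y - wd F q p 0⌉ : ℤ) : ℝ) := by
    rw [h0]; have := Int.le_ceil (y - wd F q p 0); linarith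
  exact mem_range_of_exists_le_of_exists_ge hc ⟨_, hlo⟩ ⟨_, hhi⟩

/-- sums of increments of a monotone function over disjoint intervals -/
lemma sum_disjoint (hP : Monotone Φ) (s : Finset ℕ) (a b : ℕ → ℝ) (A : ℝ)
    (hab : ∀ i ∈ s, a i < b i) (hA : ∀ i ∈ s, A ≤ a i)
    (hd : ∀ i ∈ s, ∀ j ∈ s, i ≠ j → Disjoint (Set.Ioc (a i) (b i)) (Set.Ioc (a j) (b j))) :
    ∀ B, A ≤ B → (∀ i ∈ s, b i ≤ B) → ∑ i ∈ s, (Φ (b i) - Φ (a i)) ≤ Φ B - Φ A := by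
  classical
  induction s using Finset.induction_on_max_value a with
  | empty => intro B hB _; simpa using hP hB
  | insert i s hi hmax ih =>
    intro B hB hb
    rw [Finset.sum_insert hi]
    have h1 : ∀ j ∈ s, b j ≤ a i := by
      intro j hj
      by_contra hlt
      push Not at hlt
      have hne : i ≠ j := fun h => hi (h ▸ hj)
      have := hd i (by simp) j (by simp [hj]) hne
      have hai := hab i (by simp)
      rw [Set.disjoint_left] at this
      have hm := hmax j hj
      exact this (a := min (b i) (b j)) ⟨lt_min hai hlt, min_le_left _ _⟩
        ⟨lt_of_le_of_lt hm (lt_min hai hlt), min_le_right _ _⟩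
    have h2 := ih (fun j hj => hab j (by simp [hj])) (fun j hj => hA j (by simp [hj]))
      (fun j hj k hk => hd j (by simp [hj]) k (by simp [hk])) (a i) (hA i (by simp)) h1
    have h3 := hP (hb i (by simp))
    linarith

/-- arithmetic data of a level, with `F^q - p` moving to the right -/
structure Lev (ρ : ℝ) (q : ℕ) (p : ℤ) (Q : ℕ) (P : ℤ) : Prop where
  qpos : 0 < q
  qQ : q ≤ Q
  dpos : 0 < q * ρ - p
  dlt : q * ρ - p < 1
  Dneg : Q * ρ - P < 0
  Dgt : -(q * ρ - p) < Q * ρ - P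
  best : ∀ j : ℕ, 0 < j → j < Q → ∀ k : ℤ, q * ρ - p ≤ |j * ρ - k|

variable {q Q : ℕ} {p P : ℤ}

lemma Lev.g_gt (D : Dyn F Φ V ρ) (L : Lev ρ q p Q P) (x : ℝ) : x < wd F q p x :=
  D.ordpos q p L.dpos x

lemma Lev.g_lt (D : Dyn F Φ V ρ) (L : Lev ρ q p Q P) (x : ℝ) : wd F q p x < x + 1 := by
  have := D.lt_of_lt q 0 p (-1) (by push_cast; have := L.dlt; linarith) x
  simp only [Int.cast_neg, Int.cast_one, sub_neg_eq_add, Function.iterate_zero, id_eq] at this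
  exact this

lemma Lev.h_lt (D : Dyn F Φ V ρ) (L : Lev ρ q p Q P) (x : ℝ) : wd F Q P x < x :=
  D.ordneg Q P L.Dneg x

lemma Lev.gh_gt (D : Dyn F Φ V ρ) (L : Lev ρ q p Q P) (x : ℝ) :
    x < wd F q p (wd F Q P x) := by
  have := D.ordpos (q + Q) (p + P) (by have := L.Dgt; push_cast; linarith) x
  unfold wd
  rw [D.iter_sub_int, ← Function.iterate_add_apply]
  push_cast at this
  linarith

lemma Lev.sum1 (D : Dyn F Φ V ρ) (L : Lev ρ q p Q P) (x : ℝ) :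
    ∑ i ∈ Finset.range Q, (Φ (F^[i] (wd F q p x)) - Φ (F^[i] x)) ≤ 2 * V := by
  have key := sum_disjoint D.Pmono (Finset.range Q)
    (fun i => F^[i] x - ⌊F^[i] x⌋) (fun i => F^[i] (wd F q p x) - ⌊F^[i] x⌋) 0
    (fun i _ => by have := D.iter_mono i (L.g_gt D x); linarith)
    (fun i _ => by have := Int.floor_le (F^[i] x); linarith) ?_ 2 (by norm_num) ?_
  · have e : Φ 2 - Φ 0 = 2 * V := by
      have := D.P_add_int 0 2
      simp at this; linarith
    rw [e] at key
    refine le_trans (le_of_eq (Finset.sum_congr rfl fun i _ => ?_)) key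
    have h1 := D.P_add_int (F^[i] x) (-⌊F^[i] x⌋)
    have h2 := D.P_add_int (F^[i] (wd F q p x)) (-⌊F^[i] x⌋)
    push_cast at h1 h2
    simp only [sub_eq_add_neg] at *
    rw [h1, h2]; ring
  · have main : ∀ i j : ℕ, i < j → j < Q → Disjoint
        (Set.Ioc (F^[i] x - ⌊F^[i] x⌋) (F^[i] (wd F q p x) - ⌊F^[i] x⌋))
        (Set.Ioc (F^[j] x - ⌊F^[j] x⌋) (F^[j] (wd F q p x) - ⌊F^[j] x⌋)) := by
      intro i j hij hj
      rw [Set.disjoint_left]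
      rintro y ⟨hy1, hy2⟩ ⟨hy3, hy4⟩
      have hw : ∀ j, F^[j] (wd F q p x) = F^[j + q] x - p := by
        intro j; unfold wd; rw [D.iter_sub_int, ← Function.iterate_add_apply]
      rw [hw] at hy2 hy4
      have e1 := (D.lt_iff i (j + q) ⌊F^[i] x⌋ (p + ⌊F^[j] x⌋) x).1 (by push_cast; linarith)
      have e2 := (D.lt_iff j (i + q) ⌊F^[j] x⌋ (p + ⌊F^[i] x⌋) x).1 (by push_cast; linarith)
      have := L.best (j - i) (by omega) (by omega) (⌊F^[j] x⌋ - ⌊F^[i] x⌋)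
      rw [Nat.cast_sub hij.le] at this
      push_cast at this e1 e2
      rw [le_abs] at this
      rcases this with h | h <;> linarith
    intro i hi j hj hne
    rw [Finset.mem_range] at hi hj
    rcases lt_or_gt_of_ne hne with h | h
    · exact main i j h hj
    · exact (main j i h hi).symm
  · intro i _
    have h1 : F^[i] (wd F q p x) < F^[i] x + 1 := by
      rw [D.wd_iter]; exact L.g_lt D _
    have := Int.lt_floor_add_one (F^[i] x)
    linarith

lemma Lev.sum2 (D : Dyn F Φ V ρ) (L : Lev ρ q p Q P) (x : ℝ) (m : ℕ) (hm : m ≤ 2 * Q) :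
    ∑ i ∈ Finset.range m, (Φ (F^[i] (wd F q p x)) - Φ (F^[i] x)) ≤ 4 * V := by
  have h0 : ∑ i ∈ Finset.range m, (Φ (F^[i] (wd F q p x)) - Φ (F^[i] x)) ≤
      ∑ i ∈ Finset.range (Q + Q), (Φ (F^[i] (wd F q p x)) - Φ (F^[i] x)) := by
    apply Finset.sum_le_sum_of_subset_of_nonneg
    · intro i hi; simp at *; omega
    · intro i _ _
      have := D.Pmono (D.iter_mono i (L.g_gt D x)).le
      linarith
  rw [Finset.sum_range_add] at h0
  have h1 := L.sum1 D x
  have h2 := L.sum1 D (F^[Q] x)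
  have h3 : ∑ i ∈ Finset.range Q, (Φ (F^[Q + i] (wd F q p x)) - Φ (F^[Q + i] x)) =
      ∑ i ∈ Finset.range Q, (Φ (F^[i] (wd F q p (F^[Q] x))) - Φ (F^[i] (F^[Q] x))) := by
    apply Finset.sum_congr rfl
    intro i _
    rw [← D.wd_iter, ← Function.iterate_add_apply, ← Function.iterate_add_apply, add_comm]
  linarith

lemma Dyn.cr_iter (D : Dyn F Φ V ρ) (a b c d : ℝ) (h1 : a < b) (h2 : b < c) (h3 : c < d) (m : ℕ) :
    XR (F^[m] a) (F^[m] b) (F^[m] c) (F^[m] d) ≤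
      Real.exp (∑ i ∈ Finset.range m, (Φ (F^[i] d) - Φ (F^[i] a))) * XR a b c d := by
  induction m with
  | zero => simp
  | succ m ih =>
    rw [Finset.sum_range_succ, add_comm (Finset.sum _ _), Real.exp_add]
    rw [Function.iterate_succ_apply', Function.iterate_succ_apply', Function.iterate_succ_apply',
      Function.iterate_succ_apply']
    have hm := D.iter_mono m
    refine (D.cr _ _ _ _ (hm h1) (hm h2) (hm h3)).trans ?_
    rw [mul_assoc]
    exact mul_le_mul_of_nonneg_left ih (Real.exp_pos _).le

/-- The cross-ratio inequality along orbits. -/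
lemma Lev.cri (D : Dyn F Φ V ρ) (L : Lev ρ q p Q P) (y a b c d : ℝ) (h0 : y ≤ a)
    (h1 : a < b) (h2 : b < c) (h3 : c < d)
    (h4 : d ≤ wd F q p (wd F q p (wd F q p y))) (m : ℕ) (hm : m ≤ 2 * Q) :
    XR (F^[m] a) (F^[m] b) (F^[m] c) (F^[m] d) ≤ Real.exp (12 * V) * XR a b c d := by
  refine (D.cr_iter a b c d h1 h2 h3 m).trans ?_
  apply mul_le_mul_of_nonneg_right _ (XR_pos h1 h2 h3).le
  apply Real.exp_le_exp.2
  have s1 := L.sum2 D y m hm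
  have s2 := L.sum2 D (wd F q p y) m hm
  have s3 := L.sum2 D (wd F q p (wd F q p y)) m hm
  have : ∑ i ∈ Finset.range m, (Φ (F^[i] d) - Φ (F^[i] a)) ≤
      ∑ i ∈ Finset.range m, (Φ (F^[i] (wd F q p y)) - Φ (F^[i] y)) +
      ∑ i ∈ Finset.range m, (Φ (F^[i] (wd F q p (wd F q p y))) - Φ (F^[i] (wd F q p y))) +
      ∑ i ∈ Finset.range m, (Φ (F^[i] (wd F q p (wd F q p (wd F q p y)))) -
        Φ (F^[i] (wd F q p (wd F q p y)))) := by
    rw [← Finset.sum_add_distrib, ← Finset.sum_add_distrib]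
    apply Finset.sum_le_sum
    intro i _
    have e1 := D.Pmono ((D.iter_mono i).monotone h0)
    have e2 := D.Pmono ((D.iter_mono i).monotone h4)
    linarith
  linarith

end
end Six

namespace Six
section
variable {F Φ : ℝ → ℝ} {V ρ : ℝ} {q Q : ℕ} {p P : ℤ}

lemma Lev.cover (D : Dyn F Φ V ρ) (L : Lev ρ q p Q P) (x z : ℝ) :
    ∃ j : ℕ, j ≤ 2 * Q ∧ ∃ k : ℤ, F^[j] x ≤ z + k ∧ z + k ≤ F^[j] (wd F q p x) := by
  have hs : ∀ j : ℕ, ∃ u, F^[j] u = z := fun j => by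
    obtain ⟨u, hu⟩ := D.wd_surj j 0 z
    exact ⟨u, by simpa [wd] using hu⟩
  choose u hu using hs
  set g := wd F q p with hg
  set κ : ℕ → ℤ := fun j => ⌊g x - u j⌋ + 1 with hκ
  have hk1 : ∀ j, g x < u j + κ j := fun j => by
    have := Int.lt_floor_add_one (g x - u j)
    simp only [hκ]; push_cast; linarith
  have hk2 : ∀ j (k : ℤ), g x < u j + k → u j + κ j ≤ u j + k := fun j k h => by
    have : ⌊g x - u j⌋ < k := by
      rw [Int.floor_lt]; linarith
    have h2 : κ j ≤ k := by simp only [hκ]; omega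
    have h3 : (κ j : ℝ) ≤ k := by exact_mod_cast h2
    linarith
  obtain ⟨j0, hj0, hmin⟩ := Finset.exists_min_image (Finset.range (Q + q))
    (fun j => u j + κ j) ⟨0, by have := L.qpos; simp; omega⟩
  rw [Finset.mem_range] at hj0
  have fin : ∀ (j' : ℕ) (k' : ℤ), j' < Q + q → u j' + k' < u j0 + κ j0 →
      u j0 + κ j0 ≤ g (u j' + k') →
      ∃ j : ℕ, j ≤ 2 * Q ∧ ∃ k : ℤ, F^[j] x ≤ z + k ∧ z + k ≤ F^[j] (g x) := by
    intro j' k' hj' h1 h2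
    refine ⟨j', by have := L.qQ; omega, k', ?_, ?_⟩
    · have h3 : g x < g (u j' + k') := lt_of_lt_of_le (hk1 j0) h2
      have h4 : x < u j' + k' := (D.wd_mono q p).lt_iff_lt.1 h3
      have := D.iter_mono j' h4
      rw [D.iter_add_int, hu] at this
      exact this.le
    · have h3 : u j' + k' ≤ g x := by
        by_contra hcon
        push Not at hcon
        have h4 := hk2 j' k' hcon
        have h5 := hmin j' (Finset.mem_range.2 hj')
        linarith
      have := (D.iter_mono j').monotone h3
      rw [D.iter_add_int, hu] at this
      exact this
  by_cases hc : j0 < Q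
  · have e1 : F^[q] (u (j0 + q)) = u j0 := by
      apply (D.iter_mono j0).injective
      rw [← Function.iterate_add_apply, hu, hu]
    have e2 : g (u (j0 + q) + ((p + κ j0 : ℤ) : ℝ)) = u j0 + κ j0 := by
      rw [hg, D.wd_add_int]
      unfold wd
      rw [e1]; push_cast; ring
    refine fin (j0 + q) (p + κ j0) (by omega) ?_ e2.ge
    rw [← e2]
    exact L.g_gt D _
  · push Not at hc
    have e1 : F^[Q] (u j0) = u (j0 - Q) := by
      apply (D.iter_mono (j0 - Q)).injective
      rw [← Function.iterate_add_apply, hu, Nat.sub_add_cancel hc, hu]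
    have e2 : u (j0 - Q) + ((κ j0 - P : ℤ) : ℝ) = wd F Q P (u j0 + κ j0) := by
      rw [D.wd_add_int]
      unfold wd
      rw [e1]; push_cast; ring
    refine fin (j0 - Q) (κ j0 - P) (by omega) ?_ ?_
    · rw [e2]; exact L.h_lt D _
    · rw [e2]; exact (L.gh_gt D _).le

lemma XR_lower {a b c d s t : ℝ} (h1 : a < b) (h2 : b < c) (h3 : c < d)
    (hs : c - a ≤ s * (b - a)) (ht : d - b ≤ t * (d - c)) : 1 ≤ s * t * XR a b c d := by
  unfold XR
  rw [← mul_div_assoc, le_div_iff₀ (by apply mul_pos <;> linarith), one_mul]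
  have := mul_le_mul hs ht (by linarith) (by linarith)
  linarith

lemma XR_upper1 {a b c d : ℝ} (h1 : a < b) (h2 : b < c) (h3 : c < d) :
    XR a b c d * (c - a) ≤ b - a := by
  unfold XR
  have e : (b - a) * (d - c) / ((c - a) * (d - b)) * (c - a) = (b - a) * ((d - c) / (d - b)) := by
    have : c - a ≠ 0 := by linarith
    have : d - b ≠ 0 := by linarith
    field_simp
  rw [e]
  apply mul_le_of_le_one_right (by linarith)
  rw [div_le_one (by linarith)]; linarith

lemma XR_upper2 {a b c d : ℝ} (h1 : a < b) (h2 : b < c) (h3 : c < d) :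
    XR a b c d * (d - b) ≤ d - c := by
  rw [← XR_neg]
  have := @XR_upper1 (-d) (-c) (-b) (-a) (by linarith) (by linarith) (by linarith)
  linarith

lemma Lev.cmp (D : Dyn F Φ V ρ) (L : Lev ρ q p Q P) (y a b c d : ℝ) (h0 : y ≤ a)
    (h1 : a < b) (h2 : b < c) (h3 : c < d)
    (h4 : d ≤ wd F q p (wd F q p (wd F q p y))) (m : ℕ) (hm : m ≤ 2 * Q) (s t : ℝ)
    (hs : F^[m] c - F^[m] a ≤ s * (F^[m] b - F^[m] a))
    (ht : F^[m] d - F^[m] b ≤ t * (F^[m] d - F^[m] c)) :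
    c - a ≤ s * t * Real.exp (12 * V) * (b - a) ∧
    d - b ≤ s * t * Real.exp (12 * V) * (d - c) := by
  have k1 := D.iter_mono m h1
  have k2 := D.iter_mono m h2
  have k3 := D.iter_mono m h3
  have e1 := XR_lower k1 k2 k3 hs ht
  have e2 := L.cri D y a b c d h0 h1 h2 h3 h4 m hm
  have s0 : 0 < s := by
    by_contra h
    have : s * (F^[m] b - F^[m] a) ≤ 0 := mul_nonpos_of_nonpos_of_nonneg (by linarith) (by linarith)
    linarith
  have t0 : 0 < t := by
    by_contra h
    have : t * (F^[m] d - F^[m] c) ≤ 0 := mul_nonpos_of_nonpos_of_nonneg (by linarith) (by linarith)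
    linarith
  have e3 : 1 ≤ s * t * Real.exp (12 * V) * XR a b c d := by
    refine e1.trans ?_
    rw [mul_assoc (s * t)]
    exact mul_le_mul_of_nonneg_left e2 (by positivity)
  have hpos : 0 < s * t * Real.exp (12 * V) := by positivity
  constructor
  · have := mul_le_mul_of_nonneg_left (XR_upper1 h1 h2 h3) hpos.le
    have h5 := mul_le_mul_of_nonneg_right e3 (show 0 ≤ c - a by linarith)
    linarith
  · have := mul_le_mul_of_nonneg_left (XR_upper2 h1 h2 h3) hpos.le
    have h5 := mul_le_mul_of_nonneg_right e3 (show 0 ≤ d - b by linarith)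
    linarith

/-- the constant of the first comparison -/
def EE (V : ℝ) : ℝ :=
  (1 + 4 * Real.exp (12 * V)) * (1 + 4 * Real.exp (12 * V)) * Real.exp (12 * V)

lemma Lev.A0 (D : Dyn F Φ V ρ) (L : Lev ρ q p Q P) (y : ℝ) :
    wd F q p (wd F q p y) - y ≤ EE V * (wd F q p y - y) ∧
    wd F q p (wd F q p (wd F q p y)) - wd F q p y ≤
      EE V * (wd F q p (wd F q p (wd F q p y)) - wd F q p (wd F q p y)) := by
  set g := wd F q p with hg
  have hgt : ∀ x, x < g x := L.g_gt D
  -- the minimal point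
  obtain ⟨z, hz⟩ : ∃ z, ∀ x, g z - z ≤ g x - x := by
    have hc : ContinuousOn (fun x => g x - x) (Set.Icc 0 1) := by
      have := D.wd_cont q p
      fun_prop
    obtain ⟨z, -, hz⟩ := isCompact_Icc.exists_isMinOn (s := Set.Icc (0:ℝ) 1) ⟨0, by simp⟩ hc
    refine ⟨z, fun x => ?_⟩
    have h1 := hz (a := Int.fract x) ⟨Int.fract_nonneg x, (Int.fract_lt_one x).le⟩
    have h2 := D.wd_add_int q p (Int.fract x) ⌊x⌋
    rw [Int.fract_add_floor] at h2
    have h3 := Int.fract_add_floor x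
    simp only [Set.mem_ofPred_eq] at h1
    rw [hg]; rw [hg] at h1
    linarith
  set m := g z - z with hm
  have mpos : 0 < m := by have := hgt z; linarith
  obtain ⟨z1, hz1⟩ := D.wd_surj q p z
  obtain ⟨z2, hz2⟩ := D.wd_surj q p z1
  rw [← hg] at hz1 hz2
  set B := Real.exp (12 * V) with hB
  have iterq : ∀ x, F^[q] x = g x + p := fun x => by rw [hg]; unfold wd; ring
  have step1 : g z - z1 ≤ 4 * B * m := by
    have := (L.cmp D z2 z2 z1 z (g z) le_rfl (by rw [← hz2]; exact hgt _)
      (by rw [← hz1]; exact hgt _) (hgt z) (by rw [← hg, hz2, hz1]) q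
      (by have := L.qQ; omega) 2 2 ?_ ?_).2
    · rw [← hm] at this; linarith
    · rw [iterq, iterq, iterq, hz1, hz2]
      have := hz z1; rw [hz1] at this; linarith
    · rw [iterq, iterq, iterq, hz1]
      have := hz (g z); linarith
  obtain ⟨j, hj, k, hk1, hk2⟩ := L.cover D (g y) z
  have c1 : ∀ x, F^[j] (g x) = g (F^[j] x) := fun x => by rw [hg, D.wd_iter]
  rw [← hg] at hk2
  have b1 : F^[j] (g (g y)) ≤ g z + k := by
    rw [c1]
    have := (D.wd_mono q p).monotone hk1
    rw [D.wd_add_int] at this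
    exact this
  have b2 : z1 + k ≤ F^[j] (g y) := by
    have h3 : g (z1 + k) ≤ g (F^[j] (g y)) := by
      rw [hg, D.wd_add_int, ← hg, hz1, ← c1]; exact hk2
    exact (D.wd_mono q p).le_iff_le.1 h3
  have l1 : m ≤ F^[j] (g y) - F^[j] y := by rw [c1]; exact hz _
  have l2 : m ≤ F^[j] (g (g (g y))) - F^[j] (g (g y)) := by rw [c1 (g (g y))]; exact hz _
  have Bpos : 0 < B := Real.exp_pos _
  exact L.cmp D y y (g y) (g (g y)) (g (g (g y))) le_rfl (hgt _) (hgt _) (hgt _) le_rfl j hj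
    (1 + 4 * B) (1 + 4 * B)
    (by have := mul_le_mul_of_nonneg_left l1 (show 0 ≤ 4 * B by positivity); linarith)
    (by have := mul_le_mul_of_nonneg_left l2 (show 0 ≤ 4 * B by positivity); linarith)

lemma Lev.A1 (D : Dyn F Φ V ρ) (L : Lev ρ q p Q P) (y : ℝ) :
    wd F q p (wd F q p y) - wd F q p y ≤ EE V * (wd F q p y - y) := by
  have := (L.A0 D y).1
  have := L.g_gt D y
  linarith

lemma Lev.A2 (D : Dyn F Φ V ρ) (L : Lev ρ q p Q P) (x : ℝ) :
    wd F q p x - x ≤ EE V * (wd F q p (wd F q p x) - wd F q p x) := by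
  obtain ⟨y, rfl⟩ := D.wd_surj q p x
  have := (L.A0 D y).2
  have := L.g_gt D (wd F q p (wd F q p y))
  linarith

/-- two-sided power law at a critical point -/
def CritAt (F : ℝ → ℝ) (c K s : ℝ) : Prop :=
  ∀ t t' : ℝ, 0 < t → t ≤ 1 → 0 < t' → t' ≤ 1 →
    F c - F (c - t) ≤ K * (t / t') ^ s * (F (c + t') - F c) ∧
    F (c + t) - F c ≤ K * (t / t') ^ s * (F c - F (c - t'))

lemma CritAt.refl {c K s : ℝ} (h : CritAt F c K s) : CritAt (refl F) (-c) K s := by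
  intro t t' h1 h2 h3 h4
  obtain ⟨e1, e2⟩ := h t t' h1 h2 h3 h4
  unfold Six.refl
  rw [show -(-c - t) = c + t by ring, show -(-c + t') = c - t' by ring,
    show -(-c + t) = c - t by ring, show -(-c - t') = c + t' by ring, neg_neg]
  constructor <;> linarith

lemma wd_refl (q : ℕ) (p : ℤ) (x : ℝ) : wd (refl F) q (-p) (-x) = - wd F q p x := by
  unfold wd
  rw [refl_iter, neg_neg]; push_cast; ring

/-- constants -/
def EA (V K : ℝ) : ℝ :=
  (1 + EE V + EE V * EE V) * EE V * (1 + EE V) * Real.exp (12 * V) * K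

def EB (V K s : ℝ) : ℝ := EA V K ^ (1 / (s - 1))

lemma EE_ge (hV : 0 ≤ V) : 1 ≤ EE V := by
  unfold EE
  have : 1 ≤ Real.exp (12 * V) := Real.one_le_exp (by linarith)
  nlinarith [mul_pos (lt_of_lt_of_le one_pos this) (lt_of_lt_of_le one_pos this)]

/-- comparability with a constant -/
def Cmp (C x y : ℝ) : Prop := x ≤ C * y ∧ y ≤ C * x

lemma six_abs (D : Dyn F Φ V ρ) (L : Lev ρ q p Q P) {Q' : ℕ} {P' : ℤ}
    (L' : Lev (-ρ) Q (-P) Q' P') {c K s : ℝ} (hs : 1 < s) (hK : 0 < K) (hc : CritAt F c K s) :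
    let g := wd F q p
    let h := wd F Q P
    let E := EE V
    let S := (1 + E + E * E) * EB V K s * E
    (c - h c ≤ E * (g c - c)) ∧ (g c - c ≤ EB V K s * (c - h c)) ∧
    (g (g c) - g c ≤ E * (g c - c)) ∧ (g c - c ≤ E * (g (g c) - g c)) ∧
    (g (h c) - h c ≤ (1 + E) * (g c - c)) ∧ (g c - c ≤ EB V K s * (g (h c) - h c)) ∧
    (g c - h (g c) ≤ g c - c) ∧
      (g c - c ≤ E * (S * (1 + E) * Real.exp (12 * V) * (g c - h (g c)))) ∧
    (∀ w, g w = h c → (h c - w ≤ E * ((1 + E) * (g c - c)) ∧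
      g c - c ≤ EB V K s * (E * (h c - w)))) := by
  intro g h E S
  have hV := D.V_nonneg
  have hE : 1 ≤ E := EE_ge hV
  have hB : 0 < Real.exp (12 * V) := Real.exp_pos _
  have ggt : ∀ x, x < g x := L.g_gt D
  have hlt : ∀ x, h x < x := L.h_lt D
  have ghgt : ∀ x, x < g (h x) := L.gh_gt D
  have gm : StrictMono g := D.wd_mono q p
  have hmn : StrictMono h := D.wd_mono Q P
  have comm : ∀ x, g (h x) = h (g x) := fun x => D.wd_comm _ _ _ _ x
  have A1 : ∀ x, g (g x) - g x ≤ E * (g x - x) := L.A1 D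
  have A2 : ∀ x, g x - x ≤ E * (g (g x) - g x) := L.A2 D
  have H1 : ∀ x, h x - h (h x) ≤ E * (x - h x) := fun x => by
    have := L'.A1 D.refl (-x)
    rw [wd_refl, wd_refl] at this
    linarith
  have H2 : ∀ x, x - h x ≤ E * (h x - h (h x)) := fun x => by
    have := L'.A2 D.refl (-x)
    rw [wd_refl, wd_refl] at this
    linarith
  obtain ⟨y, hy⟩ : ∃ y, g y = c := D.wd_surj q p c
  have hcy : y < h c := gm.lt_iff_lt.1 (by rw [hy]; exact ghgt c)
  set I0 := g c - c with hI0
  set I1 := c - h c with hI1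
  have I0pos : 0 < I0 := by have := ggt c; linarith
  have I1pos : 0 < I1 := by have := hlt c; linarith
  have r1 : I1 ≤ E * I0 := by
    have := A2 y
    rw [hy] at this
    linarith
  -- bounds at the image
  have r2 : h (g c) - h (h c) ≤ (1 + E + E * E) * I0 := by
    have e1 := hlt (g c)
    have e2 := H1 c
    have e3 := mul_le_mul_of_nonneg_left r1 (by linarith : 0 ≤ E)
    have e4 : E * (c - h c) = E * I1 := rfl
    nlinarith
  have r3 : h (g (g c)) - h c ≤ (1 + E) * (h (g (g c)) - h (g c)) := by
    have e1 := A2 (h c)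
    rw [comm c, comm (g c)] at e1
    linarith
  have E0 : 0 < E := by linarith
  have r4 : I0 ≤ EB V K s * I1 := by
    have hQ : 1 ≤ Q := le_trans L.qpos L.qQ
    have it : ∀ x, F^[Q - 1] (F x) = h x + P := fun x => by
      rw [← Function.iterate_succ_apply, Nat.succ_eq_add_one, Nat.sub_add_cancel hQ]
      show F^[Q] x = F^[Q] x - P + P
      ring
    have gF : ∀ x, wd F q p (F x) = F (g x) := fun x => (D.wd_iter q p 1 x).symm
    have main := (L.cmp D (F y) (F (h c)) (F c) (F (g c)) (F (g (g c))) (D.mono hcy).le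
      (D.mono (hlt c)) (D.mono (ggt c)) (D.mono (ggt _))
      (by rw [gF, gF, gF, hy]) (Q - 1) (by omega)
      ((1 + E + E * E) * E * (I0 / I1)) (1 + E) ?_ ?_).1
    · have t1 : I1 ≤ 1 := by
        have := L.g_lt D y
        have : c < y + 1 := by rw [← hy]; exact this
        linarith
      have t0 : I0 ≤ 1 := by
        have := L.g_lt D c
        have : g c < c + 1 := this
        linarith
      have cr := (hc I1 I0 I1pos t1 I0pos t0).1
      rw [show c - I1 = h c by rw [hI1]; ring, show c + I0 = g c by rw [hI0]; ring] at cr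
      have f1 := D.mono (hlt c)
      have f2 := D.mono (ggt c)
      set σ := I1 / I0 with hσ
      have σpos : 0 < σ := by positivity
      have inv : I0 / I1 = σ⁻¹ := by rw [hσ, inv_div]
      rw [inv] at main
      set A := EA V K with hA
      have Apos : 0 < A := by rw [hA]; unfold EA; have : 0 < EE V := E0; positivity
      have m2 : F (g c) - F c ≤ A * σ ^ (s - 1) * (F (g c) - F c) := by
        have e1 : A * σ ^ (s - 1) * (F (g c) - F c) =
          (1 + E + E * E) * E * σ⁻¹ * (1 + E) * Real.exp (12 * V) *
            (K * σ ^ s * (F (g c) - F c)) := by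
          rw [hA, Real.rpow_sub_one σpos.ne']
          unfold EA
          field_simp
          rfl
        rw [e1]
        have e2 := mul_le_mul_of_nonneg_left cr
          (show 0 ≤ (1 + E + E * E) * E * σ⁻¹ * (1 + E) * Real.exp (12 * V) by positivity)
        linarith
      have m3 : 1 ≤ A * σ ^ (s - 1) := by
        by_contra hcon
        push Not at hcon
        have : 0 < F (g c) - F c := by linarith
        nlinarith
      have m4 : 1 ≤ A ^ (1 / (s - 1)) * σ := by
        have h1 := Real.rpow_le_rpow zero_le_one m3
          (show 0 ≤ 1 / (s - 1) by apply div_nonneg <;> linarith)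
        rw [Real.one_rpow, Real.mul_rpow Apos.le (by positivity), ← Real.rpow_mul σpos.le,
          mul_one_div_cancel (by linarith), Real.rpow_one] at h1
        exact h1
      have m5 := mul_le_mul_of_nonneg_right m4 I0pos.le
      rw [mul_assoc, hσ, div_mul_cancel₀ _ I0pos.ne', one_mul] at m5
      exact m5
    · rw [it, it, it]
      have e1 := H2 c
      have e2 : (1 + E + E * E) * I0 = (1 + E + E * E) * (I0 / I1) * I1 := by
        field_simp
      have e3 : (1 + E + E * E) * (I0 / I1) * I1 ≤
        (1 + E + E * E) * (I0 / I1) * (E * (h c - h (h c))) :=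
        mul_le_mul_of_nonneg_left e1 (by positivity)
      linarith
    · rw [it, it, it]
      linarith
  have EBpos : 0 < EB V K s := by
    by_contra hcon
    have : EB V K s * I1 ≤ 0 := mul_nonpos_of_nonpos_of_nonneg (by linarith) I1pos.le
    linarith
  have q1 : g (h c) - h c ≤ (1 + E) * I0 := by
    have : g (h c) < g c := gm (hlt c)
    linarith
  have q2 : I0 ≤ EB V K s * (g (h c) - h c) := by
    have := ghgt c
    have := mul_le_mul_of_nonneg_left (show I1 ≤ g (h c) - h c by linarith) EBpos.le
    linarith
  refine ⟨r1, r4, A1 c, A2 c, q1, q2, ?_, ?_, ?_⟩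
  · have := ghgt c
    rw [comm] at this
    linarith
  · have it : ∀ x, F^[Q - q] (g x) = h x + P - p := fun x => by
      show F^[Q - q] (F^[q] x - p) = F^[Q] x - P + P - p
      rw [D.iter_sub_int, ← Function.iterate_add_apply, Nat.sub_add_cancel L.qQ]
      ring
    have main := (L.cmp D c (h (g c)) (g c) (g (g c)) (g (g (g c)))
      (by rw [← comm]; exact (ghgt c).le) (hlt _) (ggt _) (ggt _) le_rfl (Q - q) (by omega)
      S (1 + E) ?_ ?_).1
    · have e1 := A2 c
      have e2 := hlt (g c)
      have e3 := mul_le_mul_of_nonneg_left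
        (show g (g c) - g c ≤ g (g c) - h (g c) by linarith) E0.le
      have e4 := mul_le_mul_of_nonneg_left main E0.le
      linarith
    · rw [← comm, it, it, it]
      have e1 := H2 c
      have e2 := mul_le_mul_of_nonneg_left r4 (show 0 ≤ 1 + E + E * E by positivity)
      have e3 := mul_le_mul_of_nonneg_left e1 (show 0 ≤ (1 + E + E * E) * EB V K s by positivity)
      have e4 : S = (1 + E + E * E) * EB V K s * E := rfl
      rw [e4]
      linarith
    · rw [it, it, it]
      linarith
  · intro w hw
    have e1 := A1 w
    have e2 := A2 w
    rw [hw] at e1 e2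
    constructor
    · exact e2.trans (mul_le_mul_of_nonneg_left q1 E0.le)
    · exact q2.trans (mul_le_mul_of_nonneg_left e1 EBpos.le)

end
end Six

namespace Six

lemma one_sided {G G' : ℝ → ℝ} {u d p m : ℝ} (hud : u < d) (hp : 0 < p)
    (hc : ContinuousOn G (Set.Icc u d)) (hG : G u < G d)
    (hd : ∀ t ∈ Set.Ioo u d, HasDerivAt G (G' t) t)
    (hb : ∀ t ∈ Set.Ioo u d, 0 < p + m * (t - u) → G' t ≤ ((p + m * (t - u)) ^ 2)⁻¹) :
    1 / (d - u) + m / p ≤ (p ^ 2)⁻¹ / (G d - G u) := by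
  have hdu : 0 < d - u := by linarith
  have hGd : 0 < G d - G u := by linarith
  by_cases h0 : p + m * (d - u) ≤ 0
  · have e : 1 / (d - u) + m / p = (p + m * (d - u)) / ((d - u) * p) := by
      field_simp
    rw [e]
    have : (p + m * (d - u)) / ((d - u) * p) ≤ 0 := div_nonpos_of_nonpos_of_nonneg h0 (by positivity)
    have : 0 ≤ (p ^ 2)⁻¹ / (G d - G u) := by positivity
    linarith
  push Not at h0
  have hpos : ∀ t ∈ Set.Icc u d, 0 < p + m * (t - u) := by
    intro t ht
    rcases le_total 0 m with hm | hm
    · have := mul_nonneg hm (sub_nonneg.2 ht.1); linarith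
    · have := mul_le_mul_of_nonpos_left (sub_le_sub_right ht.2 u) hm; linarith
  have key : ∀ t ∈ Set.Ioo u d, HasDerivAt
      (fun t => (t - u) / (p * (p + m * (t - u))) - G t)
      (((p + m * (t - u)) ^ 2)⁻¹ - G' t) t := by
    intro t ht
    have hq := hpos t ⟨ht.1.le, ht.2.le⟩
    have h1 : HasDerivAt (fun t : ℝ => t - u) 1 t := (hasDerivAt_id t).sub_const u
    have h2 : HasDerivAt (fun t : ℝ => p * (p + m * (t - u))) (p * (m * 1)) t :=
      ((h1.const_mul m).const_add p).const_mul p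
    have h3 := (h1.div h2 (by positivity)).sub (hd t ht)
    refine h3.congr_deriv ?_
    congr 1
    field_simp
    ring
  have mono : MonotoneOn (fun t => (t - u) / (p * (p + m * (t - u))) - G t) (Set.Icc u d) := by
    apply monotoneOn_of_deriv_nonneg (convex_Icc u d)
    · refine ContinuousOn.sub (ContinuousOn.div (by fun_prop) (by fun_prop) ?_) hc
      intro t ht
      have := hpos t ht
      positivity
    · rw [interior_Icc]
      intro t ht
      exact (key t ht).differentiableAt.differentiableWithinAt
    · rw [interior_Icc]
      intro t ht
      rw [(key t ht).deriv]
      have := hb t ht (hpos t ⟨ht.1.le, ht.2.le⟩)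
      linarith
  have h1 := mono (Set.left_mem_Icc.2 hud.le) (Set.right_mem_Icc.2 hud.le) hud.le
  simp only [sub_self, zero_div, zero_sub] at h1
  have h2 : G d - G u ≤ (d - u) / (p * (p + m * (d - u))) := by linarith
  rw [le_div_iff₀ hGd]
  have e : 1 / (d - u) + m / p = (p + m * (d - u)) / ((d - u) * p) := by
    field_simp
  rw [e]
  refine (mul_le_mul_of_nonneg_left h2 (by positivity)).trans (le_of_eq ?_)
  have := h0.ne'
  field_simp

lemma tangent {F : ℝ → ℝ} (hF : ContDiff ℝ 3 F) {a d : ℝ}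
    (hpos : ∀ x ∈ Set.Ioo a d, 0 < deriv F x)
    (hS : ∀ x ∈ Set.Ioo a d, schwarzianDeriv F x < 0) {u : ℝ} (hu : u ∈ Set.Ioo a d) :
    ∃ p m : ℝ, 0 < p ∧ deriv F u = (p ^ 2)⁻¹ ∧ ∀ t ∈ Set.Ioo a d, 0 < p + m * (t - u) →
      deriv F t ≤ ((p + m * (t - u)) ^ 2)⁻¹ := by
  have c1 : ContDiff ℝ 2 (deriv F) := by
    have : ContDiff ℝ (2 + 1) F := by convert hF using 1; norm_num
    exact (contDiff_succ_iff_deriv.1 this).2.2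
  have c2 : ContDiff ℝ 1 (deriv (deriv F)) := by
    have : ContDiff ℝ (1 + 1) (deriv F) := by convert c1 using 1; norm_num
    exact (contDiff_succ_iff_deriv.1 this).2.2
  have d1 : Differentiable ℝ (deriv F) := c1.differentiable (by norm_num)
  have d2 : Differentiable ℝ (deriv (deriv F)) := c2.differentiable (by norm_num)
  set ψ : ℝ → ℝ := fun y => deriv (deriv F) y / deriv F y with hψ
  set φ : ℝ → ℝ := fun y => (√(deriv F y))⁻¹ with hφ
  have φpos : ∀ x ∈ Set.Ioo a d, 0 < φ x := fun x hx => by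
    have := hpos x hx
    simp only [hφ]; positivity
  have hφ' : ∀ x ∈ Set.Ioo a d, HasDerivAt φ (-(1/2) * ψ x * φ x) x := by
    intro x hx
    have hp := hpos x hx
    have := ((d1 x).hasDerivAt.sqrt hp.ne').inv (by positivity)
    refine this.congr_deriv ?_
    simp only [hψ, hφ]
    have hsq := Real.sq_sqrt hp.le
    have hs : 0 < √(deriv F x) := by positivity
    rw [hsq]
    field_simp
  have hψ' : ∀ x ∈ Set.Ioo a d, HasDerivAt ψ (deriv ψ x) x := by
    intro x hx
    have := (d2 x).hasDerivAt.div (d1 x).hasDerivAt (hpos x hx).ne'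
    exact this.differentiableAt.hasDerivAt
  have hφ'' : ∀ x ∈ Set.Ioo a d, HasDerivAt (fun x => -(1/2) * ψ x * φ x)
      (-(1/2) * φ x * schwarzianDeriv F x) x := by
    intro x hx
    have := ((hψ' x hx).const_mul (-(1/2))).mul (hφ' x hx)
    refine this.congr_deriv ?_
    have e : schwarzianDeriv F x = deriv ψ x - (1/2) * (ψ x) ^ 2 := rfl
    rw [e]; ring
  have conv : ConvexOn ℝ (Set.Ioo a d) φ := by
    apply convexOn_of_hasDerivWithinAt2_nonneg (convex_Ioo a d)
      (f' := fun x => -(1/2) * ψ x * φ x) (f'' := fun x => -(1/2) * φ x * schwarzianDeriv F x)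
    · intro x hx
      exact (hφ' x hx).continuousAt.continuousWithinAt
    · rw [interior_Ioo]; intro x hx; exact (hφ' x hx).hasDerivWithinAt
    · rw [interior_Ioo]; intro x hx; exact (hφ'' x hx).hasDerivWithinAt
    · rw [interior_Ioo]; intro x hx
      have h1 := hS x hx
      have h2 := φpos x hx
      nlinarith [mul_pos h2 (neg_pos.2 h1)]
  have dF : ∀ x ∈ Set.Ioo a d, deriv F x = ((φ x) ^ 2)⁻¹ := by
    intro x hx
    simp only [hφ]
    rw [inv_pow, inv_inv, Real.sq_sqrt (hpos x hx).le]
  refine ⟨φ u, -(1/2) * ψ u * φ u, φpos u hu, dF u hu, ?_⟩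
  intro t ht hpt
  have tan : φ u + (-(1/2) * ψ u * φ u) * (t - u) ≤ φ t := by
    rcases lt_trichotomy u t with h | h | h
    · have := conv.le_slope_of_hasDerivAt hu ht h (hφ' u hu)
      rw [slope_def_field, le_div_iff₀ (by linarith)] at this
      linarith
    · subst h; simp
    · have := conv.slope_le_of_hasDerivAt ht hu h (hφ' u hu)
      rw [slope_def_field, div_le_iff₀ (by linarith)] at this
      linarith
  rw [dF t ht]
  gcongr

lemma cr_negS {F : ℝ → ℝ} (hF : ContDiff ℝ 3 F) (hm : StrictMono F) {a b c d : ℝ}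
    (h1 : a < b) (h2 : b < c) (h3 : c < d)
    (hpos : ∀ x ∈ Set.Ioo a d, 0 < deriv F x)
    (hS : ∀ x ∈ Set.Ioo a d, schwarzianDeriv F x < 0) :
    XR (F a) (F b) (F c) (F d) ≤ XR a b c d := by
  have dF : Differentiable ℝ F := hF.differentiable (by norm_num)
  have ineq : ∀ u ∈ Set.Ioo a d, 1 / (d - u) + 1 / (u - a) ≤
      deriv F u / (F d - F u) + deriv F u / (F u - F a) := by
    intro u hu
    obtain ⟨p, m, hp, he, hb⟩ := tangent hF hpos hS hu
    have r := one_sided (G := F) (G' := deriv F) hu.2 hp dF.continuous.continuousOn (hm hu.2)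
      (fun t _ => (dF t).hasDerivAt) (m := m) (fun t ht => hb t ⟨hu.1.trans ht.1, ht.2⟩)
    have l := one_sided (G := fun x => - F (-x)) (G' := fun x => deriv F (-x)) (u := -u) (d := -a)
      (m := -m) (p := p)
      (neg_lt_neg hu.1) hp (by have := dF.continuous; fun_prop)
      (by simp only [neg_neg]; have := hm hu.1; linarith)
      (fun t _ => by
        have h1 : HasDerivAt F (deriv F (-t)) (-t) := (dF _).hasDerivAt
        have h2 := (h1.comp t (hasDerivAt_neg t)).neg
        refine h2.congr_deriv ?_
        simp)
      (fun t ht hpt => by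
        have := hb (-t) ⟨by linarith [ht.2], by linarith [ht.1, hu.2]⟩
          (by linarith)
        convert this using 3
        ring)
    simp only [neg_neg] at l
    rw [← he] at r l
    rw [show -a - -u = u - a by ring, show -F a - -F u = F u - F a by ring, neg_div] at l
    linarith
  have anti : AntitoneOn (fun u => Real.log (F d - F u) - Real.log (d - u) -
      Real.log (F u - F a) + Real.log (u - a)) (Set.Icc b c) := by
    have key : ∀ u ∈ Set.Icc b c, HasDerivAt (fun u => Real.log (F d - F u) - Real.log (d - u) -
      Real.log (F u - F a) + Real.log (u - a)) (-(deriv F u) / (F d - F u) - (-1) / (d - u) -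
        deriv F u / (F u - F a) + 1 / (u - a)) u := by
      intro u hu
      have ha : a < u := lt_of_lt_of_le h1 hu.1
      have hd : u < d := lt_of_le_of_lt hu.2 h3
      have k1 := ((dF u).hasDerivAt.const_sub (F d)).log (by have := hm hd; linarith)
      have k2 := ((hasDerivAt_id u).const_sub d).log (by simp only [id]; linarith)
      have k3 := ((dF u).hasDerivAt.sub_const (F a)).log (by have := hm ha; linarith)
      have k4 := ((hasDerivAt_id u).sub_const a).log (by simp only [id]; linarith)
      exact ((k1.sub k2).sub k3).add k4
    apply antitoneOn_of_deriv_nonpos (convex_Icc b c)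
    · intro u hu; exact (key u hu).continuousAt.continuousWithinAt
    · intro u hu
      exact (key u (interior_subset hu)).differentiableAt.differentiableWithinAt
    · intro u hu
      have hu' := interior_subset hu
      rw [(key u hu').deriv]
      have := ineq u ⟨lt_of_lt_of_le h1 hu'.1, lt_of_le_of_lt hu'.2 h3⟩
      rw [neg_div, neg_div]
      linarith
  have fin := anti (Set.left_mem_Icc.2 h2.le) (Set.right_mem_Icc.2 h2.le) h2.le
  simp only at fin
  have lx : ∀ {a b c d : ℝ}, a < b → b < c → c < d → Real.log (XR a b c d) =
      Real.log (b - a) + Real.log (d - c) - (Real.log (c - a) + Real.log (d - b)) := by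
    intro a b c d h1 h2 h3
    unfold XR
    have e1 : b - a ≠ 0 := by linarith
    have e2 : d - c ≠ 0 := by linarith
    have e3 : c - a ≠ 0 := by linarith
    have e4 : d - b ≠ 0 := by linarith
    rw [Real.log_div (mul_ne_zero e1 e2) (mul_ne_zero e3 e4), Real.log_mul e1 e2,
      Real.log_mul e3 e4]
  rw [← Real.log_le_log_iff (XR_pos (hm h1) (hm h2) (hm h3)) (XR_pos h1 h2 h3),
    lx h1 h2 h3, lx (hm h1) (hm h2) (hm h3)]
  linarith

end Six

namespace Six

lemma XR_ratio {F : ℝ → ℝ} (hm : StrictMono F) {a b c d K : ℝ} (hK : 0 ≤ K)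
    (h1 : a < b) (h2 : b < c) (h3 : c < d)
    (e1 : (F b - F a) * (c - a) ≤ K * (F c - F a) * (b - a))
    (e2 : (F d - F c) * (d - b) ≤ K * (F d - F b) * (d - c)) :
    XR (F a) (F b) (F c) (F d) ≤ K ^ 2 * XR a b c d := by
  have f1 := hm h1
  have f2 := hm h2
  have f3 := hm h3
  unfold XR
  rw [← mul_div_assoc, div_le_div_iff₀ (by apply mul_pos <;> linarith)
    (by apply mul_pos <;> linarith)]
  have p1 : 0 ≤ (F d - F c) * (d - b) := by apply mul_nonneg <;> linarith
  have p2 : 0 ≤ K * (F c - F a) * (b - a) := by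
    apply mul_nonneg (mul_nonneg hK _) <;> linarith
  have := mul_le_mul e1 e2 p1 p2
  linarith

lemma mvt_lower {F : ℝ → ℝ} (dF : Differentiable ℝ F) {x y μ : ℝ} (hxy : x ≤ y)
    (h : ∀ t ∈ Set.Ioo x y, μ ≤ deriv F t) : μ * (y - x) ≤ F y - F x := by
  apply (convex_Icc x y).mul_sub_le_image_sub_of_le_deriv dF.continuous.continuousOn
    dF.differentiableOn (by rw [interior_Icc]; exact h) x (Set.left_mem_Icc.2 hxy) y
    (Set.right_mem_Icc.2 hxy) hxy

lemma mvt_upper {F : ℝ → ℝ} (dF : Differentiable ℝ F) {x y μ : ℝ} (hxy : x ≤ y)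
    (h : ∀ t ∈ Set.Ioo x y, deriv F t ≤ μ) : F y - F x ≤ μ * (y - x) := by
  apply (convex_Icc x y).image_sub_le_mul_sub_of_deriv_le dF.continuous.continuousOn
    dF.differentiableOn (by rw [interior_Icc]; exact h) x (Set.left_mem_Icc.2 hxy) y
    (Set.right_mem_Icc.2 hxy) hxy

lemma per_int {g : ℝ → ℝ} (hg : ∀ x, g (x + 1) = g x) (x : ℝ) (k : ℤ) : g (x + k) = g x := by
  have : Function.Periodic g 1 := hg
  simpa using this.int_mul k x

lemma per_bdd {g : ℝ → ℝ} (hc : Continuous g) (hg : ∀ x, g (x + 1) = g x) :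
    ∃ M, 0 < M ∧ ∀ x, |g x| ≤ M := by
  obtain ⟨M, hM⟩ := isCompact_Icc.exists_bound_of_continuousOn (s := Set.Icc (0:ℝ) 1)
    hc.continuousOn
  refine ⟨max M 1, by positivity, fun x => ?_⟩
  have h1 := hM (Int.fract x) ⟨Int.fract_nonneg x, (Int.fract_lt_one x).le⟩
  have h2 := per_int hg (Int.fract x) ⌊x⌋
  rw [Int.fract_add_floor] at h2
  rw [h2]
  exact le_trans h1 (le_max_left _ _)

section
variable (f : MCM)

lemma m_diff : Differentiable ℝ f.F := f.smooth.differentiable (by norm_num)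

lemma m_c1 : ContDiff ℝ 2 (deriv f.F) := by
  have : ContDiff ℝ (2 + 1) f.F := by convert f.smooth using 1; norm_num
  exact (contDiff_succ_iff_deriv.1 this).2.2

lemma m_c2 : ContDiff ℝ 1 (deriv (deriv f.F)) := by
  have : ContDiff ℝ (1 + 1) (deriv f.F) := by convert m_c1 f using 1; norm_num
  exact (contDiff_succ_iff_deriv.1 this).2.2

lemma deriv_per {g : ℝ → ℝ} {C : ℝ} (hg : ∀ x, g (x + 1) = g x + C) (x : ℝ) :
    deriv g (x + 1) = deriv g x := by
  have h1 : deriv (fun y => g (y + 1)) x = deriv g (x + 1) := deriv_comp_add_const g 1 x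
  rw [← h1, funext hg, deriv_add_const]

lemma m_per1 (x : ℝ) : deriv f.F (x + 1) = deriv f.F x := deriv_per f.deg1 x

lemma m_per2 (x : ℝ) : deriv (deriv f.F) (x + 1) = deriv (deriv f.F) x :=
  deriv_per (C := 0) (fun x => by rw [m_per1]; simp) x

lemma m_int (x : ℝ) (k : ℤ) : f.F (x + k) = f.F x + k := by
  have := per_int (g := fun x => f.F x - x) (fun x => by simp only [f.deg1]; ring) x k
  linarith

lemma m_nonneg (x : ℝ) : 0 ≤ deriv f.F x := by
  exact f.mono.monotone.deriv_nonneg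

lemma m_pos {x : ℝ} (h : ∀ (i : Fin f.N) (k : ℤ), x ≠ f.c i + k) : 0 < deriv f.F x := by
  refine lt_of_le_of_ne (m_nonneg f x) fun h0 => ?_
  obtain ⟨i, k, hx⟩ := f.critOnly x h0.symm
  exact h i k hx

lemma m_eta : ∃ η : ℝ, 0 < η ∧ η ≤ 1 ∧ ∀ (i : Fin f.N) (x : ℝ), |x - f.c i| < η → x ∈ f.W i := by
  have h1 : ∀ i, ∃ e > 0, Metric.ball (f.c i) e ⊆ f.W i := fun i =>
    Metric.isOpen_iff.1 (f.W_open i) _ (f.c_mem_W i)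
  choose e he hb using h1
  have : Nonempty (Fin f.N) := ⟨⟨0, f.N_pos⟩⟩
  obtain ⟨i0, hi0⟩ := Finite.exists_min e
  refine ⟨min (e i0) 1, lt_min (he i0) one_pos, min_le_right _ _, fun i x hx => ?_⟩
  apply hb i
  rw [Metric.mem_ball, Real.dist_eq]
  exact lt_of_lt_of_le hx ((min_le_left _ _).trans (hi0 i))

/-- doubling near a critical point -/
lemma m_dbl_crit {η : ℝ} (hη : ∀ (i : Fin f.N) (x : ℝ), |x - f.c i| < η → x ∈ f.W i)
    (i : Fin f.N) {a d x : ℝ} (had : a < d) (hx : x ∈ Set.Icc a d)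
    (ha : |a - f.c i| < η) (hd : |d - f.c i| < η) :
    deriv f.F x * (d - a) ≤ (4 * 2 ^ (f.s i - 1) * f.be i / f.al i) * (f.F d - f.F a) := by
  have hs : 0 < f.s i - 1 := by have := f.s_gt_one i; linarith
  have al := f.al_pos i
  have be : 0 < f.be i := al.trans (f.al_lt_be i)
  set c := f.c i with hc
  rw [abs_lt] at ha hd
  have inW : ∀ t ∈ Set.Icc a d, t ∈ f.W i := fun t ht => hη i t (by
    rw [abs_lt]; constructor <;> linarith [ht.1, ht.2])
  -- common final step
  have fin : ∀ r, 0 < r → |x - c| ≤ r →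
      f.al i * (r / 2) ^ (f.s i - 1) * ((d - a) / 4) ≤ f.F d - f.F a →
      deriv f.F x * (d - a) ≤ (4 * 2 ^ (f.s i - 1) * f.be i / f.al i) * (f.F d - f.F a) := by
    intro r hr hxr hlow
    have up : deriv f.F x ≤ f.be i * r ^ (f.s i - 1) := by
      by_cases hxc : x = c
      · rw [hxc, hc, f.isCrit i]; positivity
      · refine ((f.powerLaw i x (inW x hx) hxc).2.le).trans ?_
        gcongr
    have e1 : f.be i * r ^ (f.s i - 1) * (d - a) = (4 * 2 ^ (f.s i - 1) * f.be i / f.al i) *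
      (f.al i * (r / 2) ^ (f.s i - 1) * ((d - a) / 4)) := by
      rw [Real.div_rpow hr.le (by norm_num)]
      field_simp
    refine (mul_le_mul_of_nonneg_right up (by linarith)).trans ?_
    rw [e1]
    exact mul_le_mul_of_nonneg_left hlow (by positivity)
  rcases le_or_gt |a - c| |d - c| with h | h
  · have hdc : c < d := by
      by_contra hcon
      rw [abs_of_nonpos (by linarith), abs_of_nonpos (by linarith)] at h
      linarith
    rw [abs_of_pos (a := d - c) (by linarith)] at h
    have h' := abs_le.1 h
    refine fin (d - c) (by linarith) (abs_le.2 ⟨by linarith [hx.1], by linarith [hx.2]⟩) ?_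
    have m := mvt_lower (m_diff f) (x := d - (d - a) / 4) (y := d)
      (μ := f.al i * ((d - c) / 2) ^ (f.s i - 1)) (by linarith) (fun t ht => by
        have ht1 : (d - c) / 2 ≤ t - c := by linarith [ht.1]
        have htc : t ≠ c := fun h => by rw [h] at ht1; linarith
        refine le_trans ?_ (f.powerLaw i t (inW t ⟨by linarith [ht.1], ht.2.le⟩) htc).1.le
        have : (d - c) / 2 ≤ |t - c| := ht1.trans (le_abs_self _)
        have : 0 ≤ (d - c) / 2 := by linarith
        gcongr)
    have := f.mono.monotone (show a ≤ d - (d - a) / 4 by linarith)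
    rw [show d - (d - (d - a) / 4) = (d - a) / 4 by ring] at m
    linarith
  · have hac : a < c := by
      by_contra hcon
      rw [abs_of_nonneg (by linarith), abs_of_nonneg (by linarith)] at h
      linarith
    rw [abs_of_neg (a := a - c) (by linarith)] at h
    have h' := abs_lt.1 h
    refine fin (c - a) (by linarith) (abs_le.2 ⟨by linarith [hx.1], by linarith [hx.2]⟩) ?_
    have m := mvt_lower (m_diff f) (x := a) (y := a + (d - a) / 4)
      (μ := f.al i * ((c - a) / 2) ^ (f.s i - 1)) (by linarith) (fun t ht => by
        have ht1 : (c - a) / 2 ≤ -(t - c) := by linarith [ht.2]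
        have htc : t ≠ c := fun h => by rw [h] at ht1; linarith
        refine le_trans ?_ (f.powerLaw i t (inW t ⟨ht.1.le, by linarith [ht.2]⟩) htc).1.le
        have : (c - a) / 2 ≤ |t - c| := ht1.trans (neg_le_abs _)
        have : 0 ≤ (c - a) / 2 := by linarith
        gcongr)
    have := f.mono.monotone (show a + (d - a) / 4 ≤ d by linarith)
    rw [show a + (d - a) / 4 - a = (d - a) / 4 by ring] at m
    linarith

lemma m_lower {η : ℝ} (h0 : 0 < η) : ∃ m : ℝ, 0 < m ∧ ∀ x : ℝ,
    (∀ (i : Fin f.N) (k : ℤ), η ≤ |x - (f.c i + k)|) → m ≤ deriv f.F x := by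
  set S : Set ℝ := Set.Icc 0 1 ∩ {x | ∀ (i : Fin f.N) (k : ℤ), η ≤ |x - (f.c i + k)|} with hS
  have hcl : IsClosed {x : ℝ | ∀ (i : Fin f.N) (k : ℤ), η ≤ |x - (f.c i + k)|} := by
    simp only [Set.ofPred_forall]
    refine isClosed_iInter fun i => isClosed_iInter fun k => ?_
    exact isClosed_le continuous_const (by fun_prop)
  have hcomp : IsCompact S := isCompact_Icc.inter_right hcl
  have red : ∀ x : ℝ, (∀ (i : Fin f.N) (k : ℤ), η ≤ |x - (f.c i + k)|) → Int.fract x ∈ S := by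
    intro x hx
    refine ⟨⟨Int.fract_nonneg x, (Int.fract_lt_one x).le⟩, fun i k => ?_⟩
    have := hx i (k + ⌊x⌋)
    push_cast at this
    convert this using 2
    have := Int.fract_add_floor x
    linarith
  have val : ∀ x : ℝ, deriv f.F x = deriv f.F (Int.fract x) := fun x => by
    have h2 := per_int (m_per1 f) (Int.fract x) ⌊x⌋
    rwa [Int.fract_add_floor] at h2
  rcases S.eq_empty_or_nonempty with he | hne
  · refine ⟨1, one_pos, fun x hx => ?_⟩
    have := red x hx
    rw [he] at this
    exact absurd this (Set.notMem_empty _)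
  · obtain ⟨z, hz, hmin⟩ := hcomp.exists_isMinOn hne (m_c1 f).continuous.continuousOn
    refine ⟨deriv f.F z, m_pos f fun i k h => ?_, fun x hx => ?_⟩
    · have := hz.2 i k
      rw [h, sub_self, abs_zero] at this
      linarith
    · rw [val x]
      exact hmin (red x hx)

lemma m_big {δ : ℝ} (h0 : 0 < δ) : ∃ m : ℝ, 0 < m ∧ ∀ a d : ℝ, δ ≤ d - a →
    m * (d - a) ≤ f.F d - f.F a := by
  have hc := (m_diff f).continuous
  obtain ⟨z, -, hz⟩ := isCompact_Icc.exists_isMinOn (s := Set.Icc (0:ℝ) 1)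
    (f := fun x => f.F (x + δ) - f.F x) ⟨0, by simp⟩ (by fun_prop)
  set m := f.F (z + δ) - f.F z with hm
  have mpos : 0 < m := by have := f.mono (show z < z + δ by linarith); linarith
  have all : ∀ x, m ≤ f.F (x + δ) - f.F x := fun x => by
    have h1 : m ≤ f.F (Int.fract x + δ) - f.F (Int.fract x) :=
      hz (a := Int.fract x) ⟨Int.fract_nonneg x, (Int.fract_lt_one x).le⟩
    have h2 := m_int f (Int.fract x) ⌊x⌋
    have h3 := m_int f (Int.fract x + δ) ⌊x⌋
    rw [show Int.fract x + δ + (⌊x⌋ : ℝ) = x + δ by have := Int.fract_add_floor x; linarith] at h3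
    rw [Int.fract_add_floor] at h2
    linarith
  have iter : ∀ (n : ℕ) (a : ℝ), n * m ≤ f.F (a + n * δ) - f.F a := by
    intro n
    induction n with
    | zero => intro a; simp
    | succ n ih =>
      intro a
      have h1 := ih a
      have h2 := all (a + n * δ)
      push_cast
      rw [show a + ((n : ℝ) + 1) * δ = a + n * δ + δ by ring]
      linarith
  refine ⟨m / (2 * δ), by positivity, fun a d had => ?_⟩
  set n := ⌊(d - a) / δ⌋₊ with hn
  have n1 : (n : ℝ) * δ ≤ d - a := by
    have := Nat.floor_le (show 0 ≤ (d - a) / δ by apply div_nonneg <;> linarith)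
    rwa [← hn, le_div_iff₀ h0] at this
  have n2 : d - a < (n + 1) * δ := by
    have := Nat.lt_floor_add_one ((d - a) / δ)
    rwa [← hn, div_lt_iff₀ h0] at this
  have n3 : (1 : ℝ) ≤ n := by
    have : 1 ≤ n := Nat.le_floor (by rw [Nat.cast_one, le_div_iff₀ h0]; linarith)
    exact_mod_cast this
  have h1 := iter n a
  have h2 := f.mono.monotone (show a + n * δ ≤ d by linarith)
  have h3 : m / (2 * δ) * (d - a) ≤ n * m := by
    rw [div_mul_eq_mul_div, div_le_iff₀ (by positivity)]
    have : d - a ≤ 2 * n * δ := by nlinarith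
    nlinarith
  linarith

/-- trichotomy for intervals -/
lemma m_near {η a d x : ℝ} (hd : d - a < η / 2) (hx : x ∈ Set.Icc a d) {p : ℝ}
    (hp : |x - p| < η / 2) : |a - p| < η ∧ |d - p| < η := by
  rw [abs_lt] at hp
  constructor <;> rw [abs_lt] <;> constructor <;> linarith [hx.1, hx.2]

lemma m_dbl : ∃ K : ℝ, 1 ≤ K ∧ ∀ a d x : ℝ, a < d → x ∈ Set.Icc a d →
    deriv f.F x * (d - a) ≤ K * (f.F d - f.F a) := by
  obtain ⟨η, h0, h1, hη⟩ := m_eta f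
  obtain ⟨M, hM, hM'⟩ := per_bdd (m_c1 f).continuous (m_per1 f)
  obtain ⟨m, hm, hlow⟩ := m_lower f (half_pos h0)
  obtain ⟨m', hm', hbig⟩ := m_big f (half_pos h0)
  set k : Fin f.N → ℝ := fun i => 4 * 2 ^ (f.s i - 1) * f.be i / f.al i with hk
  have kpos : ∀ i, 0 < k i := fun i => by
    have al := f.al_pos i
    have be : 0 < f.be i := al.trans (f.al_lt_be i)
    simp only [hk]; positivity
  have hsum : 0 ≤ ∑ i, k i := Finset.sum_nonneg fun i _ => (kpos i).le
  refine ⟨1 + M / m + M / m' + ∑ i, k i, ?_, fun a d x had hx => ?_⟩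
  · have : 0 < M / m := by positivity
    have : 0 < M / m' := by positivity
    linarith
  have inc := f.mono had
  have q1 : 0 < M / m := by positivity
  have q2 : 0 < M / m' := by positivity
  have up : deriv f.F x ≤ M := (le_abs_self _).trans (hM' x)
  have weak : ∀ K', K' ≤ 1 + M / m + M / m' + ∑ i, k i →
      deriv f.F x * (d - a) ≤ K' * (f.F d - f.F a) →
      deriv f.F x * (d - a) ≤ (1 + M / m + M / m' + ∑ i, k i) * (f.F d - f.F a) := by
    intro K' h1 h2
    exact h2.trans (mul_le_mul_of_nonneg_right h1 (by linarith))
  have gen : ∀ μ, 0 < μ → μ * (d - a) ≤ f.F d - f.F a →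
      deriv f.F x * (d - a) ≤ M / μ * (f.F d - f.F a) := by
    intro μ hμ h
    have h1 := mul_le_mul_of_nonneg_left h (show 0 ≤ M / μ by positivity)
    have h2 := mul_le_mul_of_nonneg_right up (show 0 ≤ d - a by linarith)
    have h3 : M / μ * (μ * (d - a)) = M * (d - a) := by field_simp
    linarith
  by_cases c1 : η / 2 ≤ d - a
  · exact weak (M / m') (by linarith) (gen m' hm' (hbig a d c1))
  push Not at c1
  by_cases c2 : ∃ y ∈ Set.Icc a d, ∃ (i : Fin f.N) (k : ℤ), |y - (f.c i + k)| < η / 2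
  · obtain ⟨y, hy, i, n, hyn⟩ := c2
    obtain ⟨n1, n2⟩ := m_near c1 hy hyn
    have := m_dbl_crit f hη i (a := a - n) (d := d - n) (x := x - n) (by linarith)
      ⟨by linarith [hx.1], by linarith [hx.2]⟩ (by convert n1 using 2; ring)
      (by convert n2 using 2; ring)
    have e1 := per_int (m_per1 f) (x - n) n
    have e2 := m_int f (d - n) n
    have e3 := m_int f (a - n) n
    rw [sub_add_cancel] at e1 e2 e3
    rw [← e1, show d - n - (a - n) = d - a by ring,
      show f.F (d - n) - f.F (a - n) = f.F d - f.F a by linarith] at this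
    refine weak (k i) ?_ this
    have := Finset.single_le_sum (f := k) (fun i _ => (kpos i).le) (Finset.mem_univ i)
    linarith
  · push Not at c2
    refine weak (M / m) (by linarith) (gen m hm ?_)
    exact mvt_lower (m_diff f) had.le fun t ht => hlow t fun i k => c2 t ⟨ht.1.le, ht.2.le⟩ i k

end
end Six

namespace Six

section
variable (f : MCM)

lemma m_step {a b c d L : ℝ} (h1 : a < b) (h2 : b < c) (h3 : c < d) (hL : 0 ≤ L)
    (H : ∀ u v x : ℝ, a ≤ u → v ≤ d → u < v → x ∈ Set.Icc u v →
      deriv f.F x * (v - u) ≤ L * (f.F v - f.F u)) :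
    XR (f.F a) (f.F b) (f.F c) (f.F d) ≤ L ^ 2 * XR a b c d := by
  have slope : ∀ u v : ℝ, u < v → ∃ x ∈ Set.Ioo u v, f.F v - f.F u = deriv f.F x * (v - u) := by
    intro u v huv
    obtain ⟨x, hx, e⟩ := exists_deriv_eq_slope f.F huv (m_diff f).continuous.continuousOn
      (m_diff f).differentiableOn
    refine ⟨x, hx, ?_⟩
    rw [e, div_mul_cancel₀]
    linarith
  apply XR_ratio f.mono hL h1 h2 h3
  · obtain ⟨x, hx, e⟩ := slope a b h1
    have := H a c x le_rfl h3.le (h1.trans h2) ⟨hx.1.le, (hx.2.trans h2).le⟩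
    rw [e]
    have := mul_le_mul_of_nonneg_right this (show 0 ≤ b - a by linarith)
    linarith
  · obtain ⟨x, hx, e⟩ := slope c d h3
    have := H b d x h1.le le_rfl (h2.trans h3) ⟨(h2.trans hx.1).le, hx.2.le⟩
    rw [e]
    have := mul_le_mul_of_nonneg_right this (show 0 ≤ d - c by linarith)
    linarith

lemma m_away {a b c d m M : ℝ} (h1 : a < b) (h2 : b < c) (h3 : c < d) (hm : 0 < m) (hM : 0 < M)
    (hM' : ∀ x, |deriv (deriv f.F) x| ≤ M) (hlow : ∀ x ∈ Set.Icc a d, m ≤ deriv f.F x) :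
    XR (f.F a) (f.F b) (f.F c) (f.F d) ≤ Real.exp (2 * (M / m) * (d - a)) * XR a b c d := by
  have had : a < d := by linarith
  have key := m_step f h1 h2 h3 (L := Real.exp (M / m * (d - a))) (Real.exp_pos _).le ?_
  · rw [← Real.exp_nat_mul] at key
    convert key using 3
    push_cast; ring
  intro u v x hu hv huv hx
  have hmv : deriv f.F x / Real.exp (M / m * (d - a)) * (v - u) ≤ f.F v - f.F u := by
    apply mvt_lower (m_diff f) huv.le
    intro t ht
    rw [div_le_iff₀ (Real.exp_pos _)]
    have l := hlow t ⟨by linarith [ht.1], by linarith [ht.2]⟩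
    have dd : Differentiable ℝ (deriv f.F) := (m_c1 f).differentiable (by norm_num)
    have h := Convex.norm_image_sub_le_of_norm_deriv_le (f := deriv f.F) (s := Set.univ)
      (fun x _ => dd x) (fun x _ => hM' x) convex_univ (Set.mem_univ t) (Set.mem_univ x)
    rw [Real.norm_eq_abs, Real.norm_eq_abs] at h
    have h5 : |x - t| ≤ d - a := by
      rw [abs_le]; constructor <;> linarith [hx.1, hx.2, ht.1, ht.2]
    have h6 := (le_abs_self _).trans h
    have h7 := mul_le_mul_of_nonneg_left h5 hM.le
    have h8 := Real.add_one_le_exp (M / m * (d - a))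
    have h9 := mul_le_mul_of_nonneg_left h8 (show 0 ≤ deriv f.F t by linarith)
    have h10 : M * (d - a) ≤ deriv f.F t * (M / m * (d - a)) := by
      have := mul_le_mul_of_nonneg_right l
        (show 0 ≤ M / m * (d - a) by apply mul_nonneg; positivity; linarith)
      have e : m * (M / m * (d - a)) = M * (d - a) := by field_simp
      linarith
    linarith
  rw [div_mul_eq_mul_div, div_le_iff₀ (Real.exp_pos _)] at hmv
  linarith

lemma m_nocrit {η : ℝ} (hη : ∀ (i : Fin f.N) (x : ℝ), |x - f.c i| < η → x ∈ f.W i)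
    (i : Fin f.N) {a b c d : ℝ} (h1 : a < b) (h2 : b < c) (h3 : c < d)
    (ha : |a - f.c i| < η) (hd : |d - f.c i| < η) (hn : f.c i ∉ Set.Ioo a d) :
    XR (f.F a) (f.F b) (f.F c) (f.F d) ≤ XR a b c d := by
  rw [abs_lt] at ha hd
  have inW : ∀ t ∈ Set.Ioo a d, t ∈ f.W i := fun t ht => hη i t (by
    rw [abs_lt]; constructor <;> linarith [ht.1, ht.2])
  have ne : ∀ t ∈ Set.Ioo a d, t ≠ f.c i := fun t ht h => hn (h ▸ ht)
  refine cr_negS f.smooth f.mono h1 h2 h3 (fun x hx => ?_) (fun x hx => ?_)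
  · refine lt_trans ?_ (f.powerLaw i x (inW x hx) (ne x hx)).1
    have := f.al_pos i
    have : 0 < |x - f.c i| := abs_pos.2 (sub_ne_zero.2 (ne x hx))
    positivity
  · exact f.negSchwarzian i x (inW x hx) (ne x hx)

lemma m_Phi : ∃ (Φ : ℝ → ℝ) (V : ℝ), Monotone Φ ∧ (∀ x, Φ (x + 1) = Φ x + V) ∧
    ∀ a b c d : ℝ, a < b → b < c → c < d →
      XR (f.F a) (f.F b) (f.F c) (f.F d) ≤ Real.exp (Φ d - Φ a) * XR a b c d := by
  obtain ⟨η, h0, -, hη⟩ := m_eta f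
  obtain ⟨M, hM, hM'⟩ := per_bdd (m_c2 f).continuous (m_per2 f)
  obtain ⟨m, hm, hlow⟩ := m_lower f (half_pos h0)
  obtain ⟨K, hK, hdbl⟩ := m_dbl f
  set k := 2 * Real.log K with hk
  have hk0 : 0 ≤ k := by have := Real.log_nonneg hK; positivity
  have hKk : K ^ 2 = Real.exp k := by
    rw [hk, two_mul, Real.exp_add, Real.exp_log (by linarith), sq]
  set A := 2 * (M / m) + k / (η / 2) with hA
  have hA0 : 0 ≤ A := by positivity
  set S : ℝ → ℝ := fun x => ∑ i, (⌊x - f.c i⌋ : ℝ) with hS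
  have Sm : Monotone S := fun x y hxy => by
    apply Finset.sum_le_sum
    intro i _
    exact_mod_cast Int.floor_le_floor (by linarith)
  refine ⟨fun x => A * x + k * S x, A + k * f.N, ?_, ?_, ?_⟩
  · intro x y hxy
    have := mul_le_mul_of_nonneg_left hxy hA0
    have := mul_le_mul_of_nonneg_left (Sm hxy) hk0
    simp only
    linarith
  · intro x
    have : S (x + 1) = S x + f.N := by
      simp only [hS]
      have : ∀ i, (⌊x + 1 - f.c i⌋ : ℝ) = ⌊x - f.c i⌋ + 1 := fun i => by
        rw [show x + 1 - f.c i = x - f.c i + 1 by ring, Int.floor_add_one]; push_cast; ring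
      simp only [this, Finset.sum_add_distrib]
      simp
    simp only [this]
    ring
  intro a b c d h1 h2 h3
  have had : a < d := by linarith
  have X := XR_pos h1 h2 h3
  have Sle := Sm had.le
  have fin : ∀ e, e ≤ A * (d - a) + k * (S d - S a) →
      XR (f.F a) (f.F b) (f.F c) (f.F d) ≤ Real.exp e * XR a b c d →
      XR (f.F a) (f.F b) (f.F c) (f.F d)
        ≤ Real.exp ((A * d + k * S d) - (A * a + k * S a)) * XR a b c d := by
    intro e he h
    refine h.trans (mul_le_mul_of_nonneg_right (Real.exp_le_exp.2 ?_) X.le)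
    linarith
  have n1 : 0 ≤ 2 * (M / m) * (d - a) := by apply mul_nonneg; positivity; linarith
  have n2 : 0 ≤ k / (η / 2) * (d - a) := by apply mul_nonneg; positivity; linarith
  have n3 : 0 ≤ k * (S d - S a) := mul_nonneg hk0 (by linarith)
  have eA : A * (d - a) = 2 * (M / m) * (d - a) + k / (η / 2) * (d - a) := by rw [hA]; ring
  have gen : XR (f.F a) (f.F b) (f.F c) (f.F d) ≤ Real.exp k * XR a b c d := by
    rw [← hKk]
    exact m_step f h1 h2 h3 (by linarith) fun u v x _ _ huv hx => hdbl u v x huv hx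
  show _ ≤ Real.exp ((A * d + k * S d) - (A * a + k * S a)) * XR a b c d
  by_cases c1 : η / 2 ≤ d - a
  · refine fin k ?_ gen
    have : k ≤ k / (η / 2) * (d - a) := by
      rw [div_mul_eq_mul_div, le_div_iff₀ (by positivity)]
      exact mul_le_mul_of_nonneg_left c1 hk0
    linarith
  push Not at c1
  by_cases c2 : ∃ (i : Fin f.N) (n : ℤ), f.c i + n ∈ Set.Ioc a d
  · obtain ⟨i, n, hn1, hn2⟩ := c2
    refine fin k ?_ gen
    have h4 : (⌊a - f.c i⌋ : ℝ) + 1 ≤ ⌊d - f.c i⌋ := by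
      have e1 : ⌊a - f.c i⌋ < n := Int.floor_lt.2 (by linarith)
      have e2 : n ≤ ⌊d - f.c i⌋ := Int.le_floor.2 (by linarith)
      exact_mod_cast (by omega : ⌊a - f.c i⌋ + 1 ≤ ⌊d - f.c i⌋)
    have h5 : 1 ≤ S d - S a := by
      simp only [hS]
      rw [← Finset.sum_sub_distrib]
      have := Finset.single_le_sum (f := fun i => (⌊d - f.c i⌋ : ℝ) - ⌊a - f.c i⌋)
        (fun j _ => by
          have : (⌊a - f.c j⌋ : ℝ) ≤ ⌊d - f.c j⌋ := by
            exact_mod_cast Int.floor_le_floor (by linarith)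
          linarith) (Finset.mem_univ i)
      linarith
    have := mul_le_mul_of_nonneg_left h5 hk0
    linarith
  push Not at c2
  by_cases c3 : ∃ y ∈ Set.Icc a d, ∃ (i : Fin f.N) (k : ℤ), |y - (f.c i + k)| < η / 2
  · obtain ⟨y, hy, i, n, hyn⟩ := c3
    obtain ⟨n1', n2'⟩ := m_near c1 hy hyn
    refine fin 0 (by linarith) ?_
    rw [Real.exp_zero, one_mul]
    have := m_nocrit f hη i (a := a - n) (b := b - n) (c := c - n) (d := d - n)
      (by linarith) (by linarith) (by linarith)
      (by convert n1' using 2; ring) (by convert n2' using 2; ring)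
      (fun h => c2 i n ⟨by linarith [h.1], by linarith [h.2]⟩)
    have e : ∀ x, f.F x = f.F (x - n) + n := fun x => by
      have := m_int f (x - n) n
      rwa [sub_add_cancel] at this
    rw [e a, e b, e c, e d, XR_add]
    have e' := XR_add (a - n) (b - n) (c - n) (d - n) n
    simp only [sub_add_cancel] at e'
    rw [e']
    exact this
  · push Not at c3
    exact fin _ (by linarith)
      (m_away f h1 h2 h3 hm hM hM' fun x hx => hlow x fun i k => c3 x hx i k)

lemma m_crit (i : Fin f.N) : ∃ K : ℝ, 0 < K ∧ CritAt f.F (f.c i) K (f.s i) := by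
  obtain ⟨η, h0, hη1, hη⟩ := m_eta f
  have al := f.al_pos i
  have be : 0 < f.be i := al.trans (f.al_lt_be i)
  have hs : 0 < f.s i - 1 := by have := f.s_gt_one i; linarith
  set c := f.c i with hc
  set s := f.s i with hs'
  set K1 := f.be i + (1 / η) ^ s with hK1
  set K2 := f.al i * (η / 4) ^ s with hK2
  have K1pos : 0 < K1 := by positivity
  have K2pos : 0 < K2 := by positivity
  have pw : ∀ t : ℝ, 0 < t → t ^ (s - 1) * t = t ^ s := fun t ht => by
    rw [← Real.rpow_add_one ht.ne']; congr 1; ring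
  have F1 : f.F (c + 1) = f.F c + 1 := f.deg1 c
  have F2 : f.F c = f.F (c - 1) + 1 := by
    have := f.deg1 (c - 1)
    rwa [sub_add_cancel] at this
  -- upper bounds
  have dup : ∀ t x : ℝ, 0 < t → t < η → |x - c| ≤ t → deriv f.F x ≤ f.be i * t ^ (s - 1) := by
    intro t x ht htη hx
    by_cases hxc : x = c
    · rw [hxc, hc, f.isCrit i]; positivity
    · refine ((f.powerLaw i x (hη i x (hx.trans_lt htη)) hxc).2.le).trans ?_
      gcongr
  have up : ∀ t : ℝ, 0 < t → t ≤ 1 →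
      f.F c - f.F (c - t) ≤ K1 * t ^ s ∧ f.F (c + t) - f.F c ≤ K1 * t ^ s := by
    intro t ht ht1
    have ts : 0 < t ^ s := by positivity
    rcases lt_or_ge t η with htη | htη
    · have b1 := mvt_upper (m_diff f) (x := c - t) (y := c) (μ := f.be i * t ^ (s - 1))
        (by linarith) (fun x hx => dup t x ht htη (by
          rw [abs_le]; constructor <;> linarith [hx.1, hx.2]))
      have b2 := mvt_upper (m_diff f) (x := c) (y := c + t) (μ := f.be i * t ^ (s - 1))
        (by linarith) (fun x hx => dup t x ht htη (by
          rw [abs_le]; constructor <;> linarith [hx.1, hx.2]))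
      rw [show c - (c - t) = t by ring, mul_assoc, pw t ht] at b1
      rw [show c + t - c = t by ring, mul_assoc, pw t ht] at b2
      have : 0 ≤ (1 / η) ^ s * t ^ s := by positivity
      constructor <;> rw [hK1, add_mul] <;> linarith
    · have g1 : 1 ≤ (1 / η) ^ s * t ^ s := by
        rw [← Real.mul_rpow (by positivity) ht.le]
        apply Real.one_le_rpow
        · rw [one_div_mul_eq_div, le_div_iff₀ h0]; linarith
        · linarith
      have g2 : 0 ≤ f.be i * t ^ s := by positivity
      have m1 := f.mono.monotone (show c - 1 ≤ c - t by linarith)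
      have m2 := f.mono.monotone (show c + t ≤ c + 1 by linarith)
      constructor <;> rw [hK1, add_mul] <;> linarith
  -- lower bounds
  have dlow : ∀ r x : ℝ, 0 < r → 2 * r < η → r ≤ |x - c| → |x - c| ≤ 2 * r →
      f.al i * r ^ (s - 1) ≤ deriv f.F x := by
    intro r x hr hrη hx1 hx2
    have hxc : x ≠ c := fun h => by rw [h, sub_self, abs_zero] at hx1; linarith
    refine le_trans ?_ (f.powerLaw i x (hη i x (hx2.trans_lt hrη)) hxc).1.le
    gcongr
  have low : ∀ t : ℝ, 0 < t → t ≤ 1 →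
      K2 * t ^ s ≤ f.F c - f.F (c - t) ∧ K2 * t ^ s ≤ f.F (c + t) - f.F c := by
    intro t ht ht1
    set r := η / 4 * t with hr
    have r0 : 0 < r := by positivity
    have r1 : 2 * r < η := by rw [hr]; nlinarith
    have r2 : 2 * r ≤ t := by rw [hr]; nlinarith
    have b1 := mvt_lower (m_diff f) (x := c - 2 * r) (y := c - r) (μ := f.al i * r ^ (s - 1))
      (by linarith) (fun x hx => dlow r x r0 r1
        (by rw [abs_of_neg (by linarith [hx.2])]; linarith [hx.2])
        (by rw [abs_of_neg (by linarith [hx.2])]; linarith [hx.1]))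
    have b2 := mvt_lower (m_diff f) (x := c + r) (y := c + 2 * r) (μ := f.al i * r ^ (s - 1))
      (by linarith) (fun x hx => dlow r x r0 r1
        (by rw [abs_of_pos (by linarith [hx.1])]; linarith [hx.1])
        (by rw [abs_of_pos (by linarith [hx.1])]; linarith [hx.2]))
    rw [show c - r - (c - 2 * r) = r by ring, mul_assoc, pw r r0] at b1
    rw [show c + 2 * r - (c + r) = r by ring, mul_assoc, pw r r0] at b2
    have e : K2 * t ^ s = f.al i * r ^ s := by
      rw [hK2, hr, Real.mul_rpow (by positivity) ht.le]; ring
    have m1 := f.mono.monotone (show c - t ≤ c - 2 * r by linarith)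
    have m2 := f.mono.monotone (show c - r ≤ c by linarith)
    have m3 := f.mono.monotone (show c ≤ c + r by linarith)
    have m4 := f.mono.monotone (show c + 2 * r ≤ c + t by linarith)
    constructor <;> linarith
  refine ⟨K1 / K2, by positivity, fun t t' ht ht1 ht' ht1' => ?_⟩
  have e : K1 * t ^ s = K1 / K2 * (t / t') ^ s * (K2 * t' ^ s) := by
    rw [Real.div_rpow ht.le ht'.le]
    have : t' ^ s ≠ 0 := by positivity
    field_simp
  have k : 0 ≤ K1 / K2 * (t / t') ^ s := by positivity
  obtain ⟨u1, u2⟩ := up t ht ht1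
  obtain ⟨l1, l2⟩ := low t' ht' ht1'
  rw [e] at u1 u2
  exact ⟨u1.trans (mul_le_mul_of_nonneg_left l2 k), u2.trans (mul_le_mul_of_nonneg_left l1 k)⟩

end
end Six

namespace Six

lemma mcm_dyn (f : MCM) {ρ : ℝ} (hirr : Irrational ρ) (hrot : HasRotationNumber f.F ρ) :
    ∃ (Φ : ℝ → ℝ) (V : ℝ), Dyn f.F Φ V ρ := by
  obtain ⟨Φ, V, h1, h2, h3⟩ := m_Phi f
  let G : CircleDeg1Lift := ⟨⟨f.F, f.mono.monotone⟩, f.deg1⟩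
  have hG : ∀ n : ℕ, ⇑(G ^ n) = f.F^[n] := fun n => CircleDeg1Lift.coe_pow G n
  have hτ : CircleDeg1Lift.translationNumber G = ρ := by
    have t := G.tendsto_translation_number₀
    simp only [hG] at t
    exact tendsto_nhds_unique t hrot
  refine ⟨Φ, V, f.mono, (m_diff f).continuous, f.deg1, h1, h2, h3, hirr, fun n k h x => ?_,
    fun n k h x => ?_⟩
  · have := (G ^ n).lt_map_of_int_lt_translationNumber (n := k)
      (by rw [CircleDeg1Lift.translationNumber_pow, hτ]; linarith) x
    rw [hG] at this
    linarith
  · have := (G ^ n).map_lt_of_translationNumber_lt_int (n := k)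
      (by rw [CircleDeg1Lift.translationNumber_pow, hτ]; linarith) x
    rw [hG] at this
    linarith

section CF
variable {ρ : ℝ}

lemma gauss_mem (hirr : Irrational ρ) (hmem : ρ ∈ Set.Ioo (0 : ℝ) 1) (n : ℕ) :
    Irrational (gaussMap^[n] ρ) ∧ gaussMap^[n] ρ ∈ Set.Ioo (0 : ℝ) 1 := by
  induction n with
  | zero => exact ⟨hirr, hmem⟩
  | succ n ih =>
    rw [Function.iterate_succ_apply']
    obtain ⟨i1, -⟩ := ih
    have i2 : Irrational (gaussMap (gaussMap^[n] ρ)) := by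
      unfold gaussMap
      rw [Int.fract]
      exact i1.inv.sub_intCast _
    refine ⟨i2, lt_of_le_of_ne (Int.fract_nonneg _) (fun h => ?_), Int.fract_lt_one _⟩
    apply i2
    exact ⟨0, by rw [← h]; simp⟩

lemma digit_eq (hirr : Irrational ρ) (hmem : ρ ∈ Set.Ioo (0 : ℝ) 1) (n : ℕ) :
    (cfDigit ρ n : ℝ) = (gaussMap^[n] ρ)⁻¹ - gaussMap^[n + 1] ρ ∧ 1 ≤ cfDigit ρ n := by
  obtain ⟨-, h1, h2⟩ := gauss_mem hirr hmem n
  have h3 : 1 ≤ ⌊(gaussMap^[n] ρ)⁻¹⌋ := by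
    rw [Int.le_floor]
    simpa using (one_le_inv₀ h1).2 h2.le
  have h4 : ((cfDigit ρ n : ℕ) : ℤ) = ⌊(gaussMap^[n] ρ)⁻¹⌋ := by
    unfold cfDigit
    exact Int.toNat_of_nonneg (by omega)
  constructor
  · rw [Function.iterate_succ_apply', show gaussMap (gaussMap^[n] ρ)
      = Int.fract (gaussMap^[n] ρ)⁻¹ from rfl, Int.fract]
    have : (cfDigit ρ n : ℝ) = ((⌊(gaussMap^[n] ρ)⁻¹⌋ : ℤ) : ℝ) := by rw [← h4]; simp
    rw [this]; ring
  · omega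

lemma q_pos_le (hirr : Irrational ρ) (hmem : ρ ∈ Set.Ioo (0 : ℝ) 1) (n : ℕ) :
    0 < qDen ρ n ∧ qDen ρ n ≤ qDen ρ (n + 1) := by
  induction n with
  | zero => exact ⟨by simp [qDen], by simpa [qDen] using (digit_eq hirr hmem 0).2⟩
  | succ n ih =>
    have := (digit_eq hirr hmem (n + 1)).2
    refine ⟨by omega, ?_⟩
    rw [show qDen ρ (n + 1 + 1) = cfDigit ρ (n + 1) * qDen ρ (n + 1) + qDen ρ n from rfl]
    nlinarith

/-- signed error -/
def er (ρ : ℝ) (n : ℕ) : ℝ := (-1) ^ n * (qDen ρ n * ρ - pNum ρ n)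

lemma er_succ (hirr : Irrational ρ) (hmem : ρ ∈ Set.Ioo (0 : ℝ) 1) (n : ℕ) :
    er ρ (n + 1) = gaussMap^[n + 1] ρ * er ρ n := by
  induction n with
  | zero =>
    have h := (digit_eq hirr hmem 0).1
    have : ρ ≠ 0 := hmem.1.ne'
    simp only [Function.iterate_zero, id] at h
    simp only [er, qDen, pNum]
    rw [h]
    field_simp
    push_cast
    ring
  | succ n ih =>
    have h := (digit_eq hirr hmem (n + 1)).1
    have hg := (gauss_mem hirr hmem (n + 1)).2.1.ne'
    have e : er ρ (n + 1 + 1) = er ρ n - cfDigit ρ (n + 1) * er ρ (n + 1) := by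
      simp only [er, qDen, pNum]
      push_cast
      ring
    rw [e, h, ih]
    field_simp
    ring

lemma er_pos (hirr : Irrational ρ) (hmem : ρ ∈ Set.Ioo (0 : ℝ) 1) (n : ℕ) :
    0 < er ρ n ∧ er ρ n < 1 := by
  induction n with
  | zero => simpa [er, qDen, pNum] using hmem
  | succ n ih =>
    obtain ⟨-, g1, g2⟩ := gauss_mem hirr hmem (n + 1)
    rw [er_succ hirr hmem]
    exact ⟨mul_pos g1 ih.1, by nlinarith⟩

lemma er_lt (hirr : Irrational ρ) (hmem : ρ ∈ Set.Ioo (0 : ℝ) 1) (n : ℕ) :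
    er ρ (n + 1) < er ρ n := by
  obtain ⟨-, g1, g2⟩ := gauss_mem hirr hmem (n + 1)
  have := er_pos hirr hmem n
  rw [er_succ hirr hmem]
  nlinarith

lemma det_eq (ρ : ℝ) (n : ℕ) : (-1 : ℤ) ^ n * ((qDen ρ n : ℤ) * pNum ρ (n + 1)
    - (qDen ρ (n + 1) : ℤ) * pNum ρ n) = 1 := by
  induction n with
  | zero => simp [qDen, pNum]
  | succ n ih =>
    rw [show qDen ρ (n + 1 + 1) = cfDigit ρ (n + 1) * qDen ρ (n + 1) + qDen ρ n from rfl,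
      show pNum ρ (n + 1 + 1) = cfDigit ρ (n + 1) * pNum ρ (n + 1) + pNum ρ n from rfl]
    push_cast
    linear_combination ih

lemma er_best (hirr : Irrational ρ) (hmem : ρ ∈ Set.Ioo (0 : ℝ) 1) (n : ℕ) (j : ℕ)
    (hj : 0 < j) (hjQ : j < qDen ρ (n + 1)) (k : ℤ) : er ρ n ≤ |j * ρ - k| := by
  set q := qDen ρ n with hq
  set Q := qDen ρ (n + 1) with hQ
  set p := pNum ρ n with hp
  set P := pNum ρ (n + 1) with hP
  have det := det_eq ρ n
  rw [← hq, ← hQ, ← hp, ← hP] at det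
  have q0 := (q_pos_le hirr hmem n).1
  have Q0 := (q_pos_le hirr hmem (n + 1)).1
  rw [← hq] at q0
  rw [← hQ] at Q0
  set ε : ℤ := (-1) ^ n with hε
  have ε2 : ε = 1 ∨ ε = -1 := neg_one_pow_eq_or ℤ n
  have εR : ((-1 : ℝ)) ^ n = (ε : ℝ) := by rw [hε]; push_cast; ring
  set u : ℤ := ε * (j * P - k * Q) with hu
  set v : ℤ := ε * (q * k - p * j) with hv
  have ej : (j : ℤ) = u * q + v * Q := by
    rw [hu, hv]
    linear_combination -(j : ℤ) * det
  have ek : k = u * p + v * P := by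
    rw [hu, hv]
    linear_combination -k * det
  have e0 := (er_pos hirr hmem n).1
  have e1 := (er_pos hirr hmem (n + 1)).1
  have en : er ρ n = ε * (q * ρ - p) := by rw [er, εR]
  have en1 : er ρ (n + 1) = - (ε * (Q * ρ - P)) := by rw [er, pow_succ, εR]; ring
  have main : ε * (j * ρ - k) = u * er ρ n - v * er ρ (n + 1) := by
    have ej' : (j : ℝ) = u * q + v * Q := by exact_mod_cast ej
    have ek' : (k : ℝ) = u * p + v * P := by exact_mod_cast ek
    rw [en, en1, ej', ek']
    ring
  have habs : |(j * ρ - k : ℝ)| = |u * er ρ n - v * er ρ (n + 1)| := by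
    rw [← main, abs_mul]
    rcases ε2 with h | h <;> rw [h] <;> simp
  rw [habs]
  have jZ : (0 : ℤ) < j := by exact_mod_cast hj
  have jQZ : (j : ℤ) < Q := by exact_mod_cast hjQ
  have qZ : (0 : ℤ) < q := by exact_mod_cast q0
  have QZ : (0 : ℤ) < Q := by exact_mod_cast Q0
  rcases lt_trichotomy u 0 with hu0 | hu0 | hu0
  · have v0 : 0 ≤ v := by
      by_contra hc
      push Not at hc
      nlinarith
    have uR : (u : ℝ) ≤ -1 := by exact_mod_cast (by omega : u ≤ -1)
    have vR : (0 : ℝ) ≤ v := by exact_mod_cast v0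
    refine le_trans ?_ (neg_le_abs _)
    nlinarith
  · exfalso
    rw [hu0, zero_mul, zero_add] at ej
    rw [ej] at jZ jQZ
    have : 0 < v := by
      by_contra hc
      push Not at hc
      nlinarith
    nlinarith
  · have v0 : v ≤ 0 := by
      by_contra hc
      push Not at hc
      nlinarith
    have uR : (1 : ℝ) ≤ u := by exact_mod_cast (by omega : 1 ≤ u)
    have vR : (v : ℝ) ≤ 0 := by exact_mod_cast v0
    refine le_trans ?_ (le_abs_self _)
    nlinarith

lemma lev_of (hirr : Irrational ρ) (hmem : ρ ∈ Set.Ioo (0 : ℝ) 1) (n : ℕ) :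
    Lev ((((-1) ^ n : ℤ) : ℝ) * ρ) (qDen ρ n) ((-1) ^ n * (pNum ρ n : ℤ))
      (qDen ρ (n + 1)) ((-1) ^ n * (pNum ρ (n + 1) : ℤ)) := by
  have q0 := q_pos_le hirr hmem n
  have e0 := er_pos hirr hmem n
  have e1 := er_pos hirr hmem (n + 1)
  have e2 := er_lt hirr hmem n
  have a0 : (qDen ρ n : ℝ) * ((((-1) ^ n : ℤ) : ℝ) * ρ) - (((-1) ^ n * (pNum ρ n : ℤ) : ℤ) : ℝ)
      = er ρ n := by rw [er]; push_cast; ring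
  have a1 : (qDen ρ (n + 1) : ℝ) * ((((-1) ^ n : ℤ) : ℝ) * ρ)
      - (((-1) ^ n * (pNum ρ (n + 1) : ℤ) : ℤ) : ℝ) = - er ρ (n + 1) := by
    rw [er]; push_cast; ring
  refine ⟨q0.1, q0.2, ?_, ?_, ?_, ?_, fun j hj hjQ k => ?_⟩
  · rw [a0]; exact e0.1
  · rw [a0]; exact e0.2
  · rw [a1]; linarith
  · rw [a0, a1]; linarith
  · rw [a0]
    have := er_best hirr hmem n j hj hjQ ((-1) ^ n * k)
    refine this.trans (le_of_eq ?_)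
    push_cast
    rcases neg_one_pow_eq_or ℝ n with h | h <;> rw [h]
    · simp
    · rw [← abs_neg]; congr 1; ring

end CF

section fin
variable {F Φ : ℝ → ℝ} {V ρ : ℝ}

/-- the final constant -/
def CC (V K s : ℝ) : ℝ :=
  2 + |EE V| + |EB V K s| + |1 + EE V|
    + |EE V * ((1 + EE V + EE V * EE V) * EB V K s * EE V * (1 + EE V) * Real.exp (12 * V))|
    + |EE V * (1 + EE V)| + |EB V K s * EE V|

lemma six_list (D : Dyn F Φ V ρ) {q Q Q' : ℕ} {p P P' : ℤ} (L : Lev ρ q p Q P)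
    (L' : Lev (-ρ) Q (-P) Q' P') {c K s : ℝ} (hs : 1 < s) (hK : 0 < K) (hc : CritAt F c K s)
    {w : ℝ} (hw : wd F q p w = wd F Q P c) {I : ℝ}
    (hI : I = |wd F q p c - c| ∨ I = |wd F Q P c - c| ∨
      I = |wd F q p (wd F q p c) - wd F q p c| ∨ I = |wd F q p (wd F Q P c) - wd F Q P c| ∨
      I = |wd F Q P (wd F q p c) - wd F q p c| ∨ I = |wd F q p w - w|) :
    0 < |wd F q p c - c| ∧ I ≤ CC V K s * |wd F q p c - c| ∧
      |wd F q p c - c| ≤ CC V K s * I := by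
  obtain ⟨b1, b2, b3, b4, b5, b6, b7, b8, b9⟩ := six_abs D L L' hs hK hc
  obtain ⟨b9, b10⟩ := b9 w hw
  have g0 := L.g_gt D c
  have g1 := L.g_gt D (wd F q p c)
  have g2 := L.g_gt D (wd F Q P c)
  have g3 := L.g_gt D w
  have h0 := L.h_lt D c
  have h1 := L.h_lt D (wd F q p c)
  have gw : wd F q p w - w = wd F Q P c - w := by rw [hw]
  have n1 := abs_nonneg (EE V)
  have n2 := abs_nonneg (EB V K s)
  have n3 := abs_nonneg (1 + EE V)
  have n4 := abs_nonneg
    (EE V * ((1 + EE V + EE V * EE V) * EB V K s * EE V * (1 + EE V) * Real.exp (12 * V)))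
  have n5 := abs_nonneg (EE V * (1 + EE V))
  have n6 := abs_nonneg (EB V K s * EE V)
  have m1 := le_abs_self (EE V)
  have m2 := le_abs_self (EB V K s)
  have m3 := le_abs_self (1 + EE V)
  have m4 := le_abs_self
    (EE V * ((1 + EE V + EE V * EE V) * EB V K s * EE V * (1 + EE V) * Real.exp (12 * V)))
  have m5 := le_abs_self (EE V * (1 + EE V))
  have m6 := le_abs_self (EB V K s * EE V)
  have up : ∀ k x y : ℝ, 0 < x → k ≤ CC V K s → y ≤ k * x → y ≤ CC V K s * x :=
    fun k x y hx hk h => h.trans (mul_le_mul_of_nonneg_right hk hx.le)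
  have a0 : |wd F q p c - c| = wd F q p c - c := abs_of_pos (by linarith)
  rw [a0]
  have I0 : 0 < wd F q p c - c := by linarith
  refine ⟨I0, ?_⟩
  rcases hI with h | h | h | h | h | h
  · rw [h, a0]
    exact ⟨up 1 _ _ I0 (by unfold CC; linarith) (by linarith),
      up 1 _ _ I0 (by unfold CC; linarith) (by linarith)⟩
  · rw [h, abs_sub_comm, abs_of_pos (by linarith)]
    exact ⟨up _ _ _ I0 (by unfold CC; linarith) b1,
      up _ _ _ (by linarith) (by unfold CC; linarith) b2⟩
  · rw [h, abs_of_pos (by linarith)]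
    exact ⟨up _ _ _ I0 (by unfold CC; linarith) b3,
      up _ _ _ (by linarith) (by unfold CC; linarith) b4⟩
  · rw [h, abs_of_pos (by linarith)]
    exact ⟨up _ _ _ I0 (by unfold CC; linarith) b5,
      up _ _ _ (by linarith) (by unfold CC; linarith) b6⟩
  · rw [h, abs_sub_comm, abs_of_pos (by linarith)]
    exact ⟨up 1 _ _ I0 (by unfold CC; linarith) (by linarith),
      up (EE V * ((1 + EE V + EE V * EE V) * EB V K s * EE V * (1 + EE V) * Real.exp (12 * V)))
        _ _ (by linarith) (by unfold CC; linarith) (by linarith)⟩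
  · rw [h, abs_of_pos (by linarith), gw]
    exact ⟨up (EE V * (1 + EE V)) _ _ I0 (by unfold CC; linarith) (by linarith),
      up (EB V K s * EE V) _ _ (by linarith) (by unfold CC; linarith) (by linarith)⟩

lemma six_refl (D : Dyn F Φ V ρ) {q Q Q' : ℕ} {p P P' : ℤ} (L : Lev (-ρ) q (-p) Q (-P))
    (L' : Lev ρ Q P Q' P') {c K s : ℝ} (hs : 1 < s) (hK : 0 < K) (hc : CritAt F c K s)
    {w : ℝ} (hw : wd F q p w = wd F Q P c) {I : ℝ}
    (hI : I = |wd F q p c - c| ∨ I = |wd F Q P c - c| ∨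
      I = |wd F q p (wd F q p c) - wd F q p c| ∨ I = |wd F q p (wd F Q P c) - wd F Q P c| ∨
      I = |wd F Q P (wd F q p c) - wd F q p c| ∨ I = |wd F q p w - w|) :
    0 < |wd F q p c - c| ∧ I ≤ CC V K s * |wd F q p c - c| ∧
      |wd F q p c - c| ≤ CC V K s * I := by
  have fl : ∀ a b : ℝ, |-a - -b| = |a - b| := fun a b => by
    rw [← abs_neg]; congr 1; ring
  have := six_list D.refl L (by simpa using L') hs hK hc.refl (w := -w) (I := I)
    (by rw [wd_refl, wd_refl, hw]) (by simp only [wd_refl, fl]; exact hI)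
  simpa only [wd_refl, fl] using this

lemma atom_eq (D : Dyn F Φ V ρ) (ρ' x : ℝ) (l j : ℕ) (m : ℤ) :
    atomLen F ρ' x l j =
      |wd F (qDen ρ' l) (pNum ρ' l : ℤ) (wd F j m x) - wd F j m x| := by
  unfold atomLen wd
  rw [D.iter_sub_int, ← Function.iterate_add_apply, add_comm j]
  congr 1
  push_cast
  ring

lemma wd_last (D : Dyn F Φ V ρ) {q Q : ℕ} (h : q ≤ Q) (p P : ℤ) (x : ℝ) :
    wd F q p (wd F (Q - q) (P - p) x) = wd F Q P x := by
  unfold wd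
  rw [D.iter_sub_int, ← Function.iterate_add_apply, Nat.add_sub_cancel' h]
  push_cast
  ring

end fin
end Six

/-- **Proposition: six comparable intervals.** There is `C₄ > 1` depending
only on `f` such that for all `n ≥ 1` the six intervals
`I_n, I_{n+1}, I_n^{q_n}, I_n^{q_{n+1}}, I_{n+1}^{q_n}, I_n^{q_{n+1}-q_n}` (built at a
chosen critical point `c₀ = f.c i₀`) are pairwise comparable. -/
theorem six_intervals_comparable
    (f : MCM) (ρ : ℝ) (hirr : Irrational ρ) (hmem : ρ ∈ Set.Ioo (0 : ℝ) 1)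
    (hrot : HasRotationNumber f.F ρ) (i₀ : Fin f.N) :
    ∃ C₄ : ℝ, 1 < C₄ ∧ ∀ n : ℕ, 1 ≤ n → ∀ I J : ℝ,
      I ∈ ({atomLen f.F ρ (f.c i₀) n 0,
            atomLen f.F ρ (f.c i₀) (n + 1) 0,
            atomLen f.F ρ (f.c i₀) n (qDen ρ n),
            atomLen f.F ρ (f.c i₀) n (qDen ρ (n + 1)),
            atomLen f.F ρ (f.c i₀) (n + 1) (qDen ρ n),
            atomLen f.F ρ (f.c i₀) n (qDen ρ (n + 1) - qDen ρ n)} : Set ℝ) →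
      J ∈ ({atomLen f.F ρ (f.c i₀) n 0,
            atomLen f.F ρ (f.c i₀) (n + 1) 0,
            atomLen f.F ρ (f.c i₀) n (qDen ρ n),
            atomLen f.F ρ (f.c i₀) n (qDen ρ (n + 1)),
            atomLen f.F ρ (f.c i₀) (n + 1) (qDen ρ n),
            atomLen f.F ρ (f.c i₀) n (qDen ρ (n + 1) - qDen ρ n)} : Set ℝ) →
      C₄⁻¹ ≤ I / J ∧ I / J ≤ C₄ := by
  obtain ⟨Φ, V, D⟩ := Six.mcm_dyn f hirr hrot
  obtain ⟨K, hK, hc⟩ := Six.m_crit f i₀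
  have hs := f.s_gt_one i₀
  set c := f.c i₀ with hcdef
  set s := f.s i₀ with hsdef
  set C := Six.CC V K s with hC
  have C2 : 2 ≤ C := by
    rw [hC]
    unfold Six.CC
    have n1 := abs_nonneg (Six.EE V)
    have n2 := abs_nonneg (Six.EB V K s)
    have n3 := abs_nonneg (1 + Six.EE V)
    have n4 := abs_nonneg (Six.EE V * ((1 + Six.EE V + Six.EE V * Six.EE V) * Six.EB V K s *
      Six.EE V * (1 + Six.EE V) * Real.exp (12 * V)))
    have n5 := abs_nonneg (Six.EE V * (1 + Six.EE V))
    have n6 := abs_nonneg (Six.EB V K s * Six.EE V)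
    linarith
  have main : ∀ n : ℕ, 1 ≤ n → ∀ I : ℝ,
      I ∈ ({atomLen f.F ρ c n 0,
            atomLen f.F ρ c (n + 1) 0,
            atomLen f.F ρ c n (qDen ρ n),
            atomLen f.F ρ c n (qDen ρ (n + 1)),
            atomLen f.F ρ c (n + 1) (qDen ρ n),
            atomLen f.F ρ c n (qDen ρ (n + 1) - qDen ρ n)} : Set ℝ) →
      0 < atomLen f.F ρ c n 0 ∧ I ≤ C * atomLen f.F ρ c n 0 ∧ atomLen f.F ρ c n 0 ≤ C * I := by
    intro n _ I hI
    have hw := Six.wd_last D (Six.q_pos_le hirr hmem n).2 (pNum ρ n : ℤ) (pNum ρ (n + 1) : ℤ) c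
    have w0 : Six.wd f.F 0 0 c = c := by simp [Six.wd]
    rw [Six.atom_eq D ρ c n 0 0, Six.atom_eq D ρ c (n + 1) 0 0,
      Six.atom_eq D ρ c n (qDen ρ n) (pNum ρ n),
      Six.atom_eq D ρ c n (qDen ρ (n + 1)) (pNum ρ (n + 1)),
      Six.atom_eq D ρ c (n + 1) (qDen ρ n) (pNum ρ n),
      Six.atom_eq D ρ c n (qDen ρ (n + 1) - qDen ρ n) (pNum ρ (n + 1) - pNum ρ n), w0] at hI
    rw [Six.atom_eq D ρ c n 0 0, w0]
    simp only [Set.mem_insert_iff, Set.mem_singleton_iff] at hI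
    have L := Six.lev_of hirr hmem n
    have L' := Six.lev_of hirr hmem (n + 1)
    rcases Nat.even_or_odd n with hn | hn
    · rw [hn.neg_one_pow] at L
      rw [hn.add_one.neg_one_pow] at L'
      simp only [Int.cast_one, one_mul, Int.cast_neg, neg_mul] at L L'
      exact Six.six_list D L L' hs hK hc hw hI
    · rw [hn.neg_one_pow] at L
      rw [hn.add_one.neg_one_pow] at L'
      simp only [Int.cast_one, one_mul, Int.cast_neg, neg_mul] at L L'
      exact Six.six_refl D L L' hs hK hc hw hI
  refine ⟨C * C, by nlinarith, fun n hn I J hI hJ => ?_⟩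
  obtain ⟨i0, i1, i2⟩ := main n hn I hI
  obtain ⟨-, j1, j2⟩ := main n hn J hJ
  have C0 : 0 < C := by linarith
  have I0 : 0 < I := by
    by_contra h
    push Not at h
    nlinarith
  have J0 : 0 < J := by
    by_contra h
    push Not at h
    nlinarith
  constructor
  · rw [le_div_iff₀ J0, inv_mul_le_iff₀ (by positivity)]
    have := mul_le_mul_of_nonneg_left i2 C0.le
    linarith
  · rw [div_le_iff₀ J0]
    have := mul_le_mul_of_nonneg_left j2 C0.le
    linarith
end
end
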